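/- Let m > n ≥ 1 and let U be an m×m Haar distributed unitary matrix. Then, for every bounded measurable symmetric function f : D^n → ℝ, the expectation of f evaluated at the n eigenvalues ζ_1,…,ζ_n of the n×n truncation U_{[m,n]} equals (1/C_{[m,n]}) ∫_{D^n} f(ζ_1,…,ζ_n) ∏_{1≤i<j≤n} |ζ_i - ζ_j|² ∏_{i=1}^n (1-|ζ_i|²)^{m-n-1} dζ_1 ⋯ dζ_n, where dζ denotes Lebesgue measure on ℂ and C_{[m,n]} = π^n n! ∏_{j=0}^{n-1} (m-n+j-1 choose j)^{-1} (m-n+j)^{-1}. -/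

import Mathlib

open MeasureTheory Filter Topology Matrix Polynomial
open scoped ENNReal NNReal

noncomputable section

instance matMS (k : ℕ) : MeasurableSpace (Matrix (Fin k) (Fin k) ℂ) :=
  MeasurableSpace.pi

/-- The `n × n` upper-left corner of an `m × m` matrix. -/
def truncation (m n : ℕ) (U : Matrix (Fin m) (Fin m) ℂ) : Matrix (Fin n) (Fin n) ℂ :=
  Matrix.of fun i j => if h : (i : ℕ) < m ∧ (j : ℕ) < m then U ⟨i, h.1⟩ ⟨j, h.2⟩ else 0

/-- An enumeration (with multiplicity) of the eigenvalues of an `n × n` complex matrix,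
i.e. of the roots of its characteristic polynomial. -/
def eigTuple {n : ℕ} (A : Matrix (Fin n) (Fin n) ℂ) : Fin n → ℂ :=
  fun i => A.charpoly.roots.toList.getD i 0

/-- The normalizing constant `C_{[m,n]}` of the joint eigenvalue density of the `n × n`
truncation of an `m × m` Haar unitary matrix. -/
def Cconst (m n : ℕ) : ℝ :=
  Real.pi ^ n * (n.factorial : ℝ) *
    ∏ j ∈ Finset.range n, ((((m - n + j - 1).choose j : ℕ) : ℝ)⁻¹ * ((m - n + j : ℕ) : ℝ)⁻¹)


/-- coefficient vector of a polynomial -/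
def cf {n : ℕ} (p : ℂ[X]) : Fin n → ℂ := fun i => p.coeff i

/-- monic polynomial with prescribed roots -/
def rp {n : ℕ} (ζ : Fin n → ℂ) : ℂ[X] := ∏ i, (X - C (ζ i))

/-- coefficientwise continuity of a family of polynomials -/
def CC {Y : Type*} [TopologicalSpace Y] (P : Y → ℂ[X]) : Prop :=
  ∀ i, Continuous fun y => (P y).coeff i

lemma CC.const {Y : Type*} [TopologicalSpace Y] (p : ℂ[X]) : CC (fun _ : Y => p) :=
  fun _ => continuous_const

lemma CC.C {Y : Type*} [TopologicalSpace Y] {f : Y → ℂ} (hf : Continuous f) :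
    CC (fun y => C (f y)) := by
  intro i
  simp only [coeff_C]
  by_cases h : i = 0
  · simp [h, hf]
  · simp [h, continuous_const]

lemma CC.sub {Y : Type*} [TopologicalSpace Y] {P Q : Y → ℂ[X]} (hP : CC P) (hQ : CC Q) :
    CC (fun y => P y - Q y) := by
  intro i
  simp only [coeff_sub]
  exact (hP i).sub (hQ i)

lemma CC.mul {Y : Type*} [TopologicalSpace Y] {P Q : Y → ℂ[X]} (hP : CC P) (hQ : CC Q) :
    CC (fun y => P y * Q y) := by
  intro i
  simp only [coeff_mul]
  exact continuous_finsetSum _ fun x _ => (hP _).mul (hQ _)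

lemma CC.sum {Y ι : Type*} [TopologicalSpace Y] (s : Finset ι) {P : ι → Y → ℂ[X]}
    (hP : ∀ j, CC (P j)) : CC (fun y => ∑ j ∈ s, P j y) := by
  intro i
  simp only [finsetSum_coeff]
  exact continuous_finsetSum _ fun x _ => hP x _

lemma CC.prod {Y ι : Type*} [TopologicalSpace Y] (s : Finset ι) {P : ι → Y → ℂ[X]}
    (hP : ∀ j, CC (P j)) : CC (fun y => ∏ j ∈ s, P j y) := by
  classical
  induction s using Finset.induction_on with
  | empty => simpa using CC.const 1
  | insert a s ha ih =>
    simp only [Finset.prod_insert ha]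
    exact (hP a).mul ih

lemma CC.charpoly {Y ι : Type*} [TopologicalSpace Y] [Fintype ι] [DecidableEq ι]
    {A : Y → Matrix ι ι ℂ} (hA : ∀ i j, Continuous fun y => A y i j) :
    CC (fun y => (A y).charpoly) := by
  unfold Matrix.charpoly
  simp only [Matrix.det_apply']
  refine CC.sum _ fun σ => (CC.const _).mul (CC.prod _ fun i => ?_)
  by_cases h : σ i = i
  · simp only [charmatrix_apply, h, Matrix.diagonal_apply_eq]
    exact (CC.const _).sub (CC.C (hA _ _))
  · simp only [charmatrix_apply, Matrix.diagonal_apply_ne _ h]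
    exact (CC.const _).sub (CC.C (hA _ _))

lemma CC.rp {Y : Type*} [TopologicalSpace Y] {n : ℕ} {ζ : Y → Fin n → ℂ} (h : Continuous ζ) :
    CC (fun y => rp (ζ y)) :=
  CC.prod _ fun i => (CC.const _).sub (CC.C (by fun_prop))

lemma CC.cf {Y : Type*} [TopologicalSpace Y] {n : ℕ} {P : Y → ℂ[X]} (h : CC P) :
    Continuous (fun y => (cf (P y) : Fin n → ℂ)) :=
  continuous_pi fun i => h i

lemma rp_monic {n : ℕ} (ζ : Fin n → ℂ) : (rp ζ).Monic :=
  monic_prod_of_monic _ _ fun i _ => monic_X_sub_C _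

lemma rp_natDegree {n : ℕ} (ζ : Fin n → ℂ) : (rp ζ).natDegree = n := by
  unfold rp
  rw [natDegree_prod_of_monic _ _ fun i _ => monic_X_sub_C _]
  simp

lemma rp_eval {n : ℕ} (ζ : Fin n → ℂ) (z : ℂ) : (rp ζ).eval z = ∏ i, (z - ζ i) := by
  simp [rp, eval_prod]

lemma exists_rp {n : ℕ} (p : ℂ[X]) (hp : p.Monic) (hd : p.natDegree = n) :
    ∃ ζ : Fin n → ℂ, rp ζ = p := by
  have hs := IsAlgClosed.splits p
  have hc : p.roots.toList.length = n := by
    rw [Multiset.length_toList, ← hd]; exact splits_iff_card_roots.mp hs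
  refine ⟨fun i => p.roots.toList.get (i.cast hc.symm), ?_⟩
  have h1 : p = (p.roots.map fun a => X - C a).prod := by
    have := hs.eq_prod_roots_of_monic hp
    exact this
  conv_rhs => rw [h1, ← Multiset.coe_toList p.roots]
  rw [Multiset.map_coe, Multiset.prod_coe]
  subst hc
  unfold rp
  rw [← List.prod_ofFn]
  congr 1
  apply List.ext_get
  · simp
  · intro i h1 h2
    simp

lemma cf_inj {n : ℕ} {p q : ℂ[X]} (hp : p.Monic) (hq : q.Monic) (hpd : p.natDegree = n)
    (hqd : q.natDegree = n) (h : (cf p : Fin n → ℂ) = cf q) : p = q := by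
  ext i
  rcases lt_trichotomy i n with hi | hi | hi
  · exact congrFun h ⟨i, hi⟩
  · subst hi
    rw [show p.coeff i = 1 by rw [← hpd]; exact hp, show q.coeff i = 1 by rw [← hqd]; exact hq]
  · rw [coeff_eq_zero_of_natDegree_lt (by omega), coeff_eq_zero_of_natDegree_lt (by omega)]

/-- monic polynomial with given lower coefficients -/
def mp {n : ℕ} (q : Fin n → ℂ) : ℂ[X] := X ^ n + ∑ i : Fin n, C (q i) * X ^ (i : ℕ)

lemma mp_deg_aux {n : ℕ} (q : Fin n → ℂ) :
    (∑ i : Fin n, C (q i) * X ^ (i : ℕ)).degree < (n : WithBot ℕ) :=  degree_sum_fin_lt _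

lemma mp_monic {n : ℕ} (q : Fin n → ℂ) : (mp q).Monic := monic_X_pow_add (mp_deg_aux q)

lemma mp_natDegree {n : ℕ} (q : Fin n → ℂ) : (mp q).natDegree = n := by
  refine natDegree_eq_of_degree_eq_some ?_
  unfold mp
  rw [degree_add_eq_left_of_degree_lt (by rw [degree_X_pow]; exact mp_deg_aux q), degree_X_pow]

lemma cf_mp {n : ℕ} (q : Fin n → ℂ) : cf (mp q) = q := by
  funext i
  have : ∀ x : Fin n, ((i : ℕ) = (x : ℕ)) ↔ i = x := fun x => Fin.ext_iff.symm
  simp [cf, mp, coeff_X_pow, finsetSum_coeff, this, i.2.ne]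

lemma mp_cf {n : ℕ} {p : ℂ[X]} (hp : p.Monic) (hd : p.natDegree = n) :
    mp (cf p : Fin n → ℂ) = p :=
  cf_inj (mp_monic _) hp (mp_natDegree _) hd (cf_mp _)

lemma CC.mp {Y : Type*} [TopologicalSpace Y] {n : ℕ} {q : Y → Fin n → ℂ} (h : Continuous q) :
    CC (fun y => mp (q y)) := by
  intro i
  simp only [_root_.mp, coeff_add, finsetSum_coeff, coeff_C_mul]
  fun_prop

lemma cfrp_surj (n : ℕ) : Function.Surjective (fun ζ : Fin n → ℂ => (cf (rp ζ) : Fin n → ℂ)) := by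
  intro q
  obtain ⟨ζ, h⟩ := exists_rp (mp q) (mp_monic q) (mp_natDegree q)
  exact ⟨ζ, by simp only [h, cf_mp]⟩

lemma cfrp_cont (n : ℕ) : Continuous (fun ζ : Fin n → ℂ => (cf (rp ζ) : Fin n → ℂ)) :=
  (CC.rp continuous_id).cf

lemma descend {n : ℕ} {Z β : Type*} [MeasurableSpace Z] [StandardBorelSpace Z]
    [MeasurableSpace β] {g : Z × (Fin n → ℂ) → β}
    (h : Measurable fun x : Z × (Fin n → ℂ) => g (x.1, cf (rp x.2))) : Measurable g := by
  have hm : Measurable (fun x : Z × (Fin n → ℂ) => (x.1, (cf (rp x.2) : Fin n → ℂ))) :=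
    measurable_fst.prodMk ((cfrp_cont n).measurable.comp measurable_snd)
  refine (hm.measurable_comp_iff_of_surjective ?_).1 h
  rintro ⟨z, q⟩
  obtain ⟨ζ, hζ⟩ := cfrp_surj n q
  exact ⟨(z, ζ), by simp only at hζ; simp [hζ]⟩

lemma cfrp_perm {n : ℕ} {ζ η : Fin n → ℂ} (h : rp ζ = rp η) :
    ∃ σ : Equiv.Perm (Fin n), η ∘ σ = ζ := by
  have h1 : ∀ ζ : Fin n → ℂ, (rp ζ).roots = Finset.univ.val.map ζ := by
    intro ζ
    have : rp ζ = ((Finset.univ.val.map ζ).map fun a => X - C a).prod := by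
      simp only [rp, Multiset.map_map]; rfl
    rw [this, roots_multiset_prod_X_sub_C]
  have h2 : Finset.univ.val.map ζ = Finset.univ.val.map η := by rw [← h1, ← h1, h]
  have h3 : ∀ z, Fintype.card {i // ζ i = z} = Fintype.card {i // η i = z} := by
    intro z
    have := congrArg (Multiset.count z) h2
    rw [Multiset.count_map, Multiset.count_map] at this
    rw [Fintype.card_subtype, Fintype.card_subtype, Finset.card_def, Finset.card_def,
      Finset.filter_val, Finset.filter_val]
    simpa only [eq_comm] using this
  let e : ∀ z, {i // ζ i = z} ≃ {i // η i = z} := fun z => Fintype.equivOfCardEq (h3 z)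
  refine ⟨(Equiv.sigmaFiberEquiv ζ).symm.trans
    ((Equiv.sigmaCongrRight e).trans (Equiv.sigmaFiberEquiv η)), ?_⟩
  funext i
  exact (e (ζ i) ⟨i, rfl⟩).2


/-- sum of squared absolute values of the entries -/
def sqn {ι κ : Type*} [Fintype ι] [Fintype κ] (G : Matrix ι κ ℂ) : ℝ := ∑ i, ∑ j, ‖G i j‖ ^ 2

/-- the (real) Laguerre type weight -/
def Wr (t : ℕ) {ι κ : Type*} [Fintype ι] [Fintype κ] [DecidableEq κ] (G : Matrix ι κ ℂ) : ℝ :=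
  ‖(Gᴴ * G).det‖ ^ t * Real.exp (-(t * sqn G))

section
variable {ι ι' κ κ' : Type*} [Fintype ι] [Fintype κ] [DecidableEq κ] [Fintype ι'] [Fintype κ']
  [DecidableEq κ']

lemma sqn_trace (G : Matrix ι κ ℂ) : ((sqn G : ℝ) : ℂ) = (Gᴴ * G).trace := by
  simp only [sqn, Matrix.trace, Matrix.diag, Matrix.mul_apply, Matrix.conjTranspose_apply]
  push_cast
  rw [Finset.sum_comm]
  refine Finset.sum_congr rfl fun i _ => Finset.sum_congr rfl fun j _ => ?_
  have := Complex.normSq_eq_conj_mul_self (z := G j i)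
  rw [← Complex.ofReal_pow, ← Complex.normSq_eq_norm_sq, this]; rfl

lemma sqn_of_gram {G : Matrix ι κ ℂ} {G' : Matrix ι' κ ℂ} (h : Gᴴ * G = G'ᴴ * G') : sqn G = sqn G' := by
  have := sqn_trace G
  rw [h, ← sqn_trace] at this
  exact_mod_cast this

lemma Wr_of_gram (t : ℕ) {G : Matrix ι κ ℂ} {G' : Matrix ι' κ ℂ} (h : Gᴴ * G = G'ᴴ * G') :
    Wr t G = Wr t G' := by
  simp only [Wr, h, sqn_of_gram h]

lemma Wr_left [DecidableEq ι] (t : ℕ) (U : Matrix ι' ι ℂ) (hU : Uᴴ * U = 1) (G : Matrix ι κ ℂ) :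
    Wr t (U * G) = Wr t G := by
  apply Wr_of_gram
  rw [conjTranspose_mul, Matrix.mul_assoc, ← Matrix.mul_assoc Uᴴ, hU, Matrix.one_mul]

lemma Wr_right (t : ℕ) (V : Matrix κ κ ℂ) (hV : V * Vᴴ = 1) (G : Matrix ι κ ℂ) :
    Wr t (G * V) = Wr t G := by
  have h1 : ((G * V)ᴴ * (G * V)) = Vᴴ * (Gᴴ * G) * V := by
    simp only [conjTranspose_mul, Matrix.mul_assoc]
  have h2 : sqn (G * V) = sqn G := by
    have := sqn_trace (G * V)
    rw [h1, Matrix.trace_mul_comm, ← Matrix.mul_assoc, hV, Matrix.one_mul, ← sqn_trace] at this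
    exact_mod_cast this
  have h3 : (Vᴴ * (Gᴴ * G) * V).det = (Gᴴ * G).det := by
    rw [Matrix.det_mul, Matrix.det_mul, mul_comm, ← mul_assoc, ← Matrix.det_mul, hV]
    simp
  simp only [Wr, h1, h2, h3]

lemma Wr_submatrix (t : ℕ) (e : ι' ≃ ι) (f : κ' ≃ κ) (G : Matrix ι κ ℂ) :
    Wr t (G.submatrix e f) = Wr t G := by
  have h1 : ((G.submatrix e f)ᴴ * (G.submatrix e f)) = (Gᴴ * G).submatrix f f := by
    rw [conjTranspose_submatrix, Matrix.submatrix_mul_equiv]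
  have h2 : sqn (G.submatrix e f) = sqn G := by
    simp only [sqn, submatrix_apply]
    rw [Equiv.sum_comp e (fun i => ∑ j, ‖G i (f j)‖ ^ 2)]
    exact Finset.sum_congr rfl fun i _ => Equiv.sum_comp f (fun j => ‖G i j‖ ^ 2)
  simp only [Wr, h1, h2, Matrix.det_submatrix_equiv_self]

lemma sqn_nonneg (G : Matrix ι κ ℂ) : 0 ≤ sqn G := by unfold sqn; positivity

lemma Wr_nonneg (t : ℕ) (G : Matrix ι κ ℂ) : 0 ≤ Wr t G := by unfold Wr; positivity

lemma Wr_cont (t : ℕ) {Y : Type*} [TopologicalSpace Y] {G : Y → Matrix ι κ ℂ}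
    (h : ∀ i j, Continuous fun y => G y i j) : Continuous fun y => Wr t (G y) := by
  have hG : Continuous G := continuous_matrix h
  unfold Wr sqn
  have : Continuous fun y => ((G y)ᴴ * G y).det := by
    apply Continuous.matrix_det
    exact (hG.matrix_conjTranspose).matrix_mul hG
  fun_prop

end

/-- unitary moving a vector to a real multiple of the first basis vector -/
lemma exists_rot {k : ℕ} (x : Fin (k + 1) → ℂ) :
    ∃ O : Matrix (Fin (k + 1)) (Fin (k + 1)) ℂ, Oᴴ * O = 1 ∧
      O *ᵥ x = Pi.single 0 ((Real.sqrt (∑ i, ‖x i‖ ^ 2) : ℝ) : ℂ) := by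
  classical
  by_cases hx : x = 0
  · refine ⟨1, by simp, ?_⟩
    subst hx; simp
  let v : EuclideanSpace ℂ (Fin (k + 1)) := WithLp.toLp 2 x
  have hv : v ≠ 0 := by
    intro h; apply hx
    have := congrArg (WithLp.ofLp) h
    simpa [v] using this
  have hnv : ‖v‖ ≠ 0 := norm_ne_zero_iff.mpr hv
  have hn : ‖v‖ = Real.sqrt (∑ i, ‖x i‖ ^ 2) := by
    rw [EuclideanSpace.norm_eq]
  let f : Fin (k + 1) → EuclideanSpace ℂ (Fin (k + 1)) := fun i => if i = 0 then ((‖v‖⁻¹ : ℝ) : ℂ) • v else 0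
  have hf : Orthonormal ℂ (({0} : Set (Fin (k + 1))).domRestrict f) := by
    rw [orthonormal_iff_ite]
    rintro ⟨i, hi⟩ ⟨j, hj⟩
    simp only [Set.mem_singleton_iff] at hi hj
    subst hi; subst hj
    simp only [Set.domRestrict_apply, f, if_true, inner_self_eq_norm_sq_to_K, norm_smul]
    rw [Complex.norm_real, norm_inv, norm_norm, inv_mul_cancel₀ hnv]
    simp
  obtain ⟨b, hb⟩ := hf.exists_orthonormalBasis_extension_of_card_eq (by simp)
  have hb0 : b 0 = ((‖v‖⁻¹ : ℝ) : ℂ) • v := by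
    rw [hb 0 rfl]; simp [f]
  let O : Matrix (Fin (k + 1)) (Fin (k + 1)) ℂ := Matrix.of fun i j => star (b i j)
  have hO : O * Oᴴ = 1 := by
    ext i j
    have h := orthonormal_iff_ite.mp b.orthonormal i j
    simp only [Matrix.mul_apply, conjTranspose_apply, O, Matrix.of_apply, star_star, Matrix.one_apply]
    rw [← h]
    simp only [PiLp.inner_apply, RCLike.inner_apply]
    exact Finset.sum_congr rfl fun _ _ => mul_comm _ _
  refine ⟨O, mul_eq_one_comm.mp hO, ?_⟩
  funext i
  have h1 : (O *ᵥ x) i = inner ℂ (b i) v := by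
    simp only [Matrix.mulVec, dotProduct, O, Matrix.of_apply, PiLp.inner_apply, RCLike.inner_apply, v]
    exact Finset.sum_congr rfl fun _ _ => mul_comm _ _
  have h2 : v = (‖v‖ : ℂ) • b 0 := by
    rw [hb0, smul_smul]; push_cast
    rw [mul_inv_cancel₀ (by exact_mod_cast hnv), one_smul]
  rw [h1, h2, inner_smul_right, orthonormal_iff_ite.mp b.orthonormal i 0, ← hn]
  by_cases hi : i = 0
  · subst hi; simp
  · simp [hi]

/-- the full matrix, with rows split as `Fin (k+1) ⊕ Fin n`. -/
def Gm {k n : ℕ} (x : Fin (k + 1) → ℂ) (Z : Fin (k + 1) → Fin n → ℂ) (c : Fin n → ℂ)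
    (D : Fin n → Fin n → ℂ) : Matrix (Fin (k + 1) ⊕ Fin n) (Unit ⊕ Fin n) ℂ :=
  fromBlocks (replicateCol Unit x) (of Z) (replicateCol Unit c) (of D)

lemma Wr_rot (t : ℕ) {k n : ℕ} (O : Matrix (Fin (k + 1)) (Fin (k + 1)) ℂ) (hO : Oᴴ * O = 1)
    (x : Fin (k + 1) → ℂ) (Z : Fin (k + 1) → Fin n → ℂ) (B : Fin n → Fin n → ℂ) :
    Wr t (Gm x Z 0 B) = Wr t (Gm (O *ᵥ x) (O * of Z) 0 B) := by
  rw [← Wr_left t (fromBlocks O 0 0 (1 : Matrix (Fin n) (Fin n) ℂ))]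
  · congr 1
    simp only [Gm, fromBlocks_multiply]
    congr 1
    · ext i j; simp [Matrix.mul_apply, mulVec, dotProduct, replicateCol_apply]
    · ext i j; simp; rfl
    · ext i j; simp
    · ext i j; simp
  · rw [fromBlocks_conjTranspose, fromBlocks_multiply]
    simp [hO, fromBlocks_one]

lemma Wr_step (t : ℕ) {k n : ℕ} (ρ : ℝ) (Z : Fin (k + 1) → Fin n → ℂ) (B : Fin n → Fin n → ℂ) :
    Wr t (Gm (Pi.single 0 (ρ : ℂ)) Z 0 B) =
      ((ρ ^ 2) ^ t * Real.exp (-(t * ρ ^ 2))) * Real.exp (-(t * ∑ j, ‖Z 0 j‖ ^ 2)) *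
        Wr t (fromRows (of (fun i : Fin k => Z i.succ)) (of B)) := by
  set H := fromRows (of (fun i : Fin k => Z i.succ)) (of B) with hH
  set T : Matrix (Unit ⊕ Fin n) (Unit ⊕ Fin n) ℂ :=
    fromBlocks (of fun _ _ => (ρ : ℂ)) (replicateRow Unit (Z 0)) 0 1 with hT
  have h1 : (Gm (Pi.single 0 (ρ : ℂ)) Z 0 B)ᴴ * Gm (Pi.single 0 (ρ : ℂ)) Z 0 B =
      Tᴴ * fromBlocks (1 : Matrix Unit Unit ℂ) 0 0 (Hᴴ * H) * T := by
    rw [Gm, hT, fromBlocks_conjTranspose, fromBlocks_conjTranspose, fromBlocks_multiply,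
      fromBlocks_multiply, fromBlocks_multiply]
    congr 1
    · ext i j
      simp [Matrix.mul_apply, Fin.sum_univ_succ]
    · ext i j
      simp [Matrix.mul_apply, Fin.sum_univ_succ]
    · ext i j
      simp [Matrix.mul_apply, Fin.sum_univ_succ]
    · ext i j
      simp [Matrix.mul_apply, Fin.sum_univ_succ, hH, Fintype.sum_sum_type, add_assoc]
  have h2 : sqn (Gm (Pi.single 0 (ρ : ℂ)) Z 0 B) = ρ ^ 2 + ∑ j, ‖Z 0 j‖ ^ 2 + sqn H := by
    simp only [sqn, Gm, hH, Fintype.sum_sum_type, Fin.sum_univ_succ]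
    simp [Fin.succ_ne_zero, Finset.sum_add_distrib]
    ring
  have h3 : ‖T.det‖ = |ρ| := by
    rw [hT, det_fromBlocks_zero₂₁]
    simp
  unfold Wr
  rw [h1, h2, Matrix.det_mul, Matrix.det_mul, det_fromBlocks_zero₂₁, det_conjTranspose,
    norm_mul, norm_mul, norm_star, h3]
  simp only [det_one, one_mul]
  rw [show |ρ| * ‖(Hᴴ * H).det‖ * |ρ| = ρ ^ 2 * ‖(Hᴴ * H).det‖ by rw [← sq_abs ρ]; ring, mul_pow,
    show -(t * (ρ ^ 2 + ∑ j, ‖Z 0 j‖ ^ 2 + sqn H)) =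
      -(t * ρ ^ 2) + -(t * ∑ j, ‖Z 0 j‖ ^ 2) + -(t * sqn H) by ring, Real.exp_add, Real.exp_add]
  ring


/-- block matrix `[[a, b],[c, D]]` -/
def Abm {n : ℕ} (a : ℂ) (b c : Fin n → ℂ) (D : Fin n → Fin n → ℂ) :
    Matrix (Unit ⊕ Fin n) (Unit ⊕ Fin n) ℂ :=
  fromBlocks (of fun _ _ => a) (replicateRow Unit b) (replicateCol Unit c) (of D)

/-- eigenvalue attached to `(1,y)` -/
def zet {n : ℕ} (a : ℂ) (b : Fin n → ℂ) (y : Fin n → ℂ) : ℂ := a + ∑ i, b i * y i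

/-- the quadratic map -/
def Phi {n : ℕ} (a : ℂ) (b : Fin n → ℂ) (D : Fin n → Fin n → ℂ) (y : Fin n → ℂ) : Fin n → ℂ :=
  fun i => zet a b y * y i - ∑ j, D i j * y j

/-- the deflated matrix -/
def Bm {n : ℕ} (b : Fin n → ℂ) (D : Fin n → Fin n → ℂ) (y : Fin n → ℂ) : Matrix (Fin n) (Fin n) ℂ :=
  of fun i j => D i j - y i * b j

lemma charpoly_unit (a : ℂ) : (of fun _ _ : Unit => a).charpoly = X - C a := by
  simp [Matrix.charpoly, det_unique, charmatrix_apply]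

lemma charpoly_Abm {n : ℕ} (a : ℂ) (b : Fin n → ℂ) (D : Fin n → Fin n → ℂ) (y : Fin n → ℂ) :
    (Abm a b (Phi a b D y) D).charpoly = (X - C (zet a b y)) * (Bm b D y).charpoly := by
  set P : Matrix (Unit ⊕ Fin n) (Unit ⊕ Fin n) ℂ := fromBlocks 1 0 (replicateCol Unit y) 1 with hP
  set Q : Matrix (Unit ⊕ Fin n) (Unit ⊕ Fin n) ℂ := fromBlocks 1 0 (-replicateCol Unit y) 1 with hQ
  have h1 : P * Q = 1 := by
    rw [hP, hQ, fromBlocks_multiply, ← fromBlocks_one]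
    congr 1 <;> simp
  have h2 : Q * (Abm a b (Phi a b D y) D * P) =
      fromBlocks (of fun _ _ => zet a b y) (replicateRow Unit b) 0 (Bm b D y) := by
    rw [hP, hQ, Abm, fromBlocks_multiply, fromBlocks_multiply]
    congr 1
    · ext i j; simp [Matrix.mul_apply, zet]
    · ext i j; simp [Matrix.mul_apply]
    · ext i j; simp [Matrix.mul_apply, zet, Phi]; ring
    · ext i j; simp [Matrix.mul_apply, Bm]; ring
  have h3 : (Abm a b (Phi a b D y) D).charpoly = (Q * (Abm a b (Phi a b D y) D * P)).charpoly := by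
    rw [Matrix.charpoly_mul_comm, Matrix.mul_assoc, h1, Matrix.mul_one]
  rw [h3, h2, Matrix.charpoly_fromBlocks_zero₂₁, charpoly_unit]

/-- lexicographic comparison on `ℂ` -/
def lexle (z w : ℂ) : Prop := z.re < w.re ∨ (z.re = w.re ∧ z.im ≤ w.im)

lemma lexle_refl (z : ℂ) : lexle z z := Or.inr ⟨rfl, le_rfl⟩
lemma lexle_total (z w : ℂ) : lexle z w ∨ lexle w z := by
  unfold lexle
  rcases lt_trichotomy z.re w.re with h | h | h
  · exact Or.inl (Or.inl h)
  · rcases le_total z.im w.im with h' | h'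
    · exact Or.inl (Or.inr ⟨h, h'⟩)
    · exact Or.inr (Or.inr ⟨h.symm, h'⟩)
  · exact Or.inr (Or.inl h)
lemma lexle_antisymm {z w : ℂ} (h1 : lexle z w) (h2 : lexle w z) : z = w := by
  unfold lexle at *
  apply Complex.ext
  · rcases h1 with h1 | h1 <;> rcases h2 with h2 | h2 <;> linarith
  · rcases h1 with h1 | h1 <;> rcases h2 with h2 | h2 <;> linarith
lemma lexle_trans {z w v : ℂ} (h1 : lexle z w) (h2 : lexle w v) : lexle z v := by
  unfold lexle at *
  rcases h1 with h1 | h1 <;> rcases h2 with h2 | h2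
  · left; linarith
  · left; linarith
  · left; linarith
  · right; exact ⟨by linarith, by linarith⟩

lemma exists_lexmin (s : Finset ℂ) (hs : s.Nonempty) : ∃ z ∈ s, ∀ w ∈ s, lexle z w := by
  induction hs using Finset.Nonempty.cons_induction with
  | singleton a => exact ⟨a, by simp, by simpa using lexle_refl a⟩
  | cons a s ha hs ih =>
    obtain ⟨z, hz, h⟩ := ih
    rcases lexle_total a z with h1 | h1
    · refine ⟨a, by simp, ?_⟩
      intro w hw
      rcases Finset.mem_cons.mp hw with rfl | hw
      · exact lexle_refl _
      · exact lexle_trans h1 (h w hw)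
    · refine ⟨z, by simp [hz], ?_⟩
      intro w hw
      rcases Finset.mem_cons.mp hw with rfl | hw
      · exact h1
      · exact h w hw

lemma measurableSet_lexle : MeasurableSet {p : ℂ × ℂ | lexle p.1 p.2} := by
  unfold lexle
  have h1 : Measurable fun p : ℂ × ℂ => p.1.re := Complex.measurable_re.comp measurable_fst
  have h2 : Measurable fun p : ℂ × ℂ => p.2.re := Complex.measurable_re.comp measurable_snd
  have h3 : Measurable fun p : ℂ × ℂ => p.1.im := Complex.measurable_im.comp measurable_fst
  have h4 : Measurable fun p : ℂ × ℂ => p.2.im := Complex.measurable_im.comp measurable_snd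
  exact (measurableSet_lt h1 h2).union
    ((measurableSet_eq_fun h1 h2).inter (measurableSet_le h3 h4))

/-- pairs (eigenvalue, remaining polynomial) with the eigenvalue minimal -/
def good (n : ℕ) : Set (ℂ × (Fin n → ℂ)) := {p | ∀ μ, (mp p.2).eval μ = 0 → lexle p.1 μ}

lemma good_rp {n : ℕ} (z : ℂ) (ζ : Fin n → ℂ) :
    (z, (cf (rp ζ) : Fin n → ℂ)) ∈ good n ↔ ∀ i, lexle z (ζ i) := by
  simp only [good, Set.mem_setOf_eq, mp_cf (rp_monic ζ) (rp_natDegree ζ), rp_eval,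
    Finset.prod_eq_zero_iff, sub_eq_zero]
  constructor
  · intro h i; exact h _ ⟨i, Finset.mem_univ _, rfl⟩
  · rintro h μ ⟨i, -, rfl⟩; exact h i

lemma measurableSet_good (n : ℕ) : MeasurableSet (good n) := by
  have : Measurable fun p : ℂ × (Fin n → ℂ) => p ∈ good n := by
    refine descend ?_
    simp only [good_rp]
    refine measurable_to_prop ?_
    have : ((fun p : ℂ × (Fin n → ℂ) => ∀ i, lexle p.1 (p.2 i)) ⁻¹' {True}) =
        ⋂ i, (fun p : ℂ × (Fin n → ℂ) => (p.1, p.2 i)) ⁻¹' {p : ℂ × ℂ | lexle p.1 p.2} := by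
      ext p; simp
    rw [this]
    exact MeasurableSet.iInter fun i => (measurable_fst.prodMk
      ((measurable_pi_apply i).comp measurable_snd)) measurableSet_lexle
  exact measurableSet_setOf.mpr this

/-- observability-type genericity -/
def Obs {n : ℕ} (b : Fin n → ℂ) (D : Fin n → Fin n → ℂ) : Prop :=
  ∀ (z : Fin n → ℂ) (μ : ℂ), (∀ i, ∑ j, D i j * z j = μ * z i) → ∑ i, b i * z i = 0 → z = 0

/-- domain of the change of variables -/
def Sdom {n : ℕ} (a : ℂ) (b : Fin n → ℂ) (D : Fin n → Fin n → ℂ) : Set (Fin n → ℂ) :=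
  {y | (zet a b y, (cf (Bm b D y).charpoly : Fin n → ℂ)) ∈ good n}

lemma Phi_inj {n : ℕ} (a : ℂ) (b : Fin n → ℂ) (D : Fin n → Fin n → ℂ) (h : Obs b D) :
    Set.InjOn (Phi a b D) (Sdom a b D) := by
  intro y hy y' hy' he
  have key : ∀ y y', y ∈ Sdom a b D → Phi a b D y = Phi a b D y' →
      lexle (zet a b y) (zet a b y') := by
    intro y y' hy he
    have h1 := charpoly_Abm a b D y
    have h2 := charpoly_Abm a b D y'
    rw [← he, h1] at h2
    have h3 := congrArg (eval (zet a b y')) h2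
    simp only [eval_mul, eval_sub, eval_X, eval_C, sub_self, zero_mul, mul_eq_zero, sub_eq_zero] at h3
    rcases h3 with h3 | h3
    · rw [h3]; exact lexle_refl _
    · have := hy (zet a b y')
      simp only at this
      rw [mp_cf (charpoly_monic _) (by simp)] at this
      exact this h3
  have hz : zet a b y = zet a b y' :=
    lexle_antisymm (key y y' hy he) (key y' y hy' he.symm)
  have h4 := h (y - y') (zet a b y) ?_ ?_
  · exact sub_eq_zero.mp h4
  · intro i
    have := congrFun he i
    simp only [Phi, ← hz] at this
    simp only [Pi.sub_apply, mul_sub, Finset.sum_sub_distrib]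
    linear_combination -this
  · simp only [zet] at hz
    simp only [Pi.sub_apply, mul_sub, Finset.sum_sub_distrib]
    linear_combination hz

lemma Phi_surj {n : ℕ} (a : ℂ) (b : Fin n → ℂ) (D : Fin n → Fin n → ℂ) (h : Obs b D) :
    Phi a b D '' Sdom a b D = Set.univ := by
  rw [Set.eq_univ_iff_forall]
  intro c
  set A := Abm a b c D with hA
  have hne : A.charpoly ≠ 0 := (charpoly_monic A).ne_zero
  have hs : A.charpoly.roots.toFinset.Nonempty := by
    obtain ⟨z, hz⟩ := IsAlgClosed.exists_root A.charpoly (by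
      rw [degree_eq_natDegree hne, charpoly_natDegree_eq_dim]; simp; 
      exact_mod_cast (by omega : 1 + n ≠ 0))
    exact ⟨z, by simpa [hne] using hz⟩
  obtain ⟨ζ, hζ, hmin⟩ := exists_lexmin _ hs
  have hroot : A.charpoly.eval ζ = 0 := by
    have := (mem_roots hne).mp (Multiset.mem_toFinset.mp hζ); exact this
  rw [eval_charpoly] at hroot
  obtain ⟨v, hv0, hv⟩ := exists_mulVec_eq_zero_iff.mpr hroot
  have hv' : A *ᵥ v = ζ • v := by
    rw [Matrix.sub_mulVec, sub_eq_zero] at hv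
    rw [← hv]; simp [Matrix.scalar_apply, ← Matrix.smul_one_eq_diagonal, Matrix.smul_mulVec]
  have e1 : a * v (Sum.inl ()) + ∑ j, b j * v (Sum.inr j) = ζ * v (Sum.inl ()) := by
    have := congrFun hv' (Sum.inl ())
    simpa [hA, Abm, mulVec, dotProduct, Fintype.sum_sum_type] using this
  have e2 : ∀ i, c i * v (Sum.inl ()) + ∑ j, D i j * v (Sum.inr j) = ζ * v (Sum.inr i) := by
    intro i
    have := congrFun hv' (Sum.inr i)
    simpa [hA, Abm, mulVec, dotProduct, Fintype.sum_sum_type] using this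
  have hp : v (Sum.inl ()) ≠ 0 := by
    intro hp
    simp only [hp, mul_zero, zero_add] at e1 e2
    have h5 := h (fun j => v (Sum.inr j)) ζ e2 e1
    apply hv0
    funext s
    rcases s with ⟨⟩ | j
    · exact hp
    · exact congrFun h5 j
  set p := v (Sum.inl ()) with hpd
  set y : Fin n → ℂ := fun j => v (Sum.inr j) / p with hy
  have hzet : zet a b y = ζ := by
    have : ∑ i, b i * y i = (∑ i, b i * v (Sum.inr i)) / p := by
      rw [Finset.sum_div]; exact Finset.sum_congr rfl fun i _ => by rw [hy, mul_div_assoc]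
    rw [zet, this]; field_simp; linear_combination e1
  have hphi : Phi a b D y = c := by
    funext i
    have : ∑ j, D i j * y j = (∑ j, D i j * v (Sum.inr j)) / p := by
      rw [Finset.sum_div]; exact Finset.sum_congr rfl fun i _ => by rw [hy, mul_div_assoc]
    rw [Phi, this, hzet, hy]; field_simp; linear_combination -(e2 i)
  refine ⟨y, ?_, hphi⟩
  intro μ hμ
  simp only at hμ ⊢
  rw [mp_cf (charpoly_monic _) (by simp)] at hμ
  rw [hzet]
  apply hmin
  have h6 := charpoly_Abm a b D y
  rw [hphi] at h6
  rw [Multiset.mem_toFinset, mem_roots hne, IsRoot.def, hA, h6, eval_mul, hμ, mul_zero]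


lemma null_zero {V : Type*} [NormedAddCommGroup V] [NormedSpace ℝ V] [FiniteDimensional ℝ V]
    [MeasurableSpace V] [BorelSpace V] (μ : Measure V) [μ.IsAddHaarMeasure] (f : V → ℂ)
    (hc : Continuous f) (x0 : V) (h0 : f x0 ≠ 0)
    (ha : ∀ x, ∀ s : ℝ, AnalyticAt ℝ (fun s : ℝ => f (x0 + s • x)) s) : μ {x | f x = 0} = 0 := by
  set Z : Set V := {x | f (x0 + x) = 0} with hZ
  have hZm : μ {x | f x = 0} = μ Z := by
    rw [← measure_preimage_add μ x0 {x | f x = 0}]; rfl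
  rw [hZm]
  set T : Set (V × ℝ) := {p | f (x0 + p.2 • p.1) = 0} with hT
  have hTc : IsClosed T := isClosed_eq (by fun_prop) continuous_const
  have h1 : (μ.prod (volume : Measure ℝ)) T = 0 := by
    rw [Measure.measure_prod_null hTc.measurableSet]
    refine Eventually.of_forall fun x => ?_
    have h2 := AnalyticOnNhd.preimage_zero_mem_codiscrete (𝕜 := ℝ) (x := 0)
      (f := fun s : ℝ => f (x0 + s • x)) (fun s _ => ha x s) (by simpa using h0)
    have h3 := ae_restrict_le_codiscreteWithin (μ := (volume : Measure ℝ)) MeasurableSet.univ h2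
    rw [Measure.restrict_univ, mem_ae_iff] at h3
    simp only [Pi.zero_apply]
    convert h3 using 2
    ext s; simp [hT]
  have h4 : ((volume : Measure ℝ).prod μ) (Prod.swap ⁻¹' T) = 0 := by
    rw [← Measure.prod_swap, Measure.map_apply measurable_swap
      (hTc.measurableSet.preimage measurable_swap)]
    simpa [Set.preimage_preimage] using h1
  rw [Measure.measure_prod_null (hTc.measurableSet.preimage measurable_swap)] at h4
  have h5 : ∀ᵐ s : ℝ, s ≠ 0 := by simp [ae_iff, measure_singleton]
  obtain ⟨s, hs, hs0⟩ := (h4.and h5).exists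
  have h6 : Prod.mk s ⁻¹' (Prod.swap ⁻¹' T) = (s • ·) ⁻¹' Z := by
    ext x; simp [hT, hZ]
  simp only [Pi.zero_apply] at hs
  rw [h6] at hs
  rw [Measure.addHaar_preimage_smul μ hs0, mul_eq_zero] at hs
  rcases hs with hs | hs
  · rw [ENNReal.ofReal_eq_zero] at hs
    exact absurd (abs_nonpos_iff.mp hs) (by positivity)
  · exact hs

/-- Krylov rows -/
def kry {n : ℕ} (b : Fin n → ℂ) (D : Fin n → Fin n → ℂ) : ℕ → Fin n → ℂ
  | 0 => b
  | i + 1 => fun j => ∑ l, kry b D i l * D l j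

lemma kry_obs {n : ℕ} (b : Fin n → ℂ) (D : Fin n → Fin n → ℂ)
    (h : (of fun i j : Fin n => kry b D i j).det ≠ 0) : Obs b D := by
  intro z μ h1 h2
  have h3 : ∀ i, ∑ j, kry b D i j * z j = 0 := by
    intro i
    induction i with
    | zero => exact h2
    | succ i ih =>
      simp only [kry, Finset.sum_mul]
      rw [Finset.sum_comm]
      have : ∀ l, ∑ j, kry b D i l * D l j * z j = μ * (kry b D i l * z l) := by
        intro l
        simp only [mul_assoc]
        rw [← Finset.mul_sum, h1 l]; ring
      simp only [this]
      rw [← Finset.mul_sum, ih, mul_zero]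
  by_contra hz
  apply h
  rw [← exists_mulVec_eq_zero_iff]
  refine ⟨z, hz, ?_⟩
  funext i
  simpa [mulVec, dotProduct] using h3 i

lemma kry_diag {n : ℕ} (i : ℕ) (j : Fin n) :
    kry (fun _ => 1) (Matrix.diagonal fun j : Fin n => ((j : ℕ) : ℂ)) i j = ((j : ℕ) : ℂ) ^ i := by
  induction i generalizing j with
  | zero => simp [kry]
  | succ i ih =>
    simp only [kry, ih]
    rw [Finset.sum_eq_single j]
    · simp [pow_succ]
    · intro l _ hl; simp [Matrix.diagonal_apply_ne _ hl]
    · simp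

lemma kry_det_ne {n : ℕ} : (of fun i j : Fin n =>
    kry (fun _ => 1) (Matrix.diagonal fun j : Fin n => ((j : ℕ) : ℂ)) i j).det ≠ 0 := by
  have : (of fun i j : Fin n =>
      kry (fun _ => 1) (Matrix.diagonal fun j : Fin n => ((j : ℕ) : ℂ)) i j) =
      (vandermonde fun j : Fin n => ((j : ℕ) : ℂ))ᵀ := by
    ext i j; simp [kry_diag, vandermonde_apply]
  rw [this, det_transpose, det_vandermonde_ne_zero_iff]
  intro i j h
  simp only at h
  exact Fin.ext (by exact_mod_cast h)

lemma analyticAt_det {n : ℕ} {M : ℝ → Matrix (Fin n) (Fin n) ℂ} {s : ℝ}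
    (h : ∀ i j, AnalyticAt ℝ (fun s => M s i j) s) : AnalyticAt ℝ (fun s => (M s).det) s := by
  simp only [det_apply']
  refine Finset.analyticAt_fun_sum _ fun σ _ => analyticAt_const.mul ?_
  exact Finset.analyticAt_fun_prod _ fun i _ => h _ _

lemma analyticAt_kry {n : ℕ} {b : ℝ → Fin n → ℂ} {D : ℝ → Fin n → Fin n → ℂ} {s : ℝ}
    (hb : ∀ j, AnalyticAt ℝ (fun s => b s j) s) (hD : ∀ i j, AnalyticAt ℝ (fun s => D s i j) s)
    (i : ℕ) (j : Fin n) : AnalyticAt ℝ (fun s => kry (b s) (D s) i j) s := by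
  induction i generalizing j with
  | zero => exact hb j
  | succ i ih =>
    simp only [kry]
    exact Finset.analyticAt_fun_sum _ fun l _ => (ih l).mul (hD l j)

lemma continuous_kry {n : ℕ} {Y : Type*} [TopologicalSpace Y] {b : Y → Fin n → ℂ}
    {D : Y → Fin n → Fin n → ℂ} (hb : Continuous b) (hD : Continuous D)
    (i : ℕ) (j : Fin n) : Continuous (fun s => kry (b s) (D s) i j) := by
  induction i generalizing j with
  | zero => simp only [kry]; fun_prop
  | succ i ih =>
    simp only [kry]
    exact continuous_finsetSum _ fun l _ => (ih l).mul (by fun_prop)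

/-- parameter space -/
abbrev EE (k n : ℕ) := (Fin (k + 1) → ℂ) × (Fin (k + 1) → Fin n → ℂ) × (Fin n → Fin n → ℂ)

instance instHaarPi1 (k n : ℕ) : (volume : Measure (Fin k → Fin n → ℂ)).IsAddHaarMeasure :=
  Measure.pi.isAddHaarMeasure (fun _ : Fin k => (volume : Measure (Fin n → ℂ)))

instance instHaarEE (k n : ℕ) : (volume : Measure (EE k n)).IsAddHaarMeasure := by
  have h1 : ((volume : Measure (Fin (k + 1) → Fin n → ℂ)).prod
      (volume : Measure (Fin n → Fin n → ℂ))).IsAddHaarMeasure :=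
    Measure.prod.instIsAddHaarMeasure _ _
  exact Measure.prod.instIsAddHaarMeasure (volume : Measure (Fin (k + 1) → ℂ)) _

lemma ae_obs (k n : ℕ) : ∀ᵐ e : EE k n, Obs (e.2.1 0) e.2.2 := by
  have h := null_zero (volume : Measure (EE k n))
    (fun e => (of fun i j : Fin n => kry (e.2.1 0) e.2.2 i j).det)
    (by
      apply Continuous.matrix_det
      apply continuous_matrix
      intro i j
      exact continuous_kry (by fun_prop) (by fun_prop) _ _)
    (0, fun _ _ => 1, Matrix.diagonal fun j : Fin n => ((j : ℕ) : ℂ)) kry_det_ne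
    (by
      intro x s
      refine analyticAt_det fun i j => ?_
      refine analyticAt_kry (fun j => ?_) (fun i j => ?_) _ _
      · show AnalyticAt ℝ (fun s : ℝ => (1 : ℂ) + s • x.2.1 0 j) s
        exact analyticAt_const.add (analyticAt_id.smul analyticAt_const)
      · show AnalyticAt ℝ (fun s : ℝ => (Matrix.diagonal fun j : Fin n => ((j : ℕ) : ℂ)) i j
          + s • x.2.2 i j) s
        exact analyticAt_const.add (analyticAt_id.smul analyticAt_const))
  rw [ae_iff]
  refine measure_mono_null ?_ h
  intro e he
  by_contra h'
  exact he (kry_obs _ _ h')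

/-- derivative of the quadratic map -/
lemma Phi_deriv {n : ℕ} (a : ℂ) (b : Fin n → ℂ) (D : Fin n → Fin n → ℂ) (y : Fin n → ℂ) :
    HasFDerivAt (Phi a b D)
      (LinearMap.toContinuousLinearMap
        (Matrix.toLin' (Matrix.scalar (Fin n) (zet a b y) - Bm b D y))) y := by
  rw [hasFDerivAt_pi']
  intro i
  have hz : HasFDerivAt (zet a b) (∑ j, b j • (ContinuousLinearMap.proj (R := ℂ) (φ := fun _ : Fin n => ℂ) j)) y := by
    unfold zet
    refine HasFDerivAt.const_add _ (HasFDerivAt.fun_sum fun j _ => ?_)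
    exact (hasFDerivAt_apply (𝕜 := ℂ) j y).const_mul (b j)
  have hD : HasFDerivAt (fun y : Fin n → ℂ => ∑ j, D i j * y j)
      (∑ j, D i j • (ContinuousLinearMap.proj (R := ℂ) (φ := fun _ : Fin n => ℂ) j)) y :=
    HasFDerivAt.fun_sum fun j _ => (hasFDerivAt_apply (𝕜 := ℂ) j y).const_mul (D i j)
  have := (hz.mul (hasFDerivAt_apply (𝕜 := ℂ) i y)).sub hD
  refine this.congr_fderiv ?_
  ext v
  simp [Matrix.sub_mulVec, mulVec, dotProduct, Bm, sub_mul, Finset.sum_sub_distrib,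
    Matrix.diagonal_apply, Finset.mul_sum]
  have : ∑ x, y i * b x * v x = ∑ x, y i * (b x * v x) := by simp only [mul_assoc]
  rw [this]; ring

lemma Phi_det {n : ℕ} (a : ℂ) (b : Fin n → ℂ) (D : Fin n → Fin n → ℂ) (y : Fin n → ℂ) :
    |((LinearMap.toContinuousLinearMap
        (Matrix.toLin' (Matrix.scalar (Fin n) (zet a b y) - Bm b D y))).restrictScalars ℝ).det| =
      ‖(Bm b D y).charpoly.eval (zet a b y)‖ ^ 2 := by
  have h : ((LinearMap.toContinuousLinearMap
        (Matrix.toLin' (Matrix.scalar (Fin n) (zet a b y) - Bm b D y))).restrictScalars ℝ).det =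
      LinearMap.det ((Matrix.toLin' (Matrix.scalar (Fin n) (zet a b y) - Bm b D y)).restrictScalars ℝ) := rfl
  rw [h, LinearMap.det_restrictScalars, LinearMap.det_toLin', eval_charpoly,
    Algebra.norm_complex_apply, Complex.normSq_eq_norm_sq, abs_of_nonneg (by positivity)]

lemma continuous_zet {n : ℕ} {Y : Type*} [TopologicalSpace Y] {a : Y → ℂ} {b y : Y → Fin n → ℂ}
    (ha : Continuous a) (hb : Continuous b) (hy : Continuous y) :
    Continuous fun s => zet (a s) (b s) (y s) := by
  unfold zet; fun_prop

lemma continuous_cfBm {n : ℕ} {Y : Type*} [TopologicalSpace Y] {b y : Y → Fin n → ℂ}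
    {D : Y → Fin n → Fin n → ℂ} (hb : Continuous b) (hD : Continuous D) (hy : Continuous y) :
    Continuous fun s => (cf (Bm (b s) (D s) (y s)).charpoly : Fin n → ℂ) := by
  refine CC.cf (CC.charpoly fun i j => ?_)
  simp only [Bm, of_apply]; fun_prop

lemma measurableSet_Sdom {n : ℕ} (a : ℂ) (b : Fin n → ℂ) (D : Fin n → Fin n → ℂ) :
    MeasurableSet (Sdom a b D) := by
  have : Measurable fun y : Fin n → ℂ => (zet a b y, (cf (Bm b D y).charpoly : Fin n → ℂ)) :=
    ((continuous_zet continuous_const continuous_const continuous_id).prodMk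
      (continuous_cfBm continuous_const continuous_const continuous_id)).measurable
  exact this (measurableSet_good n)

lemma Phi_cov {n : ℕ} (a : ℂ) (b : Fin n → ℂ) (D : Fin n → Fin n → ℂ) (h : Obs b D)
    (F : (Fin n → ℂ) → ℝ≥0∞) :
    ∫⁻ c, F c = ∫⁻ y in Sdom a b D,
      ENNReal.ofReal (‖(Bm b D y).charpoly.eval (zet a b y)‖ ^ 2) * F (Phi a b D y) := by
  have := lintegral_image_eq_lintegral_abs_det_fderiv_mul volume (measurableSet_Sdom a b D)
    (fun y _ => ((Phi_deriv a b D y).restrictScalars ℝ).hasFDerivWithinAt) (Phi_inj a b D h) F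
  rw [Phi_surj a b D h, Measure.restrict_univ] at this
  rw [this]
  simp only [Phi_det]


/-- Householder-type matrix -/
def house {ι : Type*} [DecidableEq ι] (u : ι → ℂ) (s : ℝ) : Matrix ι ι ℂ :=
  of fun i j => u i * star (u j) / (s : ℂ) - if i = j then 1 else 0

lemma house_herm {ι : Type*} [DecidableEq ι] (u : ι → ℂ) (s : ℝ) : (house u s)ᴴ = house u s := by
  ext i j
  simp only [house, conjTranspose_apply, of_apply, star_sub, star_div₀, star_mul', star_star]
  rw [mul_comm]
  congr 1
  · simp
  · by_cases h : i = j
    · simp [h]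
    · simp [h, Ne.symm h]

lemma house_mul {ι κ : Type*} [Fintype ι] [DecidableEq ι] (u : ι → ℂ) (s : ℝ) (M : Matrix ι κ ℂ)
    (i : ι) (l : κ) :
    (house u s * M) i l = u i / (s : ℂ) * (∑ j, star (u j) * M j l) - M i l := by
  simp only [Matrix.mul_apply, house, of_apply, sub_mul, Finset.sum_sub_distrib]
  congr 1
  · rw [Finset.mul_sum]
    exact Finset.sum_congr rfl fun j _ => by ring
  · simp

lemma house_sq {ι : Type*} [Fintype ι] [DecidableEq ι] (u : ι → ℂ) (s : ℝ) (hs : s ≠ 0)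
    (hu : ∑ j, star (u j) * u j = 2 * (s : ℂ)) : house u s * house u s = 1 := by
  have hs' : (s : ℂ) ≠ 0 := by exact_mod_cast hs
  ext i l
  rw [house_mul]
  have : ∑ j, star (u j) * house u s j l = star (u l) := by
    simp only [house, of_apply, mul_sub, Finset.sum_sub_distrib]
    have h1 : ∑ j, star (u j) * (u j * star (u l) / (s : ℂ)) = 2 * star (u l) := by
      have : ∀ j, star (u j) * (u j * star (u l) / (s : ℂ)) =
        (star (u j) * u j) * (star (u l) / (s : ℂ)) := fun j => by ring
      simp only [this]
      rw [← Finset.sum_mul, hu]; field_simp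
    rw [h1]
    simp
    ring
  rw [this]
  simp only [house, of_apply, Matrix.one_apply]
  ring

/-- `√(1+|y|²)` -/
def ry {n : ℕ} (y : Fin n → ℂ) : ℝ := Real.sqrt (1 + ∑ i, ‖y i‖ ^ 2)
lemma ry_sq {n : ℕ} (y : Fin n → ℂ) : ry y ^ 2 = 1 + ∑ i, ‖y i‖ ^ 2 :=
  Real.sq_sqrt (by positivity)
lemma ry_pos {n : ℕ} (y : Fin n → ℂ) : 0 < ry y := Real.sqrt_pos.mpr (by positivity)
lemma ry_cont {n : ℕ} : Continuous (ry : (Fin n → ℂ) → ℝ) := by unfold ry; fun_prop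
/-- normalisation -/
def sy {n : ℕ} (y : Fin n → ℂ) : ℝ := ry y * (ry y + 1)
lemma sy_ne {n : ℕ} (y : Fin n → ℂ) : sy y ≠ 0 := by
  have := ry_pos y; unfold sy; positivity

lemma star_sum_sq {n : ℕ} (y : Fin n → ℂ) : ∑ i, star (y i) * y i = (ry y : ℂ) ^ 2 - 1 := by
  have h : ((ry y ^ 2 : ℝ) : ℂ) = ((1 + ∑ i, ‖y i‖ ^ 2 : ℝ) : ℂ) := by rw [ry_sq]
  push_cast at h
  rw [h]
  have : ∀ i, star (y i) * y i = (‖y i‖ : ℂ) ^ 2 := fun i => by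
    rw [← Complex.ofReal_pow, ← Complex.normSq_eq_norm_sq, Complex.normSq_eq_conj_mul_self]; rfl
  simp only [this]; ring

/-- first reflection vector -/
def u1 {n : ℕ} (y : Fin n → ℂ) : Unit ⊕ Fin n → ℂ := Sum.elim (fun _ => (ry y : ℂ) + 1) y
/-- second reflection vector -/
def u2 (k : ℕ) {n : ℕ} (y : Fin n → ℂ) : Fin (k + 1) ⊕ Fin n → ℂ :=
  Sum.elim (Pi.single 0 ((ry y : ℂ) + 1)) y
/-- right reflection -/
def V1 {n : ℕ} (y : Fin n → ℂ) := house (u1 y) (sy y)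
/-- left reflection -/
def V2 (k : ℕ) {n : ℕ} (y : Fin n → ℂ) := house (u2 k y) (sy y)

lemma V1_sq {n : ℕ} (y : Fin n → ℂ) : V1 y * V1 y = 1 := by
  refine house_sq _ _ (sy_ne y) ?_
  simp only [u1, Fintype.sum_sum_type, Sum.elim_inl, Sum.elim_inr, star_sum_sq]
  simp [sy]; ring

lemma sum_u2 {k n : ℕ} (y : Fin n → ℂ) (f : Fin (k + 1) ⊕ Fin n → ℂ) :
    ∑ j, star (u2 k y j) * f j = ((ry y : ℂ) + 1) * f (Sum.inl 0) +
      ∑ j, star (y j) * f (Sum.inr j) := by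
  simp only [u2, Fintype.sum_sum_type, Sum.elim_inl, Sum.elim_inr]
  congr 1
  rw [Finset.sum_eq_single 0]
  · simp
  · intro i _ hi; simp [hi]
  · simp

lemma V2_sq (k : ℕ) {n : ℕ} (y : Fin n → ℂ) : V2 k y * V2 k y = 1 := by
  refine house_sq _ _ (sy_ne y) ?_
  rw [sum_u2]
  simp only [u2, Sum.elim_inl, Sum.elim_inr, star_sum_sq]
  simp [sy]; ring

/-- the rotated matrix -/
def GG {k n : ℕ} (y : Fin n → ℂ) (e : EE k n) : Matrix (Fin (k + 1) ⊕ Fin n) (Unit ⊕ Fin n) ℂ :=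
  V2 k y * Gm e.1 e.2.1 0 e.2.2 * V1 y

/-- linear change of variables -/
def Lam {k n : ℕ} (y : Fin n → ℂ) (e : EE k n) : EE k n :=
  (fun i => GG y e (Sum.inl i) (Sum.inl ()), fun i j => GG y e (Sum.inl i) (Sum.inr j),
    fun i j => GG y e (Sum.inr i) (Sum.inr j))

lemma V1_vec {n : ℕ} (y : Fin n → ℂ) (i : Unit ⊕ Fin n) :
    V1 y i (Sum.inl ()) + ∑ j, V1 y i (Sum.inr j) * y j =
      Sum.elim (fun _ => (ry y : ℂ)) (fun _ => 0) i := by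
  have hs : (sy y : ℂ) ≠ 0 := by exact_mod_cast sy_ne y
  have h1 : ∑ j, V1 y i (Sum.inr j) * y j =
      u1 y i / (sy y : ℂ) * ((ry y : ℂ) ^ 2 - 1) - Sum.elim (fun _ => 0) y i := by
    simp only [V1, house, of_apply, sub_mul, Finset.sum_sub_distrib]
    congr 1
    · rw [← star_sum_sq, Finset.mul_sum]
      exact Finset.sum_congr rfl fun j _ => by simp only [u1, Sum.elim_inr]; ring
    · rcases i with i | i <;> simp
  rw [h1]
  have hr : (ry y : ℂ) ≠ 0 := by exact_mod_cast (ry_pos y).ne'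
  have hr1 : (ry y : ℂ) + 1 ≠ 0 := by exact_mod_cast (by have := ry_pos y; positivity : ry y + 1 ≠ 0)
  have hsy : (sy y : ℂ) = ry y * (ry y + 1) := by simp [sy]
  rcases i with i | i
  · simp only [V1, house, of_apply, u1, Sum.elim_inl, hsy]
    simp
    field_simp
    ring
  · simp only [V1, house, of_apply, u1, Sum.elim_inl, Sum.elim_inr, hsy]
    simp
    field_simp
    ring

lemma GG_vec {k n : ℕ} (y : Fin n → ℂ) (e : EE k n) (i : Fin (k + 1) ⊕ Fin n) :
    GG y e i (Sum.inl ()) + ∑ j, GG y e i (Sum.inr j) * y j =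
      (V2 k y * Gm e.1 e.2.1 0 e.2.2) i (Sum.inl ()) * ry y := by
  set M := V2 k y * Gm e.1 e.2.1 0 e.2.2 with hM
  have h : GG y e = M * V1 y := rfl
  rw [h]
  simp only [Matrix.mul_apply, Finset.sum_mul]
  rw [Finset.sum_comm, ← Finset.sum_add_distrib]
  simp only [mul_assoc]
  simp only [← Finset.mul_sum, ← mul_add, V1_vec]
  simp [Fintype.sum_sum_type]

lemma V2_col {k n : ℕ} (y : Fin n → ℂ) (e : EE k n) (i : Fin (k + 1) ⊕ Fin n) :
    (V2 k y * Gm e.1 e.2.1 0 e.2.2) i (Sum.inl ()) * ry y =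
      u2 k y i * e.1 0 - ry y * Sum.elim e.1 (fun _ => 0) i := by
  have hr : (ry y : ℂ) ≠ 0 := by exact_mod_cast (ry_pos y).ne'
  have hr1 : (ry y : ℂ) + 1 ≠ 0 := by exact_mod_cast (by have := ry_pos y; positivity : ry y + 1 ≠ 0)
  have hsy : (sy y : ℂ) = ry y * (ry y + 1) := by simp [sy]
  rw [V2, house_mul, sum_u2, hsy]
  rcases i with i | i
  · simp [Gm]; field_simp
  · simp [Gm]; field_simp

lemma Lam_zet {k n : ℕ} (y : Fin n → ℂ) (e : EE k n) :
    zet ((Lam y e).1 0) ((Lam y e).2.1 0) y = e.1 0 := by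
  have := GG_vec y e (Sum.inl 0)
  rw [V2_col] at this
  simp only [zet, Lam, this, u2]
  simp
  ring

lemma Lam_Gm {k n : ℕ} (y : Fin n → ℂ) (e : EE k n) :
    Gm (Lam y e).1 (Lam y e).2.1 (Phi ((Lam y e).1 0) ((Lam y e).2.1 0) (Lam y e).2.2 y)
      (Lam y e).2.2 = GG y e := by
  ext i j
  rcases i with i | i <;> rcases j with j | j
  · rfl
  · rfl
  · have := GG_vec y e (Sum.inr i)
    rw [V2_col] at this
    simp only [u2, Sum.elim_inr, mul_zero, sub_zero] at this
    simp only [Gm, fromBlocks_apply₂₁, replicateCol_apply, Phi, Lam_zet]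
    simp only [Lam]
    rw [show Sum.inl j = Sum.inl () from rfl]
    linear_combination -this
  · rfl

lemma Lam_Wr {k n : ℕ} (t : ℕ) (y : Fin n → ℂ) (e : EE k n) :
    Wr t (Gm (Lam y e).1 (Lam y e).2.1 (Phi ((Lam y e).1 0) ((Lam y e).2.1 0) (Lam y e).2.2 y)
      (Lam y e).2.2) = Wr t (Gm e.1 e.2.1 0 e.2.2) := by
  rw [Lam_Gm, GG, Wr_right, Wr_left]
  · rw [V2, house_herm]; exact V2_sq k y
  · rw [V1, house_herm]; exact V1_sq y

lemma Abm_eq_sub {k n : ℕ} (x : Fin (k + 1) → ℂ) (Z : Fin (k + 1) → Fin n → ℂ) (c : Fin n → ℂ)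
    (D : Fin n → Fin n → ℂ) :
    Abm (x 0) (Z 0) c D = (Gm x Z c D).submatrix (Sum.map (fun _ : Unit => 0) id) id := by
  ext i j
  rcases i with i | i <;> rcases j with j | j <;> rfl

lemma Lam_charpoly {k n : ℕ} (y : Fin n → ℂ) (e : EE k n) :
    (Bm ((Lam y e).2.1 0) (Lam y e).2.2 y).charpoly = (of e.2.2).charpoly := by
  have h1 := charpoly_Abm ((Lam y e).1 0) ((Lam y e).2.1 0) (Lam y e).2.2 y
  rw [Abm_eq_sub, Lam_Gm, Lam_zet] at h1
  have h2 : (GG y e).submatrix (Sum.map (fun _ : Unit => 0) id) id =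
      V1 y * Abm (e.1 0) (e.2.1 0) 0 e.2.2 * V1 y := by
    rw [GG, ← Matrix.submatrix_mul_equiv (e₂ := Equiv.refl _)]
    congr 1
    ext i j
    rw [submatrix_apply, V2, house_mul, sum_u2, V1, house_mul]
    rw [Fintype.sum_sum_type]
    rcases i with i | i <;> rcases j with j | j <;> simp [u1, u2, Gm, Abm]
  have h3 : (V1 y * Abm (e.1 0) (e.2.1 0) 0 e.2.2 * V1 y).charpoly =
      (X - C (e.1 0)) * (of e.2.2).charpoly := by
    rw [Matrix.charpoly_mul_comm, ← Matrix.mul_assoc, V1_sq, Matrix.one_mul, Abm]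
    rw [show replicateCol Unit (0 : Fin n → ℂ) = 0 by ext; rfl,
      Matrix.charpoly_fromBlocks_zero₂₁, charpoly_unit]
  rw [h2, h3] at h1
  exact (mul_left_cancel₀ (X_sub_C_ne_zero _) h1).symm

lemma Gm_add {k n : ℕ} (e e' : EE k n) : Gm (e + e').1 (e + e').2.1 0 (e + e').2.2 =
    Gm e.1 e.2.1 0 e.2.2 + Gm e'.1 e'.2.1 0 e'.2.2 := by
  ext i j
  rcases i with i | i <;> rcases j with j | j <;> simp [Gm]

lemma Gm_smul {k n : ℕ} (r : ℝ) (e : EE k n) : Gm (r • e).1 (r • e).2.1 0 (r • e).2.2 =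
    r • Gm e.1 e.2.1 0 e.2.2 := by
  ext i j
  rcases i with i | i <;> rcases j with j | j <;> simp [Gm]

/-- linear version -/
def LamL {k n : ℕ} (y : Fin n → ℂ) : EE k n →ₗ[ℝ] EE k n where
  toFun := Lam y
  map_add' e e' := by
    have : GG y (e + e') = GG y e + GG y e' := by
      simp only [GG, Gm_add, Matrix.mul_add, Matrix.add_mul]
    simp only [Lam, this]; rfl
  map_smul' r e := by
    have : GG y (r • e) = r • GG y e := by
      simp only [GG, Gm_smul, Matrix.mul_smul, Matrix.smul_mul]
    simp only [Lam, this]; rfl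

lemma LamL_det {k n : ℕ} (y : Fin n → ℂ) : LinearMap.det (LamL (k := k) y) ≠ 0 := by
  have hinj : Function.Injective (LamL (k := k) y) := by
    rw [← LinearMap.ker_eq_bot, LinearMap.ker_eq_bot']
    intro e he
    have h1 : GG y e = 0 := by
      rw [← Lam_Gm]
      have : Lam y e = 0 := he
      rw [this]
      ext i j
      rcases i with i | i <;> rcases j with j | j <;> simp [Gm, Phi, zet]
    have h2 : Gm e.1 e.2.1 0 e.2.2 = 0 := by
      calc Gm e.1 e.2.1 0 e.2.2 = (V2 k y * V2 k y) * Gm e.1 e.2.1 0 e.2.2 * (V1 y * V1 y) := by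
            rw [V1_sq, V2_sq]; simp
        _ = V2 k y * GG y e * V1 y := by rw [GG]; simp only [Matrix.mul_assoc]
        _ = 0 := by rw [h1]; simp
    refine Prod.ext ?_ (Prod.ext ?_ ?_)
    · funext i; exact congrFun (congrFun h2 (Sum.inl i)) (Sum.inl ())
    · funext i j; exact congrFun (congrFun h2 (Sum.inl i)) (Sum.inr j)
    · funext i j; exact congrFun (congrFun h2 (Sum.inr i)) (Sum.inr j)
  have := LinearEquiv.isUnit_det' (LinearEquiv.ofInjectiveEndo _ hinj)
  exact this.ne_zero

lemma house_cont {n : ℕ} {ι : Type*} [DecidableEq ι] (u : (Fin n → ℂ) → ι → ℂ) (hu : Continuous u)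
    (i j : ι) : Continuous fun y => house (u y) (sy y) i j := by
  simp only [house, of_apply]
  refine Continuous.sub (Continuous.div (by fun_prop) ?_ fun y => ?_) continuous_const
  · have := ry_cont (n := n)
    unfold sy; fun_prop
  · exact_mod_cast sy_ne y

lemma u1_cont {n : ℕ} : Continuous (u1 : (Fin n → ℂ) → _) := by
  refine continuous_pi fun i => ?_
  have := ry_cont (n := n)
  rcases i with i | i
  · simp only [u1, Sum.elim_inl]; fun_prop
  · simp only [u1, Sum.elim_inr]; fun_prop

lemma u2_cont {k n : ℕ} : Continuous (u2 k : (Fin n → ℂ) → _) := by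
  refine continuous_pi fun i => ?_
  have := ry_cont (n := n)
  rcases i with i | i
  · simp only [u2, Sum.elim_inl]
    by_cases h : i = 0
    · subst h; simp only [Pi.single_eq_same]; fun_prop
    · simp only [Pi.single_eq_of_ne h]; fun_prop
  · simp only [u2, Sum.elim_inr]; fun_prop

lemma GG_cont {k n : ℕ} (e : EE k n) (i : Fin (k + 1) ⊕ Fin n) (j : Unit ⊕ Fin n) :
    Continuous fun y => GG y e i j := by
  simp only [GG, Matrix.mul_apply]
  have h1 := house_cont (u1 (n := n)) u1_cont
  have h2 := house_cont (u2 k (n := n)) u2_cont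
  simp only [V1, V2]
  fun_prop

lemma LamL_cont {k n : ℕ} : Continuous fun y : Fin n → ℂ => LinearMap.det (LamL (k := k) y) := by
  have h : Continuous fun y : Fin n → ℂ => LinearMap.toContinuousLinearMap (LamL (k := k) y) := by
    rw [continuous_clm_apply]
    intro e
    show Continuous fun y => Lam y e
    have := GG_cont e
    unfold Lam
    fun_prop
  exact ContinuousLinearMap.continuous_det.comp h

lemma continuous_Phi {n : ℕ} {Y : Type*} [TopologicalSpace Y] {a : Y → ℂ} {b y : Y → Fin n → ℂ}
    {D : Y → Fin n → Fin n → ℂ} (ha : Continuous a) (hb : Continuous b) (hy : Continuous y)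
    (hD : Continuous D) : Continuous fun s => Phi (a s) (b s) (D s) (y s) := by
  have := continuous_zet ha hb hy
  unfold Phi; fun_prop

lemma continuous_Gm {k n : ℕ} {Y : Type*} [TopologicalSpace Y] {x : Y → Fin (k + 1) → ℂ}
    {Z : Y → Fin (k + 1) → Fin n → ℂ} {c : Y → Fin n → ℂ}
    {D : Y → Fin n → Fin n → ℂ} (hx : Continuous x) (hZ : Continuous Z) (hc : Continuous c)
    (hD : Continuous D) (i : Fin (k + 1) ⊕ Fin n) (j : Unit ⊕ Fin n) :
    Continuous fun s => Gm (x s) (Z s) (c s) (D s) i j := by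
  rcases i with i | i <;> rcases j with j | j <;> simp [Gm] <;> fun_prop

/-- integrand in the swapped step -/
def Hin (t : ℕ) {k n : ℕ} (h : ℂ × (Fin n → ℂ) → ℝ≥0∞) (e : EE k n) (y : Fin n → ℂ) : ℝ≥0∞ :=
  h (zet (e.1 0) (e.2.1 0) y, cf (Bm (e.2.1 0) e.2.2 y).charpoly) *
    ENNReal.ofReal (Wr t (Gm e.1 e.2.1 (Phi (e.1 0) (e.2.1 0) e.2.2 y) e.2.2))

lemma Hin_meas (t : ℕ) {k n : ℕ} (h : ℂ × (Fin n → ℂ) → ℝ≥0∞) (hh : Measurable h) :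
    Measurable fun p : EE k n × (Fin n → ℂ) => Hin t h p.1 p.2 := by
  unfold Hin
  refine Measurable.mul (hh.comp ?_) (Measurable.ennreal_ofReal ?_)
  · exact ((continuous_zet (by fun_prop) (by fun_prop) (by fun_prop)).prodMk
      (continuous_cfBm (by fun_prop) (by fun_prop) (by fun_prop))).measurable
  · exact (Wr_cont t fun i j => continuous_Gm (by fun_prop) (by fun_prop)
      (continuous_Phi (by fun_prop) (by fun_prop) (by fun_prop) (by fun_prop)) (by fun_prop) i j).measurable

lemma step_c (k n t : ℕ) : ∃ J : ℝ≥0∞, ∀ h : ℂ × (Fin n → ℂ) → ℝ≥0∞, Measurable h →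
    ∫⁻ e : EE k n, ∫⁻ y, Hin t h e y =
      J * ∫⁻ e : EE k n, h (e.1 0, cf (of e.2.2).charpoly) *
        ENNReal.ofReal (Wr t (Gm e.1 e.2.1 0 e.2.2)) := by
  refine ⟨∫⁻ y : Fin n → ℂ, ENNReal.ofReal |LinearMap.det (LamL (k := k) y)|, fun h hh => ?_⟩
  rw [lintegral_lintegral_swap (Hin_meas t h hh).aemeasurable]
  rw [← lintegral_mul_const _ (LamL_cont.abs.measurable.ennreal_ofReal)]
  refine lintegral_congr fun y => ?_
  have h1 := Measure.map_linearMap_addHaar_eq_smul_addHaar (volume : Measure (EE k n))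
    (LamL_det (k := k) y)
  have hm : Measurable fun e : EE k n => Hin t h e y :=
    (Hin_meas t h hh).comp (measurable_id.prodMk measurable_const)
  have hL : Measurable (LamL (k := k) y) :=
    (LinearMap.continuous_of_finiteDimensional (LamL (k := k) y)).measurable
  have h2 : ∫⁻ e : EE k n, h (e.1 0, cf (of e.2.2).charpoly) *
        ENNReal.ofReal (Wr t (Gm e.1 e.2.1 0 e.2.2)) = ∫⁻ e : EE k n, Hin t h (LamL y e) y := by
    refine lintegral_congr fun e => ?_
    show _ = Hin t h (Lam y e) y
    unfold Hin
    rw [Lam_zet, Lam_charpoly, Lam_Wr]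
  rw [h2, ← lintegral_map hm hL, h1, lintegral_smul_measure, smul_eq_mul, ← mul_assoc,
    ← ENNReal.ofReal_mul (abs_nonneg _), ← abs_mul, mul_inv_cancel₀ (LamL_det y)]
  simp


/-- left multiplication as a real linear map -/
def lm {a : ℕ} (b : ℕ) (O : Matrix (Fin a) (Fin a) ℂ) : (Fin a → Fin b → ℂ) →ₗ[ℝ] (Fin a → Fin b → ℂ) where
  toFun Z := fun i j => ∑ l, O i l * Z l j
  map_add' Z Z' := by
    funext i j; simp [mul_add, Finset.sum_add_distrib]
  map_smul' r Z := by
    funext i j; simp [Finset.mul_sum, mul_left_comm]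

lemma lm_eq {a b : ℕ} (O : Matrix (Fin a) (Fin a) ℂ) (Z : Fin a → Fin b → ℂ) :
    of (lm b O Z) = O * of Z := by
  ext i j; simp [lm, Matrix.mul_apply]

lemma lm_sqn {a b : ℕ} (O : Matrix (Fin a) (Fin a) ℂ) (hO : Oᴴ * O = 1) (Z : Fin a → Fin b → ℂ) :
    sqn (of (lm b O Z)) = sqn (of Z) := by
  apply sqn_of_gram
  rw [lm_eq, conjTranspose_mul, Matrix.mul_assoc, ← Matrix.mul_assoc Oᴴ, hO, Matrix.one_mul]

lemma lm_det {a b : ℕ} (O : Matrix (Fin a) (Fin a) ℂ) (hO : Oᴴ * O = 1) :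
    LinearMap.det (lm b O) ≠ 0 := by
  have : (lm b Oᴴ) ∘ₗ (lm b O) = LinearMap.id := by
    refine LinearMap.ext fun Z => ?_
    have : of ((lm b Oᴴ) ((lm b O) Z)) = of Z := by
      rw [lm_eq, lm_eq, ← Matrix.mul_assoc, hO, Matrix.one_mul]
    exact this
  have h2 := congrArg LinearMap.det this
  rw [LinearMap.det_comp, LinearMap.det_id] at h2
  exact right_ne_zero_of_mul (h2 ▸ one_ne_zero)

lemma lm_mp {a b : ℕ} (O : Matrix (Fin a) (Fin a) ℂ) (hO : Oᴴ * O = 1) :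
    MeasurePreserving (lm b O) := by
  have hc : Continuous (lm b O) := LinearMap.continuous_of_finiteDimensional _
  refine ⟨hc.measurable, ?_⟩
  have h1 := Measure.map_linearMap_addHaar_eq_smul_addHaar
    (volume : Measure (Fin a → Fin b → ℂ)) (lm_det (b := b) O hO)
  set S : Set (Fin a → Fin b → ℂ) := {Z | sqn (of Z) < 1} with hS
  have hcs : Continuous fun Z : Fin a → Fin b → ℂ => sqn (of Z) := by
    simp only [sqn, of_apply]; fun_prop
  have hSo : IsOpen S := isOpen_lt hcs continuous_const
  have hS0 : volume S ≠ 0 := (hSo.measure_pos _ ⟨0, by simp [hS, sqn]⟩).ne'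
  have hSf : volume S ≠ ∞ := by
    refine ((measure_mono ?_).trans_lt
      (measure_closedBall_lt_top (x := (0 : Fin a → Fin b → ℂ)) (r := 1))).ne
    intro Z hZ
    rw [mem_closedBall_zero_iff, pi_norm_le_iff_of_nonneg zero_le_one]
    intro i
    rw [pi_norm_le_iff_of_nonneg zero_le_one]
    intro j
    have h2 : ‖Z i j‖ ^ 2 ≤ sqn (of Z) := by
      unfold sqn
      refine le_trans ?_ (Finset.single_le_sum (f := fun i => ∑ j, ‖of Z i j‖ ^ 2)
        (fun i _ => by positivity) (Finset.mem_univ i))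
      exact Finset.single_le_sum (f := fun j => ‖of Z i j‖ ^ 2)
        (fun i _ => by positivity) (Finset.mem_univ j)
    have h3 : sqn (of Z) < 1 := hZ
    nlinarith [norm_nonneg (Z i j)]
  have h2 : Measure.map (lm b O) volume S = volume S := by
    rw [Measure.map_apply hc.measurable hSo.measurableSet]
    congr 1
    ext Z
    simp only [hS, Set.mem_preimage, Set.mem_setOf_eq, lm_sqn O hO]
  have h3 := h2
  rw [h1, Measure.smul_apply, smul_eq_mul] at h3
  have h4 : ENNReal.ofReal |(LinearMap.det (lm b O))⁻¹| = 1 := by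
    have : ENNReal.ofReal |(LinearMap.det (lm b O))⁻¹| * volume S = 1 * volume S := by
      rw [h3, one_mul]
    exact (ENNReal.mul_left_inj hS0 hSf).mp this
  rw [h1, h4, one_smul]

lemma split0 {k : ℕ} {α : Type*} [MeasureSpace α] [SigmaFinite (volume : Measure α)]
    (F : α × (Fin k → α) → ℝ≥0∞) (hF : Measurable F) :
    ∫⁻ Z : Fin (k + 1) → α, F (Z 0, fun i => Z i.succ) = ∫⁻ w, ∫⁻ C, F (w, C) := by
  have h := (volume_preserving_piFinSuccAbove (fun _ : Fin (k + 1) => α) 0)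
  have h2 := h.lintegral_comp (f := F) hF
  rw [Measure.volume_eq_prod, lintegral_prod _ hF.aemeasurable] at h2
  rw [← h2]
  rfl

lemma splitcol {m n : ℕ} (F : (Fin m → ℂ) × (Fin m → Fin n → ℂ) → ℝ≥0∞) (hF : Measurable F) :
    ∫⁻ M : Fin m → Fin (n + 1) → ℂ, F (fun i => M i 0, fun i j => M i j.succ) =
      ∫⁻ c, ∫⁻ D, F (c, D) := by
  have h1 := volume_preserving_pi (fun _ : Fin m => 
    (volume_preserving_piFinSuccAbove (fun _ : Fin (n + 1) => ℂ) 0))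
  have h2 := volume_measurePreserving_arrowProdEquivProdArrow ℂ (Fin n → ℂ) (Fin m)
  have h3 := (h2.comp h1).lintegral_comp (f := F) hF
  rw [Measure.volume_eq_prod, lintegral_prod _ hF.aemeasurable] at h3
  rw [← h3]
  rfl

/-- Gaussian constant -/
def kap (t n : ℕ) : ℝ≥0∞ := ∫⁻ w : Fin n → ℂ, ENNReal.ofReal (Real.exp (-(t * ∑ j, ‖w j‖ ^ 2)))

/-- radial weight -/
def Rw (t : ℕ) (s : ℝ) : ℝ≥0∞ := ENNReal.ofReal (s ^ t * Real.exp (-(t * s)))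

lemma Rw_meas (t : ℕ) : Measurable (Rw t) := by unfold Rw; fun_prop

lemma int_Z (t : ℕ) {k n : ℕ} (x : Fin (k + 1) → ℂ) (B : Fin n → Fin n → ℂ) :
    ∫⁻ Z : Fin (k + 1) → Fin n → ℂ, ENNReal.ofReal (Wr t (Gm x Z 0 B)) =
      Rw t (∑ i, ‖x i‖ ^ 2) * (kap t n *
        ∫⁻ Cc : Fin k → Fin n → ℂ, ENNReal.ofReal (Wr t (fromRows (of Cc) (of B)))) := by
  obtain ⟨O, hO, hOx⟩ := exists_rot x
  set ρ : ℝ := Real.sqrt (∑ i, ‖x i‖ ^ 2) with hρ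
  have hρ2 : ρ ^ 2 = ∑ i, ‖x i‖ ^ 2 := Real.sq_sqrt (by positivity)
  have hc1 : Continuous fun Z : Fin (k + 1) → Fin n → ℂ => Wr t (Gm (Pi.single 0 (ρ : ℂ)) Z 0 B) :=
    Wr_cont t fun i j => continuous_Gm (by fun_prop) (by fun_prop) (by fun_prop) (by fun_prop) i j
  have h1 : ∀ Z : Fin (k + 1) → Fin n → ℂ, Wr t (Gm x Z 0 B) =
      Wr t (Gm (Pi.single 0 (ρ : ℂ)) (lm n O Z) 0 B) := by
    intro Z
    rw [Wr_rot t O hO, hOx]; rfl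
  simp only [h1]
  rw [(lm_mp (b := n) O hO).lintegral_comp
    (f := fun Z => ENNReal.ofReal (Wr t (Gm (Pi.single 0 (ρ : ℂ)) Z 0 B)))
    hc1.measurable.ennreal_ofReal]
  have hc2 : Continuous fun C : Fin k → Fin n → ℂ => Wr t (fromRows (of C) (of B)) := by
    refine Wr_cont t fun i j => ?_
    rcases i with i | i <;> simp <;> fun_prop
  simp only [Wr_step, hρ2]
  obtain ⟨FF, hFF⟩ : ∃ FF : (Fin n → ℂ) × (Fin k → Fin n → ℂ) → ℝ≥0∞, FF = fun p =>
        ENNReal.ofReal (Real.exp (-(t * ∑ j, ‖p.1 j‖ ^ 2))) *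
          ENNReal.ofReal (Wr t (fromRows (of p.2) (of B))) := ⟨_, rfl⟩
  have hm1 : Measurable (fun w : Fin n → ℂ => 
      ENNReal.ofReal (Real.exp (-((t : ℝ) * ∑ j, ‖w j‖ ^ 2)))) := by
    fun_prop
  have hm : Measurable FF := by
    rw [hFF]
    exact Measurable.mul (hm1.comp measurable_fst)
      (hc2.comp continuous_snd).measurable.ennreal_ofReal
  have h3 : ∀ Z : Fin (k + 1) → Fin n → ℂ,
      ENNReal.ofReal ((∑ i, ‖x i‖ ^ 2) ^ t * Real.exp (-(t * ∑ i, ‖x i‖ ^ 2)) *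
        Real.exp (-(t * ∑ j, ‖Z 0 j‖ ^ 2)) * Wr t (fromRows (of fun i : Fin k => Z i.succ) (of B))) =
      Rw t (∑ i, ‖x i‖ ^ 2) * FF (Z 0, fun i => Z i.succ) := by
    intro Z
    rw [Rw, ENNReal.ofReal_mul (by positivity), ENNReal.ofReal_mul (by positivity), mul_assoc, hFF]
  have hm2 : Measurable fun Z : Fin (k + 1) → Fin n → ℂ => (Z 0, fun i : Fin k => Z i.succ) := by
    fun_prop
  have hm3 : Measurable fun Z : Fin (k + 1) → Fin n → ℂ => FF (Z 0, fun i : Fin k => Z i.succ) :=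
    hm.comp hm2
  rw [lintegral_congr h3, lintegral_const_mul _ hm3, split0 _ hm]
  congr 1
  simp only [kap]
  rw [← lintegral_mul_const _ hm1]
  refine lintegral_congr fun w => ?_
  rw [hFF]
  exact lintegral_const_mul (μ := (volume : Measure (Fin k → Fin n → ℂ)))
    (ENNReal.ofReal (Real.exp (-((t : ℝ) * ∑ j, ‖w j‖ ^ 2)))) hc2.measurable.ennreal_ofReal

/-- `Unit ⊕ Fin n ≃ Fin (n+1)` -/
def eqv (n : ℕ) : Unit ⊕ Fin n ≃ Fin (n + 1) where
  toFun := Sum.elim (fun _ => 0) Fin.succ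
  invFun := Fin.cases (Sum.inl ()) Sum.inr
  left_inv := by rintro (⟨⟩ | i) <;> simp
  right_inv i := by refine Fin.cases ?_ (fun i => ?_) i <;> simp

lemma reidx_charpoly {n : ℕ} (A : Fin (n + 1) → Fin (n + 1) → ℂ) :
    (of A).charpoly = (Abm (A 0 0) (fun j => A 0 j.succ) (fun i => A i.succ 0)
      (fun i j => A i.succ j.succ)).charpoly := by
  rw [← Matrix.charpoly_reindex (eqv n).symm (of A)]
  congr 1
  ext i j
  rcases i with i | i <;> rcases j with j | j <;> simp [Abm, eqv]

lemma reidx_Wr (t : ℕ) {k n : ℕ} (A : Fin (n + 1) → Fin (n + 1) → ℂ) (Cc : Fin k → Fin (n + 1) → ℂ) :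
    Wr t (fromRows (of Cc) (of A)) = Wr t (Gm (Fin.cons (A 0 0) (fun i => Cc i 0))
      (Fin.cons (fun j => A 0 j.succ) (fun i j => Cc i j.succ)) (fun i => A i.succ 0)
      (fun i j => A i.succ j.succ)) := by
  rw [← Wr_submatrix t (Equiv.refl _) (eqv n)]
  apply Wr_of_gram
  ext i j
  rcases i with i | i <;> rcases j with j | j <;>
    simp [Matrix.mul_apply, Gm, Fintype.sum_sum_type, eqv, Fin.sum_univ_succ] <;> ring


lemma meas_cons {Y α : Type*} [MeasurableSpace Y] [MeasurableSpace α] {k : ℕ} {f : Y → α}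
    {g : Y → Fin k → α} (hf : Measurable f) (hg : Measurable g) :
    Measurable fun y => (Fin.cons (f y) (g y) : Fin (k + 1) → α) := by
  rw [measurable_pi_iff]
  intro i
  refine Fin.cases ?_ (fun i => ?_) i
  · simpa using hf
  · simpa using (measurable_pi_iff.mp hg i)

lemma sfx {α β : Type*} [MeasureSpace α] [MeasureSpace β] (h1 : SigmaFinite (volume : Measure α))
    (h2 : SigmaFinite (volume : Measure β)) : SigmaFinite (volume : Measure (α × β)) := by
  rw [Measure.volume_eq_prod]; infer_instance

lemma lint_prod {α β : Type*} [MeasureSpace α] [MeasureSpace β] [SFinite (volume : Measure β)]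
    (f : α × β → ℝ≥0∞) (hf : Measurable f) : ∫⁻ p : α × β, f p = ∫⁻ a, ∫⁻ b, f (a, b) := by
  rw [Measure.volume_eq_prod, lintegral_prod _ hf.aemeasurable]

lemma split_all {k n : ℕ} (κ : EE k n × (Fin n → ℂ) → ℝ≥0∞) (hκ : Measurable κ) :
    ∫⁻ A : Fin (n + 1) → Fin (n + 1) → ℂ, ∫⁻ Cc : Fin k → Fin (n + 1) → ℂ,
      κ ((Fin.cons (A 0 0) (fun i => Cc i 0), Fin.cons (fun j => A 0 j.succ) (fun i j => Cc i j.succ),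
        fun i j => A i.succ j.succ), fun i => A i.succ 0) = ∫⁻ e, ∫⁻ c, κ (e, c) := by
  -- step 1
  let T1 : (Fin (n + 1) → ℂ) × (Fin n → Fin (n + 1) → ℂ) → (Fin k → Fin (n + 1) → ℂ) → EE k n × (Fin n → ℂ) :=
    fun p Cc => ((Fin.cons (p.1 0) (fun i => Cc i 0),
      Fin.cons (fun j => p.1 j.succ) (fun i j => Cc i j.succ),
        fun i j => p.2 i j.succ), fun i => p.2 i 0)
  have hT1 : Measurable (Function.uncurry T1) := by
    refine Measurable.prodMk (Measurable.prodMk ?_ (Measurable.prodMk ?_ ?_)) ?_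
    · exact meas_cons (by fun_prop) (by fun_prop)
    · exact meas_cons (by fun_prop) (by fun_prop)
    · fun_prop
    · fun_prop
  have hK1 : Measurable (Function.uncurry fun p Cc => κ (T1 p Cc)) := hκ.comp hT1
  have e1 := split0 (fun p => ∫⁻ Cc, κ (T1 p Cc)) hK1.lintegral_prod_right
  refine e1.trans ?_
  -- step 2
  have e2 : ∀ w : Fin (n + 1) → ℂ, ∫⁻ A', ∫⁻ Cc, κ (T1 (w, A') Cc) =
      ∫⁻ Cc, ∫⁻ A', κ (T1 (w, A') Cc) := by
    intro w
    refine lintegral_lintegral_swap (f := fun A' Cc => κ (T1 (w, A') Cc)) ?_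
    exact (hK1.comp (f := fun q : (Fin n → Fin (n + 1) → ℂ) × (Fin k → Fin (n + 1) → ℂ) => ((w, q.1), q.2))
      (by fun_prop)).aemeasurable
  rw [lintegral_congr e2]
  have hK2 : Measurable fun p : (Fin (n + 1) → ℂ) × (Fin k → Fin (n + 1) → ℂ) =>
      ∫⁻ A', κ (T1 (p.1, A') p.2) := by
    refine Measurable.lintegral_prod_right (f := fun (p : (Fin (n + 1) → ℂ) × (Fin k → Fin (n + 1) → ℂ)) A' => κ (T1 (p.1, A') p.2)) ?_
    exact hK1.comp (f := fun q : ((Fin (n + 1) → ℂ) × (Fin k → Fin (n + 1) → ℂ)) × (Fin n → Fin (n + 1) → ℂ)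
      => ((q.1.1, q.2), q.1.2)) (by fun_prop)
  rw [← split0 (fun p => ∫⁻ A', κ (T1 (p.1, A') p.2)) hK2]
  -- step 3
  let T3 : (Fin (k + 1) → ℂ) × (Fin (k + 1) → Fin n → ℂ) → ℝ≥0∞ := fun p =>
    ∫⁻ c, ∫⁻ D, κ ((p.1, p.2, D), c)
  have hT3 : Measurable T3 := by
    refine Measurable.lintegral_prod_right (f := fun (p : (Fin (k + 1) → ℂ) × (Fin (k + 1) → Fin n → ℂ)) c => ∫⁻ D, κ ((p.1, p.2, D), c)) ?_
    refine Measurable.lintegral_prod_right (f := fun (q : ((Fin (k + 1) → ℂ) × (Fin (k + 1) → Fin n → ℂ)) × (Fin n → ℂ)) D => κ ((q.1.1, q.1.2, D), q.2)) ?_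
    exact hκ.comp (by fun_prop)
  have e3 : ∀ N : Fin (k + 1) → Fin (n + 1) → ℂ,
      ∫⁻ A', κ (T1 (N 0, A') fun i => N i.succ) = T3 (fun i => N i 0, fun i j => N i j.succ) := by
    intro N
    have h1 : (Fin.cons (N 0 0) (fun i : Fin k => N i.succ 0) : Fin (k + 1) → ℂ) = fun i => N i 0 := by
      funext i; refine Fin.cases ?_ (fun i => ?_) i <;> simp
    have h2 : (Fin.cons (fun j : Fin n => N 0 j.succ) (fun (i : Fin k) (j : Fin n) => N i.succ j.succ) : Fin (k + 1) → Fin n → ℂ) = fun i j => N i j.succ := by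
      funext i; refine Fin.cases ?_ (fun i => ?_) i <;> simp
    simp only [T1, T3, h1, h2]
    exact splitcol (fun q => κ ((fun i => N i 0, fun i j => N i j.succ, q.2), q.1))
      (hκ.comp (by fun_prop))
  rw [lintegral_congr e3, splitcol T3 hT3]
  have hm4 : Measurable fun e : EE k n => ∫⁻ c, κ (e, c) :=
    Measurable.lintegral_prod_right (f := fun (e : EE k n) c => κ (e, c)) hκ
  have : SigmaFinite (volume : Measure ((Fin (k + 1) → Fin n → ℂ) × (Fin n → Fin n → ℂ))) :=
    sfx inferInstance inferInstance
  rw [lint_prod (α := Fin (k + 1) → ℂ) (β := (Fin (k + 1) → Fin n → ℂ) × (Fin n → Fin n → ℂ)) _ hm4]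
  refine lintegral_congr fun x => ?_
  have hm5 : Measurable fun e : (Fin (k + 1) → Fin n → ℂ) × (Fin n → Fin n → ℂ) => ∫⁻ c, κ ((x, e), c) :=
    hm4.comp (f := fun e => ((x, e) : EE k n)) (by fun_prop)
  rw [lint_prod (α := Fin (k + 1) → Fin n → ℂ) (β := Fin n → Fin n → ℂ) _ hm5]
  refine lintegral_congr fun Z => ?_
  refine lintegral_lintegral_swap (f := fun c D => κ ((x, Z, D), c)) ?_
  exact (hκ.comp (f := fun q : (Fin n → ℂ) × (Fin n → Fin n → ℂ) => ((x, Z, q.2), q.1)) (by fun_prop)).aemeasurable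


/-- squared Vandermonde -/
def vdr {n : ℕ} (ζ : Fin n → ℂ) : ℝ :=
  ∏ p ∈ Finset.univ.filter (fun p : Fin n × Fin n => p.1 < p.2), ‖ζ p.1 - ζ p.2‖ ^ 2

lemma vdr_nonneg {n : ℕ} (ζ : Fin n → ℂ) : 0 ≤ vdr ζ :=
  Finset.prod_nonneg fun _ _ => by positivity

lemma vdr_cont (n : ℕ) : Continuous (vdr (n := n)) := by
  unfold vdr; fun_prop

lemma vdr_cons {n : ℕ} (z : ℂ) (ζ : Fin n → ℂ) :
    vdr (Fin.cons z ζ) = (∏ i, ‖z - ζ i‖ ^ 2) * vdr ζ := by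
  simp only [vdr, Finset.prod_filter, Fintype.prod_prod_type, Fin.prod_univ_succ]
  simp

lemma vdr_det {n : ℕ} (ζ : Fin n → ℂ) : vdr ζ = ‖(vandermonde ζ).det‖ ^ 2 := by
  rw [det_vandermonde, norm_prod]
  simp only [norm_prod, ← Finset.prod_pow, vdr, Finset.prod_filter, Fintype.prod_prod_type]
  refine Finset.prod_congr rfl fun i _ => ?_
  rw [← Finset.prod_filter]
  have : (Finset.univ.filter fun a => i < a) = Finset.Ioi i := by ext; simp
  rw [this]
  refine Finset.prod_congr rfl fun j _ => ?_
  rw [norm_sub_rev]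

lemma vdr_perm {n : ℕ} (ζ : Fin n → ℂ) (σ : Equiv.Perm (Fin n)) : vdr (ζ ∘ σ) = vdr ζ := by
  rw [vdr_det, vdr_det]
  have : vandermonde (ζ ∘ σ) = (vandermonde ζ).submatrix σ id := by
    ext i j; simp [vandermonde_apply]
  rw [this, det_permute, norm_mul]
  have : ‖((Equiv.Perm.sign σ : ℤ) : ℂ)‖ = 1 := by
    rcases Int.units_eq_one_or (Equiv.Perm.sign σ) with h | h <;> simp [h]
  rw [this, one_mul]

lemma vdr_zero {n : ℕ} (ζ : Fin n → ℂ) {i j : Fin n} (hij : i ≠ j) (h : ζ i = ζ j) : vdr ζ = 0 := by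
  rcases lt_or_gt_of_ne hij with h' | h'
  · exact Finset.prod_eq_zero (i := (i, j)) (by simp [h']) (by simp [h])
  · exact Finset.prod_eq_zero (i := (j, i)) (by simp [h']) (by simp [h])

/-- radial weight integrated over the remaining coordinates -/
def om (t k : ℕ) (z : ℂ) : ℝ≥0∞ := ∫⁻ γ : Fin k → ℂ, Rw t (‖z‖ ^ 2 + ∑ i, ‖γ i‖ ^ 2)

lemma om_meas_aux (t k : ℕ) : Measurable fun p : ℂ × (Fin k → ℂ) => Rw t (‖p.1‖ ^ 2 + ∑ i, ‖p.2 i‖ ^ 2) :=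
  (Rw_meas t).comp (by fun_prop)

lemma om_meas (t k : ℕ) : Measurable (om t k) :=
  Measurable.lintegral_prod_right (f := fun (z : ℂ) (γ : Fin k → ℂ) => Rw t (‖z‖ ^ 2 + ∑ i, ‖γ i‖ ^ 2))
    (om_meas_aux t k)

/-- Symmetrization. -/
lemma symmz {n : ℕ} (F : (Fin (n + 1) → ℂ) → ℝ≥0∞) (hF : Measurable F)
    (hs : ∀ η (σ : Equiv.Perm (Fin (n + 1))), F (η ∘ σ) = F η)
    (h0 : ∀ η i j, i ≠ j → η i = η j → F η = 0) :
    ∫⁻ η, F η = (n + 1 : ℕ) * ∫⁻ η, Set.indicator {η | ∀ i, lexle (η 0) (η i)} F η := by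
  classical
  have hS : ∀ j : Fin (n + 1), MeasurableSet {η : Fin (n + 1) → ℂ | ∀ i, lexle (η j) (η i)} := by
    intro j
    have : {η : Fin (n + 1) → ℂ | ∀ i, lexle (η j) (η i)} =
        ⋂ i, (fun η : Fin (n + 1) → ℂ => (η j, η i)) ⁻¹' {p : ℂ × ℂ | lexle p.1 p.2} := by
      ext; simp
    rw [this]
    exact MeasurableSet.iInter fun i => measurableSet_lexle.preimage (by fun_prop)
  have h1 : ∀ η, F η = ∑ j, Set.indicator {η | ∀ i, lexle (η j) (η i)} F η := by
    intro η
    obtain ⟨z, hz, hmin⟩ := exists_lexmin (Finset.univ.image η) (by simp)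
    obtain ⟨j, -, rfl⟩ := Finset.mem_image.mp hz
    have hj : ∀ i, lexle (η j) (η i) := fun i => hmin _ (by simp)
    rw [Finset.sum_eq_single j]
    · rw [Set.indicator_of_mem]; exact hj
    · intro i _ hij
      by_cases hi : ∀ l, lexle (η i) (η l)
      · rw [Set.indicator_apply, h0 η i j hij (lexle_antisymm (hi j) (hj i)), ite_self]
      · rw [Set.indicator_of_notMem]; exact hi
    · simp
  have h2 : ∀ j : Fin (n + 1), ∫⁻ η, Set.indicator {η | ∀ i, lexle (η j) (η i)} F η =
      ∫⁻ η, Set.indicator {η | ∀ i, lexle (η 0) (η i)} F η := by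
    intro j
    have hp := volume_measurePreserving_piCongrLeft (fun _ : Fin (n + 1) => ℂ) (Equiv.swap 0 j)
    rw [← hp.lintegral_comp (hF.indicator (hS 0))]
    refine lintegral_congr fun η => ?_
    have e : (MeasurableEquiv.piCongrLeft (fun _ : Fin (n + 1) => ℂ) (Equiv.swap 0 j)) η =
        η ∘ (Equiv.swap 0 j) := by
      funext i
      have := MeasurableEquiv.piCongrLeft_apply_apply (β := fun _ : Fin (n + 1) => ℂ) (Equiv.swap 0 j) η (Equiv.swap 0 j i)
      rw [Equiv.swap_apply_self] at this
      exact this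
    rw [e, Set.indicator_apply, Set.indicator_apply, hs]
    congr 1
    simp only [Set.mem_setOf_eq, Function.comp_apply, Equiv.swap_apply_left, eq_iff_iff]
    exact ((Equiv.swap 0 j).forall_congr_right (q := fun i => lexle (η j) (η i))).symm
  rw [lintegral_congr h1, lintegral_finsetSum _ fun j _ => hF.indicator (hS j)]
  simp [h2]

/-- the observable after deflation -/
def hfun {n : ℕ} (g : (Fin (n + 1) → ℂ) → ℝ≥0∞) : ℂ × (Fin n → ℂ) → ℝ≥0∞ :=
  (good n).indicator fun p => ENNReal.ofReal (‖(mp p.2).eval p.1‖ ^ 2) * g (cf ((X - C p.1) * mp p.2))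

lemma hfun_meas {n : ℕ} (g : (Fin (n + 1) → ℂ) → ℝ≥0∞) (hg : Measurable g) : Measurable (hfun g) := by
  refine Measurable.indicator (Measurable.mul ?_ (hg.comp ?_)) (measurableSet_good n)
  · simp only [mp, eval_add, eval_pow, eval_X, eval_finsetSum, eval_mul, eval_C]
    fun_prop
  · exact (CC.cf (((CC.const X).sub (CC.C continuous_fst)).mul (CC.mp continuous_snd))).measurable

/-- the integrated statement, before symmetrization -/
lemma deflate (k n t : ℕ) : ∃ J : ℝ≥0∞, ∀ g : (Fin (n + 1) → ℂ) → ℝ≥0∞, Measurable g →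
    ∫⁻ A : Fin (n + 1) → Fin (n + 1) → ℂ, ∫⁻ Cc : Fin k → Fin (n + 1) → ℂ,
      g (cf (of A).charpoly) * ENNReal.ofReal (Wr t (fromRows (of Cc) (of A))) =
    J * ∫⁻ e : EE k n, hfun g (e.1 0, cf (of e.2.2).charpoly) *
        ENNReal.ofReal (Wr t (Gm e.1 e.2.1 0 e.2.2)) := by
  classical
  obtain ⟨J, hJ⟩ := step_c k n t
  refine ⟨J, fun g hg => ?_⟩
  rw [← hJ _ (hfun_meas g hg)]
  have hκ : Measurable fun q : EE k n × (Fin n → ℂ) =>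
      g (cf (Abm (q.1.1 0) (q.1.2.1 0) q.2 q.1.2.2).charpoly) *
        ENNReal.ofReal (Wr t (Gm q.1.1 q.1.2.1 q.2 q.1.2.2)) := by
    refine Measurable.mul (hg.comp ?_) (Measurable.ennreal_ofReal ?_)
    · refine (CC.cf (CC.charpoly ?_)).measurable
      intro i j
      rcases i with i | i <;> rcases j with j | j <;> simp [Abm] <;> fun_prop
    · exact (Wr_cont t fun i j => continuous_Gm (by fun_prop) (by fun_prop)
        (by fun_prop) (by fun_prop) i j).measurable
  have h1 := split_all _ hκ
  simp only [Fin.cons_zero] at h1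
  simp only [reidx_charpoly, reidx_Wr]
  rw [h1]
  refine lintegral_congr_ae ?_
  filter_upwards [ae_obs k n] with e he
  rw [Phi_cov (e.1 0) (e.2.1 0) e.2.2 he, ← lintegral_indicator (measurableSet_Sdom _ _ _)]
  refine lintegral_congr fun y => ?_
  have hmc : mp (cf (Bm (e.2.1 0) e.2.2 y).charpoly : Fin n → ℂ) = (Bm (e.2.1 0) e.2.2 y).charpoly :=
    mp_cf (charpoly_monic _) (by simp)
  simp only [Hin, hfun, Set.indicator_apply, hmc]
  by_cases hy : y ∈ Sdom (e.1 0) (e.2.1 0) e.2.2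
  · have hy' : (zet (e.1 0) (e.2.1 0) y, cf (Bm (e.2.1 0) e.2.2 y).charpoly) ∈ good n := hy
    rw [if_pos hy, if_pos hy', charpoly_Abm, mul_assoc]
  · have hy' : (zet (e.1 0) (e.2.1 0) y, cf (Bm (e.2.1 0) e.2.2 y).charpoly) ∉ good n := hy
    rw [if_neg hy, if_neg hy', zero_mul]


/-- eigenvalue-side weight -/
def ew (t k : ℕ) {n : ℕ} (ζ : Fin n → ℂ) : ℝ≥0∞ := ENNReal.ofReal (vdr ζ) * ∏ i, om t k (ζ i)

lemma ew_meas (t k n : ℕ) : Measurable (ew t k (n := n)) := by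
  unfold ew
  refine Measurable.mul (vdr_cont n).measurable.ennreal_ofReal ?_
  exact Finset.measurable_prod _ fun i _ => (om_meas t k).comp (measurable_pi_apply i)

lemma rp_cons {n : ℕ} (z : ℂ) (ζ : Fin n → ℂ) : rp (Fin.cons z ζ) = (X - C z) * rp ζ := by
  simp [rp, Fin.prod_univ_succ]

lemma rp_comp_perm {n : ℕ} (ζ : Fin n → ℂ) (σ : Equiv.Perm (Fin n)) : rp (ζ ∘ σ) = rp ζ := by
  simp only [rp, Function.comp_apply]
  exact Equiv.prod_comp σ (fun i => X - C (ζ i))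

set_option maxHeartbeats 2000000 in
lemma PP_step (k n t : ℕ) (c : ℝ≥0∞) (ih : ∀ g : (Fin n → ℂ) → ℝ≥0∞, Measurable g →
    ∫⁻ A : Fin n → Fin n → ℂ, ∫⁻ Cc : Fin k → Fin n → ℂ,
      g (cf (of A).charpoly) * ENNReal.ofReal (Wr t (fromRows (of Cc) (of A))) =
      c * ∫⁻ ζ : Fin n → ℂ, g (cf (rp ζ)) * ew t k ζ) :
    ∃ c' : ℝ≥0∞, ∀ g : (Fin (n + 1) → ℂ) → ℝ≥0∞, Measurable g →
    ∫⁻ A : Fin (n + 1) → Fin (n + 1) → ℂ, ∫⁻ Cc : Fin k → Fin (n + 1) → ℂ,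
      g (cf (of A).charpoly) * ENNReal.ofReal (Wr t (fromRows (of Cc) (of A))) =
      c' * ∫⁻ ζ : Fin (n + 1) → ℂ, g (cf (rp ζ)) * ew t k ζ := by
  classical
  obtain ⟨J, hJ⟩ := deflate k n t
  refine ⟨J * (kap t n * c * ((n + 1 : ℕ) : ℝ≥0∞)⁻¹), fun g hg => ?_⟩
  rw [hJ g hg, mul_assoc]
  congr 1
  have hh := hfun_meas g hg
  -- Tonelli
  have hcD : Continuous fun D : Fin n → Fin n → ℂ => (cf (of D).charpoly : Fin n → ℂ) :=
    CC.cf (CC.charpoly fun i j => by simp; fun_prop)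
  have hW : Measurable fun e : EE k n => ENNReal.ofReal (Wr t (Gm e.1 e.2.1 0 e.2.2)) :=
    (Wr_cont t fun i j => continuous_Gm (by fun_prop) (by fun_prop)
        (by fun_prop) (by fun_prop) i j).measurable.ennreal_ofReal
  have hm1 : Measurable fun e : EE k n => hfun g (e.1 0, cf (of e.2.2).charpoly) *
        ENNReal.ofReal (Wr t (Gm e.1 e.2.1 0 e.2.2)) := by
    refine Measurable.mul (hh.comp ?_) hW
    exact Measurable.prodMk (by fun_prop) (hcD.measurable.comp (by fun_prop))
  have : SigmaFinite (volume : Measure ((Fin (k + 1) → Fin n → ℂ) × (Fin n → Fin n → ℂ))) :=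
    sfx inferInstance inferInstance
  rw [lint_prod (α := Fin (k + 1) → ℂ) (β := (Fin (k + 1) → Fin n → ℂ) × (Fin n → Fin n → ℂ)) _ hm1]
  have hR : Measurable fun x : Fin (k + 1) → ℂ => Rw t (∑ i, ‖x i‖ ^ 2) :=
    (Rw_meas t).comp (by fun_prop)
  have e1 : ∀ x : Fin (k + 1) → ℂ, ∫⁻ q : (Fin (k + 1) → Fin n → ℂ) × (Fin n → Fin n → ℂ),
      hfun g (x 0, cf (of q.2).charpoly) * ENNReal.ofReal (Wr t (Gm x q.1 0 q.2)) =
      kap t n * c * (Rw t (∑ i, ‖x i‖ ^ 2) * ∫⁻ ζ : Fin n → ℂ, hfun g (x 0, cf (rp ζ)) * ew t k ζ) := by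
    intro x
    have hm2 : Measurable fun q : (Fin (k + 1) → Fin n → ℂ) × (Fin n → Fin n → ℂ) =>
      hfun g (x 0, cf (of q.2).charpoly) * ENNReal.ofReal (Wr t (Gm x q.1 0 q.2)) :=
      hm1.comp (f := fun q => ((x, q) : EE k n)) (by fun_prop)
    have hhx : Measurable fun q : Fin n → ℂ => hfun g (x 0, q) := hh.comp (by fun_prop)
    rw [lint_prod (α := Fin (k + 1) → Fin n → ℂ) (β := Fin n → Fin n → ℂ) _ hm2,
      lintegral_lintegral_swap (f := fun Z D => hfun g (x 0, cf (of D).charpoly) *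
        ENNReal.ofReal (Wr t (Gm x Z 0 D))) hm2.aemeasurable]
    have e2 : ∀ D : Fin n → Fin n → ℂ, ∫⁻ Z : Fin (k + 1) → Fin n → ℂ,
        hfun g (x 0, cf (of D).charpoly) * ENNReal.ofReal (Wr t (Gm x Z 0 D)) =
        Rw t (∑ i, ‖x i‖ ^ 2) * kap t n * ∫⁻ Cc : Fin k → Fin n → ℂ,
          hfun g (x 0, cf (of D).charpoly) * ENNReal.ofReal (Wr t (fromRows (of Cc) (of D))) := by
      intro D
      have hW1 : Measurable fun Z : Fin (k + 1) → Fin n → ℂ => ENNReal.ofReal (Wr t (Gm x Z 0 D)) :=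
        hW.comp (f := fun Z => ((x, Z, D) : EE k n)) (by fun_prop)
      have hW2 : Measurable fun Cc : Fin k → Fin n → ℂ =>
          ENNReal.ofReal (Wr t (fromRows (of Cc) (of D))) := by
        refine (Wr_cont t fun i j => ?_).measurable.ennreal_ofReal
        rcases i with i | i <;> simp <;> fun_prop
      rw [lintegral_const_mul _ hW1, int_Z, lintegral_const_mul _ hW2]
      ring
    rw [lintegral_congr e2, lintegral_const_mul, ih _ hhx]
    · ring
    · refine Measurable.lintegral_prod_right (f := fun (D : Fin n → Fin n → ℂ) (Cc : Fin k → Fin n → ℂ) =>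
        hfun g (x 0, cf (of D).charpoly) * ENNReal.ofReal (Wr t (fromRows (of Cc) (of D)))) ?_
      refine Measurable.mul (hhx.comp (hcD.measurable.comp measurable_fst)) ?_
      refine (Wr_cont t fun i j => ?_).measurable.ennreal_ofReal
      rcases i with i | i <;> simp <;> fun_prop
  rw [lintegral_congr e1]
  have hI : Measurable fun z : ℂ => ∫⁻ ζ : Fin n → ℂ, hfun g (z, cf (rp ζ)) * ew t k ζ := by
    refine Measurable.lintegral_prod_right (f := fun (z : ℂ) (ζ : Fin n → ℂ) =>
      hfun g (z, cf (rp ζ)) * ew t k ζ) ?_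
    refine Measurable.mul (hh.comp ?_) ((ew_meas t k n).comp measurable_snd)
    exact measurable_fst.prodMk ((cfrp_cont n).measurable.comp measurable_snd)
  have hmx : Measurable fun x : Fin (k + 1) → ℂ => Rw t (∑ i, ‖x i‖ ^ 2) *
      ∫⁻ ζ : Fin n → ℂ, hfun g (x 0, cf (rp ζ)) * ew t k ζ :=
    hR.mul (hI.comp (measurable_pi_apply 0))
  rw [lintegral_const_mul _ hmx, mul_assoc (kap t n * c)]
  congr 1
  -- split x
  have hm3 : Measurable fun p : ℂ × (Fin k → ℂ) => Rw t (‖p.1‖ ^ 2 + ∑ i, ‖p.2 i‖ ^ 2) *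
      ∫⁻ ζ : Fin n → ℂ, hfun g (p.1, cf (rp ζ)) * ew t k ζ :=
    (om_meas_aux t k).mul (hI.comp measurable_fst)
  have e3 := split0 _ hm3
  have e3' : ∀ x : Fin (k + 1) → ℂ, Rw t (∑ i, ‖x i‖ ^ 2) *
      ∫⁻ ζ : Fin n → ℂ, hfun g (x 0, cf (rp ζ)) * ew t k ζ =
      Rw t (‖x 0‖ ^ 2 + ∑ i : Fin k, ‖x i.succ‖ ^ 2) *
      ∫⁻ ζ : Fin n → ℂ, hfun g (x 0, cf (rp ζ)) * ew t k ζ := by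
    intro x; rw [Fin.sum_univ_succ]
  rw [lintegral_congr e3']
  refine e3.trans ?_
  have e4 : ∀ z : ℂ, ∫⁻ γ : Fin k → ℂ, Rw t (‖z‖ ^ 2 + ∑ i, ‖γ i‖ ^ 2) *
      ∫⁻ ζ : Fin n → ℂ, hfun g (z, cf (rp ζ)) * ew t k ζ =
      ∫⁻ ζ : Fin n → ℂ, om t k z * (hfun g (z, cf (rp ζ)) * ew t k ζ) := by
    intro z
    have hz : Measurable fun γ : Fin k → ℂ => Rw t (‖z‖ ^ 2 + ∑ i, ‖γ i‖ ^ 2) :=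
      (Rw_meas t).comp (by fun_prop)
    rw [lintegral_mul_const _ hz, lintegral_const_mul]
    · rfl
    · exact (hh.comp (measurable_const.prodMk (cfrp_cont n).measurable)).mul (ew_meas t k n)
  rw [lintegral_congr e4]
  have hm5 : Measurable fun p : ℂ × (Fin n → ℂ) => om t k p.1 * (hfun g (p.1, cf (rp p.2)) * ew t k p.2) := by
    refine ((om_meas t k).comp measurable_fst).mul (Measurable.mul (hh.comp ?_) ((ew_meas t k n).comp measurable_snd))
    exact measurable_fst.prodMk ((cfrp_cont n).measurable.comp measurable_snd)
  rw [← split0 _ hm5]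
  have hFm : Measurable fun η : Fin (n + 1) → ℂ => g (cf (rp η)) * ew t k η :=
    (hg.comp (cfrp_cont (n + 1)).measurable).mul (ew_meas t k (n + 1))
  have h6 := symmz (fun η : Fin (n + 1) → ℂ => g (cf (rp η)) * ew t k η) hFm
    (by
      intro η σ
      simp only [rp_comp_perm, ew, vdr_perm, Function.comp_apply]
      rw [Equiv.prod_comp σ (fun i => om t k (η i))])
    (by
      intro η i j hij h
      simp [ew, vdr_zero η hij h])
  rw [h6, ← mul_assoc, ENNReal.inv_mul_cancel (by simp) (by simp), one_mul]
  refine lintegral_congr fun η => ?_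
  obtain ⟨z, ζ, rfl⟩ : ∃ z ζ, η = Fin.cons z ζ := ⟨η 0, Fin.tail η, (Fin.cons_self_tail η).symm⟩
  simp only [Fin.cons_zero, Fin.cons_succ, hfun, Set.indicator_apply, good_rp, Set.mem_setOf_eq]
  have hiff : (∀ i, lexle z ((Fin.cons z ζ : Fin (n + 1) → ℂ) i)) ↔ ∀ i, lexle z (ζ i) := by
    rw [Fin.forall_fin_succ]; simp [lexle_refl]
  simp only [hiff]
  split_ifs with hc
  · rw [mp_cf (rp_monic ζ) (rp_natDegree ζ), rp_cons, rp_eval, ew, ew, vdr_cons, norm_prod,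
      ← Finset.prod_pow, ENNReal.ofReal_mul (by positivity), Fin.prod_univ_succ]
    simp only [Fin.cons_zero, Fin.cons_succ]
    ring
  · simp

/-- The eigenvalue law for the weighted Ginibre-type ensemble. -/
lemma PP (k t n : ℕ) : ∃ c : ℝ≥0∞, ∀ g : (Fin n → ℂ) → ℝ≥0∞, Measurable g →
    ∫⁻ A : Fin n → Fin n → ℂ, ∫⁻ Cc : Fin k → Fin n → ℂ,
      g (cf (of A).charpoly) * ENNReal.ofReal (Wr t (fromRows (of Cc) (of A))) =
      c * ∫⁻ ζ : Fin n → ℂ, g (cf (rp ζ)) * ew t k ζ := by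
  induction n with
  | zero =>
    refine ⟨1, fun g hg => ?_⟩
    have hu : ∀ x y : Fin 0 → ℂ, x = y := fun x y => Subsingleton.elim _ _
    have hW : ∀ (A : Fin 0 → Fin 0 → ℂ) (Cc : Fin k → Fin 0 → ℂ), 
        Wr t (fromRows (of Cc) (of A)) = 1 := by
      intro A Cc
      simp [Wr, sqn]
    have he : ∀ ζ : Fin 0 → ℂ, ew t k ζ = 1 := by
      intro ζ; simp [ew, vdr]
    have hv : volume (Set.univ : Set (Fin k → Fin 0 → ℂ)) = 1 := by
      rw [volume_pi, Measure.pi_univ]; simp [volume_pi]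
    have hv2 : volume (Set.univ : Set (Fin 0 → Fin 0 → ℂ)) = 1 := by
      rw [volume_pi, Measure.pi_univ]; simp
    have hv3 : volume (Set.univ : Set (Fin 0 → ℂ)) = 1 := by
      rw [volume_pi, Measure.pi_univ]; simp
    have e1 : ∀ p : ℂ[X], g (cf p) = g 0 := fun p => congrArg g (hu _ _)
    simp only [hW, he, e1, lintegral_const, hv, hv2, hv3]
    simp
  | succ n ih =>
    obtain ⟨c, hc⟩ := ih
    exact PP_step k n t c hc


/-- Laplace concentration. -/
lemma laplace {X : Type*} [MeasurableSpace X] (μ : Measure X) (w Ψ : X → ℝ) (L : ℝ)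
    (hw0 : ∀ x, 0 ≤ w x) (hw1 : ∀ x, w x ≤ 1) (hwm : Measurable w) (hwi : Integrable w μ)
    (hΨm : Measurable Ψ) (hΨi : Integrable (fun x => Ψ x * w x) μ)
    (hloc : ∀ η > 0, ∃ δ < 1, ∀ x, δ < w x → |Ψ x - L| ≤ η)
    (hpos : ∀ δ < 1, μ {x | δ < w x} ≠ 0) :
    Tendsto (fun t : ℕ => (∫ x, Ψ x * w x ^ t ∂μ) / ∫ x, w x ^ t ∂μ) atTop (𝓝 L) := by
  have hpow : ∀ t : ℕ, 1 ≤ t → ∀ x, w x ^ t ≤ w x := fun t ht x =>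
    pow_le_of_le_one (hw0 x) (hw1 x) (by omega)
  have hi1 : ∀ t : ℕ, 1 ≤ t → Integrable (fun x => w x ^ t) μ := by
    intro t ht
    refine hwi.mono' (hwm.pow_const t).aestronglyMeasurable (ae_of_all _ fun x => ?_)
    rw [Real.norm_of_nonneg (pow_nonneg (hw0 x) t)]
    exact hpow t ht x
  have hi2 : ∀ t : ℕ, 1 ≤ t → Integrable (fun x => Ψ x * w x ^ t) μ := by
    intro t ht
    refine hΨi.mono (hΨm.mul (hwm.pow_const t)).aestronglyMeasurable (ae_of_all _ fun x => ?_)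
    rw [norm_mul, norm_mul, Real.norm_of_nonneg (pow_nonneg (hw0 x) t), Real.norm_of_nonneg (hw0 x)]
    exact mul_le_mul_of_nonneg_left (hpow t ht x) (norm_nonneg _)
  have hi3 : Integrable (fun x => |Ψ x - L| * w x) μ := by
    have := (hΨi.sub (hwi.const_mul L)).abs
    refine this.congr (ae_of_all _ fun x => ?_)
    simp only [Pi.sub_apply]
    rw [← sub_mul, abs_mul, abs_of_nonneg (hw0 x)]
  set M := ∫ x, |Ψ x - L| * w x ∂μ with hM
  have hM0 : 0 ≤ M := integral_nonneg fun x => mul_nonneg (abs_nonneg _) (hw0 x)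
  rw [Metric.tendsto_atTop]
  intro ε hε
  obtain ⟨δ0, hδ0, hl0⟩ := hloc (ε / 2) (by positivity)
  set δ := max δ0 (1 / 2) with hδ
  have hδ1 : δ < 1 := max_lt hδ0 (by norm_num)
  have hδp : 0 < δ := lt_of_lt_of_le (by norm_num) (le_max_right _ _)
  have hl : ∀ x, δ < w x → |Ψ x - L| ≤ ε / 2 := fun x hx => hl0 x ((le_max_left _ _).trans_lt hx)
  set δ' := (δ + 1) / 2 with hδ'
  have h1 : δ < δ' := by rw [hδ']; linarith
  have h2 : δ' < 1 := by rw [hδ']; linarith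
  have hδ'p : 0 < δ' := hδp.trans h1
  set S := {x | δ' < w x} with hS
  have hSm : MeasurableSet S := measurableSet_lt measurable_const hwm
  have hSf : μ S ≠ ∞ := by
    have := hwi.measure_gt_lt_top hδ'p
    exact this.ne
  set v := μ.real S with hv
  have hvp : 0 < v := ENNReal.toReal_pos (hpos δ' h2) hSf
  have hlow : ∀ t : ℕ, 1 ≤ t → δ' ^ t * v ≤ ∫ x, w x ^ t ∂μ := by
    intro t ht
    calc δ' ^ t * v = ∫ x in S, δ' ^ t ∂μ := by
          rw [setIntegral_const, smul_eq_mul, mul_comm]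
      _ ≤ ∫ x in S, w x ^ t ∂μ := by
          refine setIntegral_mono_on (integrableOn_const hSf) (hi1 t ht).integrableOn hSm ?_
          intro x hx
          exact pow_le_pow_left₀ hδ'p.le (le_of_lt hx) t
      _ ≤ ∫ x, w x ^ t ∂μ := setIntegral_le_integral (hi1 t ht)
          (ae_of_all _ fun x => pow_nonneg (hw0 x) t)
  have hup : ∀ t : ℕ, |(∫ x, Ψ x * w x ^ (t + 1) ∂μ) - L * ∫ x, w x ^ (t + 1) ∂μ| ≤
      ε / 2 * (∫ x, w x ^ (t + 1) ∂μ) + δ ^ t * M := by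
    intro t
    rw [← integral_const_mul, ← integral_sub (hi2 _ (by omega)) ((hi1 _ (by omega)).const_mul L),
      ← integral_const_mul, hM, ← integral_const_mul,
      ← integral_add ((hi1 _ (by omega)).const_mul _) (hi3.const_mul _)]
    refine abs_integral_le_integral_abs.trans ?_
    refine integral_mono (((hi2 _ (by omega)).sub ((hi1 _ (by omega)).const_mul L)).abs)
      (((hi1 _ (by omega)).const_mul _).add (hi3.const_mul _)) fun x => ?_
    have e : |Ψ x * w x ^ (t + 1) - L * w x ^ (t + 1)| = |Ψ x - L| * w x ^ (t + 1) := by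
      rw [← sub_mul, abs_mul, abs_of_nonneg (pow_nonneg (hw0 x) _)]
    simp only [e]
    rcases lt_or_ge δ (w x) with hx | hx
    · have := mul_le_mul_of_nonneg_right (hl x hx) (pow_nonneg (hw0 x) (t + 1))
      have h3 : 0 ≤ δ ^ t * (|Ψ x - L| * w x) :=
        mul_nonneg (pow_nonneg hδp.le t) (mul_nonneg (abs_nonneg _) (hw0 x))
      linarith
    · have h3 : |Ψ x - L| * w x ^ (t + 1) ≤ δ ^ t * (|Ψ x - L| * w x) := by
        have h4 := pow_le_pow_left₀ (hw0 x) hx t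
        have h5 := mul_le_mul_of_nonneg_right h4 (mul_nonneg (abs_nonneg (Ψ x - L)) (hw0 x))
        calc |Ψ x - L| * w x ^ (t + 1) = w x ^ t * (|Ψ x - L| * w x) := by ring
          _ ≤ _ := h5
      have h6 : 0 ≤ ε / 2 * w x ^ (t + 1) := mul_nonneg (by positivity) (pow_nonneg (hw0 x) _)
      linarith
  have hlim : Tendsto (fun t : ℕ => (δ / δ') ^ t * (M / (δ' * v))) atTop (𝓝 (0 * (M / (δ' * v)))) :=
    (tendsto_pow_atTop_nhds_zero_of_lt_one (by positivity) ((div_lt_one hδ'p).mpr h1)).mul_const _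
  rw [zero_mul] at hlim
  obtain ⟨N, hN⟩ := (Metric.tendsto_atTop.mp hlim) (ε / 2) (by positivity)
  refine ⟨N + 1, fun t ht => ?_⟩
  obtain ⟨s, rfl⟩ : ∃ s, t = s + 1 := ⟨t - 1, by omega⟩
  have hd := hlow (s + 1) (by omega)
  have hdp : 0 < ∫ x, w x ^ (s + 1) ∂μ := lt_of_lt_of_le (by positivity) hd
  set I := ∫ x, w x ^ (s + 1) ∂μ with hI
  have h7 := hup s
  have h8 := hN s (by omega)
  rw [Real.dist_eq, sub_zero, abs_of_nonneg (by positivity)] at h8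
  have h9 : δ ^ s * M < ε / 2 * I := by
    have h10 : δ ^ s * M = (δ / δ') ^ s * (M / (δ' * v)) * (δ' ^ (s + 1) * v) := by
      have : δ' ^ s ≠ 0 := by positivity
      rw [div_pow]
      generalize δ' = d at *
      field_simp
      try ring
    rw [h10]
    calc _ < ε / 2 * (δ' ^ (s + 1) * v) := mul_lt_mul_of_pos_right h8 (by positivity)
      _ ≤ _ := mul_le_mul_of_nonneg_left hd (by positivity)
  rw [Real.dist_eq, div_sub' hdp.ne', abs_div, abs_of_pos hdp, div_lt_iff₀ hdp]
  rw [mul_comm I L]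
  linarith

/-- Topological helper. -/
lemma top_loc {X : Type*} [TopologicalSpace X] (w : X → ℝ) (hw : Continuous w) (hw1 : ∀ x, w x ≤ 1)
    (hK : IsCompact {x | 1 / 2 ≤ w x}) (Ψ : X → ℝ) (L : ℝ)
    (hΨ : ∀ x, w x = 1 → ContinuousAt Ψ x ∧ Ψ x = L) :
    ∀ η > 0, ∃ δ < 1, ∀ x, δ < w x → |Ψ x - L| ≤ η := by
  intro η hη
  set U := interior {x | |Ψ x - L| ≤ η} with hU
  have hsub : ∀ x, w x = 1 → x ∈ U := by
    intro x hx
    obtain ⟨h1, h2⟩ := hΨ x hx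
    rw [hU, mem_interior_iff_mem_nhds]
    have := h1 (Metric.closedBall_mem_nhds (Ψ x) hη)
    rw [h2] at this
    filter_upwards [this] with y hy
    simpa [Real.dist_eq] using hy
  have hUs : ∀ x, x ∈ U → |Ψ x - L| ≤ η := by
    intro x hx
    have h5 : x ∈ {x | |Ψ x - L| ≤ η} := interior_subset hx
    exact h5
  have hKU : IsCompact ({x | 1 / 2 ≤ w x} \ U) := hK.diff isOpen_interior
  rcases ({x | 1 / 2 ≤ w x} \ U).eq_empty_or_nonempty with he | hne
  · refine ⟨1 / 2, by norm_num, fun x hx => ?_⟩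
    by_contra hc
    have : x ∈ {x | 1 / 2 ≤ w x} \ U := ⟨le_of_lt hx, fun h => hc (hUs x h)⟩
    rw [he] at this
    exact this
  · obtain ⟨y, hy, hmax⟩ := hKU.exists_isMaxOn hne hw.continuousOn
    have hy1 : w y < 1 := lt_of_le_of_ne (hw1 y) fun h => hy.2 (hsub y h)
    refine ⟨max (1 / 2) (w y), max_lt (by norm_num) hy1, fun x hx => ?_⟩
    by_contra hc
    have h3 : x ∈ {x | 1 / 2 ≤ w x} \ U :=
      ⟨((le_max_left _ _).trans_lt hx).le, fun h => hc (hUs x h)⟩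
    have h4 : w x ≤ w y := hmax h3
    exact absurd ((le_max_right _ _).trans_lt hx) (not_lt.mpr h4)


/-- normalized weight -/
def WW {ι κ : Type*} [Fintype ι] [Fintype κ] [DecidableEq κ] (G : Matrix ι κ ℂ) : ℝ :=
  Real.exp (Fintype.card κ) * Wr 1 G

lemma xexp_le_one (x : ℝ) : x * Real.exp (1 - x) ≤ 1 := by
  have h := Real.add_one_le_exp (x - 1)
  have h2 : Real.exp (x - 1) * Real.exp (1 - x) = 1 := by rw [← Real.exp_add]; simp
  nlinarith [Real.exp_pos (1 - x)]

lemma xexp_eq_one {x : ℝ} (h : x * Real.exp (1 - x) = 1) : x = 1 := by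
  by_contra hx
  have h1 := Real.add_one_lt_exp (x := x - 1) (sub_ne_zero.mpr hx)
  have h2 : Real.exp (x - 1) * Real.exp (1 - x) = 1 := by rw [← Real.exp_add]; simp
  nlinarith [Real.exp_pos (1 - x)]

lemma xexp_le (x : ℝ) : x * Real.exp (1 - x) ≤ 2 * Real.exp (-(x / 2)) := by
  have h := Real.add_one_le_exp (x / 2 - 1)
  have h2 : Real.exp (x / 2 - 1) * Real.exp (1 - x) = Real.exp (-(x / 2)) := by
    rw [← Real.exp_add]; congr 1; ring
  nlinarith [Real.exp_pos (1 - x)]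

section
variable {ι κ : Type*} [Fintype ι] [Fintype κ] [DecidableEq κ]

lemma WW_nonneg (G : Matrix ι κ ℂ) : 0 ≤ WW G := mul_nonneg (Real.exp_pos _).le (Wr_nonneg _ _)

lemma WW_pow (t : ℕ) (G : Matrix ι κ ℂ) :
    WW G ^ t = Real.exp (Fintype.card κ * t) * Wr t G := by
  simp only [WW, Wr, mul_pow, pow_one, ← Real.exp_nat_mul]
  congr 2
  · ring
  · congr 1; push_cast; ring

open scoped ComplexOrder in
lemma WW_eig (G : Matrix ι κ ℂ) : ∃ l : κ → ℝ, (∀ i, 0 ≤ l i) ∧ WW G = ∏ i, l i * Real.exp (1 - l i) ∧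
    sqn G = ∑ i, l i ∧ ((∀ i, l i = 1) → Gᴴ * G = 1) := by
  have hH : (Gᴴ * G).IsHermitian := isHermitian_conjTranspose_mul_self G
  have hP : (Gᴴ * G).PosSemidef := posSemidef_conjTranspose_mul_self G
  have hn : ∀ i, 0 ≤ hH.eigenvalues i := fun i => hP.eigenvalues_nonneg i
  have hs : sqn G = ∑ i, hH.eigenvalues i := by
    have := sqn_trace G
    rw [hH.trace_eq_sum_eigenvalues] at this
    apply Complex.ofReal_injective
    rw [this]; push_cast; rfl
  refine ⟨hH.eigenvalues, hn, ?_, hs, ?_⟩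
  · rw [WW, Wr, hH.det_eq_prod_eigenvalues, hs, norm_prod, pow_one, Finset.prod_mul_distrib,
      ← Real.exp_sum, Finset.sum_sub_distrib]
    have hnn : ∀ i, ‖(hH.eigenvalues i : ℂ)‖ = hH.eigenvalues i := fun i => by
      rw [Complex.norm_real, Real.norm_of_nonneg (hn i)]
    have hnn2 : (∏ i, ‖((hH.eigenvalues i : ℝ) : ℂ)‖) = ∏ i, hH.eigenvalues i := Finset.prod_congr rfl fun i _ => hnn i
    erw [hnn2]
    simp only [Finset.sum_const, Finset.card_univ,
      nsmul_eq_mul, mul_one, Nat.cast_one, one_mul, sub_eq_add_neg, Real.exp_add]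
    ring
  · intro h
    rw [hH.spectral_theorem]
    have : (diagonal (RCLike.ofReal ∘ hH.eigenvalues) : Matrix κ κ ℂ) = 1 := by
      rw [← diagonal_one]; congr 1; ext i; simp [h]
    rw [this]; simp

lemma WW_le_one (G : Matrix ι κ ℂ) : WW G ≤ 1 := by
  obtain ⟨l, h0, h1, -, -⟩ := WW_eig G
  rw [h1]
  exact Finset.prod_le_one (fun i _ => mul_nonneg (h0 i) (Real.exp_pos _).le) fun i _ => xexp_le_one _

lemma WW_le (G : Matrix ι κ ℂ) : WW G ≤ 2 ^ Fintype.card κ * Real.exp (-(sqn G / 2)) := by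
  obtain ⟨l, h0, h1, h2, -⟩ := WW_eig G
  rw [h1, h2]
  calc _ ≤ ∏ i, 2 * Real.exp (-(l i / 2)) := Finset.prod_le_prod
        (fun i _ => mul_nonneg (h0 i) (Real.exp_pos _).le) fun i _ => xexp_le _
    _ = _ := by
      rw [Finset.prod_mul_distrib, ← Real.exp_sum, Finset.sum_neg_distrib, Finset.sum_div]; simp

lemma WW_eq_one (G : Matrix ι κ ℂ) (h : WW G = 1) : Gᴴ * G = 1 := by
  obtain ⟨l, h0, h1, h2, h3⟩ := WW_eig G
  apply h3
  intro i
  apply xexp_eq_one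
  apply le_antisymm (xexp_le_one _)
  rw [h1, ← Finset.mul_prod_erase _ _ (Finset.mem_univ i)] at h
  refine h.symm.le.trans ?_
  exact mul_le_of_le_one_right (mul_nonneg (h0 i) (Real.exp_pos _).le)
    (Finset.prod_le_one (fun i _ => mul_nonneg (h0 i) (Real.exp_pos _).le) fun i _ => xexp_le_one _)

lemma WW_one (G : Matrix ι κ ℂ) (h : Gᴴ * G = 1) : WW G = 1 := by
  have hs : sqn G = Fintype.card κ := by
    have := sqn_trace G
    rw [h, trace_one] at this
    exact_mod_cast this
  rw [WW, Wr, h, hs, det_one, ← Real.exp_zero]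
  simp [← Real.exp_add]

end

lemma WW_cont (a n : ℕ) : Continuous fun M : Fin a → Fin n → ℂ => WW (of M) :=
  continuous_const.mul (Wr_cont 1 fun i j => by simp only [of_apply]; fun_prop)

lemma sqn_cont (a n : ℕ) : Continuous fun M : Fin a → Fin n → ℂ => sqn (of M) := by
  unfold sqn; simp only [of_apply]; fun_prop

lemma WW_compact (a n : ℕ) : IsCompact {M : Fin a → Fin n → ℂ | 1 / 2 ≤ WW (of M)} := by
  apply Metric.isCompact_of_isClosed_isBounded
  · exact isClosed_le continuous_const (WW_cont a n)
  · rw [isBounded_iff_forall_norm_le]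
    refine ⟨Real.sqrt (2 * (n + 1) ), fun M hM => ?_⟩
    simp only [Set.mem_ofPred_eq] at hM
    have h1 := WW_le (of M)
    have h2 : sqn (of M) ≤ 2 * (n + 1) := by
      have h3 : (1 : ℝ) / 2 ≤ 2 ^ n * Real.exp (-(sqn (of M) / 2)) := by
        refine hM.trans (h1.trans ?_); simp
      have h4 : (2:ℝ) ^ n * Real.exp (-(sqn (of M) / 2)) ≤ Real.exp (n * Real.log 2 + -(sqn (of M) / 2)) := by
        rw [Real.exp_add, Real.exp_nat_mul, Real.exp_log (by norm_num)]
      have h5 := Real.log_le_log (by norm_num) (h3.trans h4)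
      rw [Real.log_exp, one_div, Real.log_inv] at h5
      have h6 : Real.log 2 ≤ 1 := by linarith [Real.log_two_lt_d9]
      have : (n:ℝ) * Real.log 2 ≤ n := mul_le_of_le_one_right (by positivity) h6
      linarith
    rw [pi_norm_le_iff_of_nonneg (by positivity)]
    intro i
    rw [pi_norm_le_iff_of_nonneg (by positivity)]
    intro j
    apply Real.le_sqrt_of_sq_le
    refine le_trans ?_ h2
    unfold sqn
    refine le_trans ?_ (Finset.single_le_sum (f := fun i => ∑ j, ‖of M i j‖ ^ 2)
      (fun i _ => by positivity) (Finset.mem_univ i))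
    exact Finset.single_le_sum (f := fun j => ‖of M i j‖ ^ 2) (fun i _ => by positivity) (Finset.mem_univ j)

lemma gauss_int1 : Integrable (fun z : ℂ => Real.exp (-(‖z‖ ^ 2 / 2))) := by
  have := GaussianFourier.integrable_cexp_neg_mul_sq_norm_add (V := ℂ) (b := 1 / 2) (by norm_num) 0 0
  have h2 := this.re
  refine h2.congr (ae_of_all _ fun z => ?_)
  simp only [zero_mul, add_zero]
  have : Complex.exp (-(1 / 2) * (‖z‖:ℂ) ^ 2) = ((Real.exp (-(‖z‖ ^ 2 / 2)) : ℝ) : ℂ) := by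
    push_cast; congr 1; ring
  rw [this]; exact Complex.ofReal_re _

lemma gauss_int (a n : ℕ) : Integrable fun M : Fin a → Fin n → ℂ => Real.exp (-(sqn (of M) / 2)) := by
  have h1 : Integrable fun M : Fin n → ℂ => ∏ j, Real.exp (-(‖M j‖ ^ 2 / 2)) :=
    Integrable.fintype_prod (fun _ => gauss_int1)
  have h2 : Integrable fun M : Fin a → Fin n → ℂ => ∏ i, ∏ j, Real.exp (-(‖M i j‖ ^ 2 / 2)) :=
    Integrable.fintype_prod (f := fun _ (M : Fin n → ℂ) => ∏ j, Real.exp (-(‖M j‖ ^ 2 / 2))) (fun _ => h1)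
  refine h2.congr (ae_of_all _ fun M => ?_)
  simp only [← Real.exp_sum, sqn, of_apply, Finset.sum_neg_distrib, Finset.sum_div]

lemma WW_int (a n : ℕ) : Integrable fun M : Fin a → Fin n → ℂ => WW (of M) := by
  refine ((gauss_int a n).const_mul (2 ^ n)).mono' (WW_cont a n).aestronglyMeasurable
    (ae_of_all _ fun M => ?_)
  rw [Real.norm_of_nonneg (WW_nonneg _)]
  simpa using WW_le (of M)

/-- the standard isometry -/
def I0 (n k : ℕ) : Matrix (Fin (n + k)) (Fin n) ℂ := (1 : Matrix (Fin (n+k)) (Fin (n+k)) ℂ).submatrix id (Fin.castAdd k)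

lemma I0_iso (n k : ℕ) : (I0 n k)ᴴ * I0 n k = 1 := by
  rw [I0, conjTranspose_submatrix, conjTranspose_one]
  rw [← submatrix_mul _ _ _ _ _ Function.bijective_id]
  ext i j
  simp [one_apply]

lemma WW_pos (n k : ℕ) (δ : ℝ) (hδ : δ < 1) :
    volume {M : Fin (n + k) → Fin n → ℂ | δ < WW (of M)} ≠ 0 := by
  apply ne_of_gt
  apply IsOpen.measure_pos
  · exact isOpen_lt continuous_const (WW_cont _ _)
  · refine ⟨of.symm (I0 n k), ?_⟩
    simp only [Set.mem_ofPred_eq, Equiv.apply_symm_apply]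
    rw [WW_one _ (I0_iso n k)]; exact hδ


lemma um_val (m : ℕ) (i j : Fin m) : Measurable fun U : Matrix.unitaryGroup (Fin m) ℂ => U.val i j :=
  (measurable_pi_apply j).comp ((measurable_pi_apply i).comp measurable_subtype_coe)

lemma um_mk {Y : Type*} [MeasurableSpace Y] (m : ℕ) (F : Y → Matrix.unitaryGroup (Fin m) ℂ)
    (h : ∀ i j, Measurable fun y => (F y).val i j) : Measurable F := by
  refine Measurable.subtype_mk (f := fun y => (F y).val) ?_ (h := fun y => (F y).2)
  exact measurable_pi_iff.mpr fun i => measurable_pi_iff.mpr fun j => h i j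

lemma um_inv (m : ℕ) : Measurable fun U : Matrix.unitaryGroup (Fin m) ℂ => U⁻¹ := by
  apply um_mk
  intro i j
  simp only [UnitaryGroup.inv_val, star_apply]
  exact (continuous_star.measurable).comp (um_val m j i)

lemma um_mul (m : ℕ) : Measurable fun p : Matrix.unitaryGroup (Fin m) ℂ × Matrix.unitaryGroup (Fin m) ℂ => p.1 * p.2 := by
  apply um_mk
  intro i j
  simp only [UnitaryGroup.mul_val, Matrix.mul_apply]
  exact Finset.measurable_fun_sum _ fun l _ =>
    ((um_val m i l).comp measurable_fst).mul ((um_val m l j).comp measurable_snd)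

lemma gr_left {G : Type*} [Group G] [MeasurableSpace G] (ℙ : Measure G)
    (hmul : Measurable fun p : G × G => p.1 * p.2)
    (hinv : ∀ V : G, Measure.map (fun U => V * U) ℙ = ℙ)
    (F : G → ℝ) (hF : Measurable F) (V : G) :
    ∫ U, F (V * U) ∂ℙ = ∫ U, F U ∂ℙ := by
  have hm : Measurable fun U : G => V * U :=
    hmul.comp (measurable_const.prodMk measurable_id)
  conv_rhs => rw [← hinv V]
  rw [integral_map hm.aemeasurable hF.aestronglyMeasurable]

lemma gr_inv {G : Type*} [Group G] [MeasurableSpace G] (ℙ : Measure G) [IsProbabilityMeasure ℙ]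
    (hmul : Measurable fun p : G × G => p.1 * p.2) (hi : Measurable fun p : G => p⁻¹)
    (hinv : ∀ V : G, Measure.map (fun U => V * U) ℙ = ℙ)
    (F : G → ℝ) (hF : Measurable F) (C : ℝ) (hC : ∀ U, |F U| ≤ C) :
    ∫ U, F U⁻¹ ∂ℙ = ∫ U, F U ∂ℙ := by
  have h1 : ∫ V, ∫ U, F (V⁻¹ * U) ∂ℙ ∂ℙ = ∫ U, F U ∂ℙ := by
    simp only [gr_left ℙ hmul hinv F hF]; simp
  have h2 : ∫ U, ∫ V, F (V⁻¹ * U) ∂ℙ ∂ℙ = ∫ U, F U⁻¹ ∂ℙ := by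
    have : ∀ U, ∫ V, F (V⁻¹ * U) ∂ℙ = ∫ V, F V⁻¹ ∂ℙ := by
      intro U
      rw [← gr_left ℙ hmul hinv (fun V => F V⁻¹) (hF.comp hi) U⁻¹]
      simp
    simp only [this]; simp
  rw [← h1, ← h2]
  symm
  apply integral_integral_swap
  refine Integrable.mono' (integrable_const C) ?_ (ae_of_all _ fun p => hC _)
  have h4 : Measurable fun p : G × G => (p.1⁻¹, p.2) := (hi.comp measurable_fst).prodMk measurable_snd
  have h5 : Measurable fun p : G × G => F (p.1⁻¹ * p.2) := hF.comp (hmul.comp h4)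
  exact h5.aestronglyMeasurable

lemma u_left {m : ℕ} (ℙ : Measure (Matrix.unitaryGroup (Fin m) ℂ))
    (hinv : ∀ V : Matrix.unitaryGroup (Fin m) ℂ, Measure.map (fun U => V * U) ℙ = ℙ)
    (F : Matrix.unitaryGroup (Fin m) ℂ → ℝ) (hF : Measurable F) (V) :
    ∫ U, F (V * U) ∂ℙ = ∫ U, F U ∂ℙ := gr_left ℙ (um_mul m) hinv F hF V

lemma u_inv {m : ℕ} (ℙ : Measure (Matrix.unitaryGroup (Fin m) ℂ)) [IsProbabilityMeasure ℙ]
    (hinv : ∀ V : Matrix.unitaryGroup (Fin m) ℂ, Measure.map (fun U => V * U) ℙ = ℙ)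
    (F : Matrix.unitaryGroup (Fin m) ℂ → ℝ) (hF : Measurable F) (C : ℝ) (hC : ∀ U, |F U| ≤ C) :
    ∫ U, F U⁻¹ ∂ℙ = ∫ U, F U ∂ℙ := gr_inv ℙ (um_mul m) (um_inv m) hinv F hF C hC

lemma extend_iso (n k : ℕ) (M : Matrix (Fin (n + k)) (Fin n) ℂ) (hM : Mᴴ * M = 1) :
    ∃ V : Matrix.unitaryGroup (Fin (n + k)) ℂ, V.val * I0 n k = M := by
  classical
  let f : Fin (n + k) → EuclideanSpace ℂ (Fin (n + k)) := Fin.addCases (fun j => WithLp.toLp 2 (fun i => M i j)) (fun _ => 0)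
  have hf : Orthonormal ℂ ((Set.range (Fin.castAdd k : Fin n → Fin (n + k))).domRestrict f) := by
    rw [orthonormal_iff_ite]
    rintro ⟨_, i, rfl⟩ ⟨_, j, rfl⟩
    have h := congrFun (congrFun hM i) j
    simp only [Set.domRestrict_apply, f, Fin.addCases_left, PiLp.inner_apply, RCLike.inner_apply]
    simp only [Matrix.mul_apply, conjTranspose_apply, one_apply] at h
    refine (Eq.trans (Finset.sum_congr rfl fun _ _ => mul_comm _ _) h).trans ?_
    by_cases hij : i = j
    · subst hij; simp
    · rw [if_neg hij, if_neg]
      intro h2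
      exact hij (Fin.castAdd_injective n k (Subtype.mk.inj h2))
  obtain ⟨b, hb⟩ := hf.exists_orthonormalBasis_extension_of_card_eq (by simp)
  let O : Matrix (Fin (n + k)) (Fin (n + k)) ℂ := Matrix.of fun i j => b j i
  have hO : Oᴴ * O = 1 := by
    ext i j
    have h := orthonormal_iff_ite.mp b.orthonormal i j
    simp only [Matrix.mul_apply, conjTranspose_apply, O, Matrix.of_apply, Matrix.one_apply]
    rw [← h]
    simp only [PiLp.inner_apply, RCLike.inner_apply]
    exact Finset.sum_congr rfl fun _ _ => mul_comm _ _
  refine ⟨⟨O, mem_unitaryGroup_iff'.mpr hO⟩, ?_⟩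
  ext i j
  simp only [I0, Matrix.mul_apply, submatrix_apply, id, one_apply]
  simp only [mul_ite, mul_one, mul_zero, Finset.sum_ite_eq', Finset.mem_univ, if_true, O, of_apply]
  rw [hb _ ⟨j, rfl⟩]
  simp [f]

lemma star_iso {m : ℕ} (U : Matrix.unitaryGroup (Fin m) ℂ) : (star U.val)ᴴ * star U.val = 1 := by
  have := U.2
  rw [mem_unitaryGroup_iff] at this
  rwa [star_eq_conjTranspose, conjTranspose_conjTranspose, ← star_eq_conjTranspose]

lemma lm_meas2 {m b : ℕ} : Measurable fun p : Matrix.unitaryGroup (Fin m) ℂ × (Fin m → Fin b → ℂ) =>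
    lm b (star p.1.val) p.2 := by
  refine measurable_pi_iff.mpr fun i => measurable_pi_iff.mpr fun j => ?_
  simp only [lm, LinearMap.coe_mk, AddHom.coe_mk, star_apply]
  refine Finset.measurable_fun_sum _ fun l _ => Measurable.mul ?_ ?_
  · exact (continuous_star.measurable).comp ((um_val m l i).comp measurable_fst)
  · exact (measurable_pi_apply j).comp ((measurable_pi_apply l).comp measurable_snd)

lemma WW_lm {m b : ℕ} (U : Matrix.unitaryGroup (Fin m) ℂ) (M : Fin m → Fin b → ℂ) :
    WW (of (lm b (star U.val) M)) = WW (of M) := by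
  rw [lm_eq, WW, Wr_left 1 _ (star_iso U), WW]

lemma lhs_lim (n k : ℕ) (ℙ : Measure (Matrix.unitaryGroup (Fin (n + k)) ℂ)) [IsProbabilityMeasure ℙ]
    (hinv : ∀ V : Matrix.unitaryGroup (Fin (n + k)) ℂ, Measure.map (fun U => V * U) ℙ = ℙ)
    (φ : (Fin (n + k) → Fin n → ℂ) → ℝ) (hφ : Continuous φ) (C : ℝ) (hC : ∀ M, |φ M| ≤ C) :
    Tendsto (fun t : ℕ => (∫ M : Fin (n + k) → Fin n → ℂ, φ M * WW (of M) ^ t) /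
      ∫ M : Fin (n + k) → Fin n → ℂ, WW (of M) ^ t) atTop
      (𝓝 (∫ U, φ (of.symm (U.val * I0 n k)) ∂ℙ)) := by
  set Ψ : (Fin (n + k) → Fin n → ℂ) → ℝ := fun M => ∫ U, φ (lm n (star U.val) M) ∂ℙ with hΨ
  have hmeas : Measurable fun p : Matrix.unitaryGroup (Fin (n + k)) ℂ × (Fin (n + k) → Fin n → ℂ) =>
    φ (lm n (star p.1.val) p.2) := hφ.measurable.comp lm_meas2
  have hC0 : ∀ M, |Ψ M| ≤ C := by
    intro M
    have := norm_integral_le_of_norm_le_const (μ := ℙ) (f := fun U => φ (lm n (star U.val) M)) (C := C)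
      (ae_of_all _ fun U => hC _)
    simpa using this
  have hΨc : Continuous Ψ := by
    refine continuous_of_dominated (bound := fun _ => C) (fun M => ?_) (fun M => ae_of_all _ fun U => hC _)
      (integrable_const _) (ae_of_all _ fun U => ?_)
    · exact (hmeas.comp (measurable_id.prodMk measurable_const)).aestronglyMeasurable
    · exact hφ.comp (LinearMap.continuous_of_finiteDimensional _)
  have hpow : ∀ t : ℕ, 1 ≤ t → Integrable fun M : Fin (n + k) → Fin n → ℂ => WW (of M) ^ t := by
    intro t ht
    refine (WW_int (n + k) n).mono' ((WW_cont _ _).pow t).aestronglyMeasurable (ae_of_all _ fun M => ?_)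
    rw [Real.norm_of_nonneg (pow_nonneg (WW_nonneg _) t)]
    exact pow_le_of_le_one (WW_nonneg _) (WW_le_one _) (by omega)
  have hswap : ∀ t : ℕ, 1 ≤ t → ∫ M : Fin (n + k) → Fin n → ℂ, φ M * WW (of M) ^ t =
      ∫ M : Fin (n + k) → Fin n → ℂ, Ψ M * WW (of M) ^ t := by
    intro t ht
    have h1 : ∀ U : Matrix.unitaryGroup (Fin (n + k)) ℂ, ∫ M : Fin (n + k) → Fin n → ℂ, φ M * WW (of M) ^ t =
        ∫ M : Fin (n + k) → Fin n → ℂ, φ (lm n (star U.val) M) * WW (of M) ^ t := by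
      intro U
      have hp := lm_mp (b := n) (star U.val) (star_iso U)
      conv_lhs => rw [← hp.map_eq]
      rw [integral_map hp.aemeasurable]
      · simp only [WW_lm]
      · exact (hφ.mul ((WW_cont _ _).pow t)).aestronglyMeasurable
    have h2 : ∫ M : Fin (n + k) → Fin n → ℂ, φ M * WW (of M) ^ t =
        ∫ U, (∫ M : Fin (n + k) → Fin n → ℂ, φ (lm n (star U.val) M) * WW (of M) ^ t) ∂ℙ := by
      rw [← integral_congr_ae (ae_of_all _ h1)]; simp
    rw [h2, integral_integral_swap]
    · simp only [hΨ, integral_mul_const]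
    · have hI : Integrable (fun p : Matrix.unitaryGroup (Fin (n + k)) ℂ × (Fin (n + k) → Fin n → ℂ) =>
          C * WW (of p.2) ^ t) (ℙ.prod volume) := (integrable_const C).mul_prod (hpow t ht)
      refine hI.mono' ?_ (ae_of_all _ fun p => ?_)
      · exact (hmeas.mul (((WW_cont _ _).pow t).measurable.comp measurable_snd)).aestronglyMeasurable
      · simp only [Function.uncurry]
        rw [norm_mul, Real.norm_of_nonneg (pow_nonneg (WW_nonneg (of p.2)) t)]
        exact mul_le_mul_of_nonneg_right (hC _) (pow_nonneg (WW_nonneg (of p.2)) t)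
  have hF : Measurable fun U : Matrix.unitaryGroup (Fin (n + k)) ℂ => φ (of.symm (U.val * I0 n k)) := by
    refine hφ.measurable.comp ?_
    refine measurable_pi_iff.mpr fun i => measurable_pi_iff.mpr fun j => ?_
    simp only [of_symm_apply, Matrix.mul_apply]
    exact Finset.measurable_fun_sum _ fun l _ => (um_val _ i l).mul_const _
  have hconst : ∀ M : Fin (n + k) → Fin n → ℂ, (of M)ᴴ * of M = 1 → Ψ M = ∫ U, φ (of.symm (U.val * I0 n k)) ∂ℙ := by
    intro M hM
    obtain ⟨V, hV⟩ := extend_iso n k (of M) hM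
    rw [← u_inv ℙ hinv _ hF C (fun U => hC _), hΨ]
    have h0 := u_left ℙ hinv _ (hF.comp (um_inv _)) V⁻¹
    simp only [Function.comp_def] at h0
    rw [← h0]
    refine integral_congr_ae (ae_of_all _ fun U => ?_)
    simp only
    congr 1
    apply of.injective
    rw [lm_eq, ← hV, Equiv.apply_symm_apply, _root_.mul_inv_rev, inv_inv, UnitaryGroup.mul_val, UnitaryGroup.inv_val,
      Matrix.mul_assoc]
  have hlap := laplace volume (fun M : Fin (n + k) → Fin n → ℂ => WW (of M)) Ψ (∫ U, φ (of.symm (U.val * I0 n k)) ∂ℙ)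
    (fun _ => WW_nonneg _) (fun _ => WW_le_one _) (WW_cont _ _).measurable (WW_int _ _) hΨc.measurable
    (by
      refine ((WW_int (n+k) n).const_mul C).mono' (hΨc.mul (WW_cont _ _)).aestronglyMeasurable (ae_of_all _ fun M => ?_)
      rw [norm_mul, Real.norm_of_nonneg (WW_nonneg (of M))]
      exact mul_le_mul_of_nonneg_right (hC0 _) (WW_nonneg (of M)))
    (top_loc _ (WW_cont _ _) (fun _ => WW_le_one _) (WW_compact _ _) _ _
      fun M hM => ⟨hΨc.continuousAt, hconst M (WW_eq_one _ hM)⟩)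
    (fun δ hδ => WW_pos n k δ hδ)
  refine hlap.congr' ?_
  filter_upwards [eventually_ge_atTop 1] with t ht
  rw [hswap t ht]


lemma append_mp (n k : ℕ) (α : Type) [MeasureSpace α] [SigmaFinite (volume : Measure α)] :
    MeasurePreserving (fun p : (Fin n → α) × (Fin k → α) => (Fin.append p.1 p.2 : Fin (n + k) → α)) := by
  have h1 := (volume_measurePreserving_sumPiEquivProdPi (fun _ : Fin n ⊕ Fin k => α)).symm
  have h2 := volume_measurePreserving_piCongrLeft (fun _ : Fin (n + k) => α) finSumFinEquiv
  have h3 := h2.comp h1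
  suffices hfun : (fun p : (Fin n → α) × (Fin k → α) => (Fin.append p.1 p.2 : Fin (n + k) → α)) =
    (MeasurableEquiv.piCongrLeft (fun _ : Fin (n + k) => α) finSumFinEquiv) ∘
      (MeasurableEquiv.sumPiEquivProdPi (fun _ : Fin n ⊕ Fin k => α)).symm by
    rw [hfun]; exact h3
  funext p
  funext i
  refine Fin.addCases (fun i => ?_) (fun i => ?_) i
  · rw [Fin.append_left]
    have := MeasurableEquiv.piCongrLeft_apply_apply (β := fun _ : Fin (n + k) => α) finSumFinEquiv
      ((MeasurableEquiv.sumPiEquivProdPi (fun _ : Fin n ⊕ Fin k => α)).symm p) (Sum.inl i)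
    rw [finSumFinEquiv_apply_left] at this
    rw [Function.comp_apply, this]; rfl
  · rw [Fin.append_right]
    have := MeasurableEquiv.piCongrLeft_apply_apply (β := fun _ : Fin (n + k) => α) finSumFinEquiv
      ((MeasurableEquiv.sumPiEquivProdPi (fun _ : Fin n ⊕ Fin k => α)).symm p) (Sum.inr i)
    rw [finSumFinEquiv_apply_right] at this
    rw [Function.comp_apply, this]; rfl

/-- top block -/
def topb {n k : ℕ} (M : Fin (n + k) → Fin n → ℂ) : Matrix (Fin n) (Fin n) ℂ := of fun i => M (Fin.castAdd k i)

lemma cftop_cont (n k : ℕ) : Continuous fun M : Fin (n + k) → Fin n → ℂ => cf (n := n) (topb M).charpoly := by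
  apply CC.cf
  apply CC.charpoly
  intro i j
  simp only [topb, of_apply]
  fun_prop

lemma law_M (n k t : ℕ) (g : (Fin n → ℂ) → ℝ≥0∞) (hg : Measurable g) :
    ∫⁻ M : Fin (n + k) → Fin n → ℂ, g (cf (topb M).charpoly) * ENNReal.ofReal (Wr t (of M)) =
    ∫⁻ A : Fin n → Fin n → ℂ, ∫⁻ Cc : Fin k → Fin n → ℂ,
      g (cf (of A).charpoly) * ENNReal.ofReal (Wr t (fromRows (of Cc) (of A))) := by
  have hm : Measurable fun M : Fin (n + k) → Fin n → ℂ => g (cf (topb M).charpoly) * ENNReal.ofReal (Wr t (of M)) := by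
    refine (hg.comp (cftop_cont n k).measurable).mul ?_
    exact (Wr_cont t fun i j => by simp only [of_apply]; fun_prop).measurable.ennreal_ofReal
  have hmp := append_mp n k (Fin n → ℂ)
  rw [← hmp.lintegral_comp hm]
  have hm2 : Measurable fun a : (Fin n → Fin n → ℂ) × (Fin k → Fin n → ℂ) =>
      g (cf (topb (Fin.append a.1 a.2)).charpoly) * ENNReal.ofReal (Wr t (of (Fin.append a.1 a.2))) :=
    hm.comp hmp.measurable
  rw [lint_prod (α := Fin n → Fin n → ℂ) (β := Fin k → Fin n → ℂ) _ hm2]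
  refine lintegral_congr fun A => lintegral_congr fun Cc => ?_
  have h1 : topb (Fin.append A Cc) = of A := by
    ext i j; simp [topb]
  have h2 : Wr t (of (Fin.append A Cc)) = Wr t (fromRows (of Cc) (of A)) := by
    rw [← Wr_submatrix t (finSumFinEquiv.symm.trans (Equiv.sumComm _ _)) (Equiv.refl _) (fromRows (of Cc) (of A))]
    congr 1
    ext i j
    refine Fin.addCases (fun i => ?_) (fun i => ?_) i
    · simp
    · simp
  rw [h1, h2]


lemma polar1 (F : ℝ → ℝ≥0∞) (hF : Measurable F) :
    ∫⁻ z : ℂ, F (‖z‖ ^ 2) = ENNReal.ofReal Real.pi * ∫⁻ s in Set.Ioi (0 : ℝ), F s := by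
  rw [← Complex.lintegral_comp_polarCoord_symm]
  have himg : (fun r : ℝ => r ^ 2) '' Set.Ioi 0 = Set.Ioi 0 := by
    ext s
    constructor
    · rintro ⟨r, hr, rfl⟩; exact pow_pos (Set.mem_Ioi.mp hr) 2
    · intro hs; exact ⟨Real.sqrt s, Real.sqrt_pos.mpr hs, Real.sq_sqrt (le_of_lt hs)⟩
  have h1 : ∫⁻ s in Set.Ioi (0 : ℝ), F s = ∫⁻ r in Set.Ioi (0 : ℝ), ENNReal.ofReal |2 * r| * F (r ^ 2) := by
    conv_lhs => rw [← himg]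
    apply lintegral_image_eq_lintegral_abs_deriv_mul measurableSet_Ioi
    · intro x _
      have := (hasDerivAt_pow 2 x).hasDerivWithinAt (s := Set.Ioi 0)
      simpa using this
    · intro x hx y hy h
      exact (pow_left_inj₀ (le_of_lt hx) (le_of_lt hy) (by norm_num)).mp h
  have hm : Measurable fun r : ℝ => ENNReal.ofReal r * F (|r| ^ 2) := by
    exact ENNReal.measurable_ofReal.mul (hF.comp (by fun_prop))
  have h2 : ∫⁻ r in Set.Ioi (0 : ℝ), ENNReal.ofReal |2 * r| * F (r ^ 2) =
      2 * ∫⁻ r in Set.Ioi (0 : ℝ), ENNReal.ofReal r * F (|r| ^ 2) := by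
    rw [← lintegral_const_mul _ hm]
    refine setLIntegral_congr_fun measurableSet_Ioi fun r hr => ?_
    have hr' : 0 < r := hr
    simp only [abs_of_pos (mul_pos two_pos hr'), abs_of_pos hr', ENNReal.ofReal_mul zero_le_two]
    rw [mul_assoc]; simp
  rw [h1, h2]
  simp only [Complex.norm_polarCoord_symm, smul_eq_mul]
  rw [polarCoord_target, Measure.volume_eq_prod, ← Measure.prod_restrict]
  have hm3 : Measurable fun p : ℝ × ℝ => ENNReal.ofReal p.1 * F (|p.1| ^ 2) := hm.comp measurable_fst
  rw [lintegral_prod _ hm3.aemeasurable]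
  simp only [lintegral_const, Measure.restrict_apply MeasurableSet.univ, Set.univ_inter, Real.volume_Ioo]
  rw [lintegral_mul_const _ hm, mul_comm, ← mul_assoc]
  congr 1
  rw [← ENNReal.ofReal_ofNat 2, ← ENNReal.ofReal_mul Real.pi_pos.le]
  congr 1; ring

/-- the one dimensional kernel -/
def psi (k : ℕ) (a R : ℝ) : ℝ := if a < R then (R - a) ^ k else 0

lemma psi_nonneg (k : ℕ) (a R : ℝ) : 0 ≤ psi k a R := by
  unfold psi; split_ifs with h
  · exact pow_nonneg (by linarith) k
  · rfl

lemma psi_meas (k : ℕ) : Measurable fun p : ℝ × ℝ => psi k p.1 p.2 :=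
  Measurable.ite (measurableSet_lt measurable_fst measurable_snd) (by fun_prop) measurable_const

lemma psi_int (k : ℕ) (a R : ℝ) : ∫⁻ s in Set.Ioi (0 : ℝ), ENNReal.ofReal (psi k (a + s) R) =
    ENNReal.ofReal ((k + 1 : ℝ)⁻¹ * psi (k + 1) a R) := by
  classical
  by_cases h : a < R
  · have h1 : ∀ s ∈ Set.Ioi (0:ℝ), ENNReal.ofReal (psi k (a + s) R) =
        (Set.Iio (R - a)).indicator (fun s => ENNReal.ofReal ((R - a - s) ^ k)) s := by
      intro s hs
      simp only [Set.indicator_apply, Set.mem_Iio, psi]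
      by_cases h2 : a + s < R
      · rw [if_pos h2, if_pos (by linarith)]; congr 2; ring
      · rw [if_neg h2, if_neg (by linarith)]; simp
    rw [setLIntegral_congr_fun measurableSet_Ioi h1, lintegral_indicator measurableSet_Iio,
      Measure.restrict_restrict measurableSet_Iio, Set.inter_comm, Set.Ioi_inter_Iio, 
      restrict_Ioo_eq_restrict_Ioc, ← ofReal_integral_eq_lintegral_ofReal]
    · rw [← intervalIntegral.integral_of_le (by linarith)]
      congr 1
      rw [intervalIntegral.integral_comp_sub_left (fun x => x ^ k)]
      simp [psi, h, div_eq_inv_mul]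
    · exact (Continuous.integrableOn_Ioc (by fun_prop))
    · refine (ae_restrict_iff' measurableSet_Ioc).mpr (ae_of_all _ fun s hs => ?_)
      exact pow_nonneg (by linarith [hs.2]) k
  · have h1 : ∀ s ∈ Set.Ioi (0:ℝ), ENNReal.ofReal (psi k (a + s) R) = 0 := by
      intro s hs
      have : 0 < s := hs
      rw [psi, if_neg (by linarith)]; simp
    rw [setLIntegral_congr_fun measurableSet_Ioi h1]
    simp [psi, h]

lemma rad_int (F : ℝ → ℝ≥0∞) (hF : Measurable F) (k : ℕ) : ∃ κ : ℝ, 0 < κ ∧ ∀ a : ℝ,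
    ∫⁻ γ : Fin (k + 1) → ℂ, F (a + ∑ i, ‖γ i‖ ^ 2) =
      ENNReal.ofReal κ * ∫⁻ R, ENNReal.ofReal (psi k a R) * F R := by
  classical
  induction k with
  | zero =>
    refine ⟨Real.pi, Real.pi_pos, fun a => ?_⟩
    have hs := split0 (k := 0) (α := ℂ) (fun p => F (a + ‖p.1‖ ^ 2)) (hF.comp (by fun_prop))
    have h0 : ∀ γ : Fin (0 + 1) → ℂ, F (a + ∑ i, ‖γ i‖ ^ 2) = F (a + ‖γ 0‖ ^ 2) := by
      intro γ; rw [Fin.sum_univ_succ]; simp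
    rw [lintegral_congr h0, hs]
    rw [Measure.volume_pi_eq_dirac (ι := Fin 0) 0]
    simp only [lintegral_const, measure_univ, mul_one]
    rw [polar1 (fun s => F (a + s)) (hF.comp (by fun_prop))]
    congr 1
    rw [← lintegral_indicator measurableSet_Ioi]
    rw [← lintegral_add_left_eq_self (fun R => ENNReal.ofReal (psi 0 a R) * F R) a]
    refine lintegral_congr fun s => ?_
    simp only [Set.indicator_apply, Set.mem_Ioi, psi, lt_add_iff_pos_right, pow_zero]
    split_ifs <;> simp
  | succ k ih =>
    obtain ⟨κ, hκ, ih⟩ := ih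
    refine ⟨κ * (Real.pi * (k + 1 : ℝ)⁻¹), by positivity, fun a => ?_⟩
    have hs := split0 (k := k + 1) (α := ℂ) (fun p => F (a + ‖p.1‖ ^ 2 + ∑ i, ‖p.2 i‖ ^ 2)) (hF.comp (by fun_prop))
    have h0 : ∀ γ : Fin (k + 1 + 1) → ℂ, F (a + ∑ i, ‖γ i‖ ^ 2) = F (a + ‖γ 0‖ ^ 2 + ∑ i : Fin (k + 1), ‖γ i.succ‖ ^ 2) := by
      intro γ; rw [Fin.sum_univ_succ, ← add_assoc a]
    rw [lintegral_congr h0, hs]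
    simp only [ih]
    have hm1 : Measurable fun p : ℂ × ℝ => ENNReal.ofReal (psi k (a + ‖p.1‖ ^ 2) p.2) * F p.2 :=
      (((psi_meas k).comp (by fun_prop : Measurable fun p : ℂ × ℝ => (a + ‖p.1‖ ^ 2, p.2))).ennreal_ofReal).mul
        (hF.comp measurable_snd)
    rw [lintegral_const_mul _ (Measurable.lintegral_prod_right (f := fun (w : ℂ) (R : ℝ) => ENNReal.ofReal (psi k (a + ‖w‖ ^ 2) R) * F R) hm1)]
    rw [lintegral_lintegral_swap hm1.aemeasurable, ENNReal.ofReal_mul hκ.le, mul_assoc]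
    congr 1
    have hm2 : Measurable fun R : ℝ => ENNReal.ofReal (psi (k + 1) a R) * F R :=
      (((psi_meas (k+1)).comp (by fun_prop : Measurable fun R : ℝ => (a, R))).ennreal_ofReal).mul hF
    rw [← lintegral_const_mul _ hm2]
    refine lintegral_congr fun R => ?_
    have hm3 : Measurable fun s : ℝ => ENNReal.ofReal (psi k (a + s) R) :=
      ((psi_meas k).comp (by fun_prop : Measurable fun s : ℝ => (a + s, R))).ennreal_ofReal
    have hm4 : Measurable fun w : ℂ => ENNReal.ofReal (psi k (a + ‖w‖ ^ 2) R) :=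
      hm3.comp (by fun_prop : Measurable fun w : ℂ => ‖w‖ ^ 2)
    rw [lintegral_mul_const _ hm4, polar1 (fun s => ENNReal.ofReal (psi k (a + s) R)) hm3, psi_int,
      ← mul_assoc, ← ENNReal.ofReal_mul Real.pi_pos.le, ← ENNReal.ofReal_mul (by positivity)]
    congr 2; ring


/-- one dimensional weight -/
def w1 (R : ℝ) : ℝ := max R 0 * Real.exp (1 - R)

lemma w1_cont : Continuous w1 := by unfold w1; fun_prop

lemma w1_nonneg (R : ℝ) : 0 ≤ w1 R := mul_nonneg (le_max_right _ _) (Real.exp_pos _).le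

lemma w1_pos {R : ℝ} (h : 0 < R) : w1 R = R * Real.exp (1 - R) := by rw [w1, max_eq_left h.le]

lemma w1_neg {R : ℝ} (h : R ≤ 0) : w1 R = 0 := by rw [w1, max_eq_right h, zero_mul]

lemma w1_le_one (R : ℝ) : w1 R ≤ 1 := by
  rcases lt_or_ge 0 R with h | h
  · rw [w1_pos h]; exact xexp_le_one R
  · rw [w1_neg h]; norm_num

lemma w1_eq_one {R : ℝ} (h : w1 R = 1) : R = 1 := by
  rcases lt_or_ge 0 R with h' | h'
  · rw [w1_pos h'] at h; exact xexp_eq_one h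
  · rw [w1_neg h'] at h; norm_num at h

lemma w1_one : w1 1 = 1 := by simp [w1]

lemma w1_compact : IsCompact {R | 1 / 2 ≤ w1 R} := by
  refine (isCompact_Icc (a := (0:ℝ)) (b := 2 * Real.log 4)).of_isClosed_subset
    (isClosed_le continuous_const w1_cont) ?_
  intro R hR
  simp only [Set.mem_ofPred_eq] at hR
  have hR0 : 0 < R := by
    by_contra h
    rw [w1_neg (not_lt.mp h)] at hR; norm_num at hR
  refine ⟨hR0.le, ?_⟩
  rw [w1_pos hR0] at hR
  have h1 := hR.trans (xexp_le R)
  have h2 : Real.exp (-Real.log 4) ≤ Real.exp (-(R / 2)) := by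
    rw [Real.exp_neg, Real.exp_log (by norm_num)]; linarith
  have := Real.exp_le_exp.mp h2
  linarith

lemma w1_mom (N : ℕ) : Integrable fun R => (1 + |R|) ^ N * w1 R := by
  have h1 : IntegrableOn (fun R : ℝ => (4 ^ N * N.factorial * Real.exp (1 / 4) * 2) * Real.exp (-(1 / 4) * R)) (Set.Ioi 0) :=
    (integrableOn_exp_mul_Ioi (by norm_num) 0).const_mul _
  have h2 := (integrable_indicator_iff measurableSet_Ioi).mpr h1
  refine h2.mono' (Continuous.aestronglyMeasurable (by have := w1_cont; fun_prop)) (ae_of_all _ fun R => ?_)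
  classical
  rw [Real.norm_of_nonneg (mul_nonneg (by positivity) (w1_nonneg R)), Set.indicator_apply]
  split_ifs with h
  · have hR : 0 < R := h
    rw [w1_pos hR, abs_of_pos hR]
    have h3 := Real.pow_div_factorial_le_exp ((1 + R) / 4) (by positivity) N
    have h4 : (1 + R) ^ N ≤ 4 ^ N * N.factorial * Real.exp ((1 + R) / 4) := by
      rw [div_pow, div_div, div_le_iff₀ (by positivity)] at h3
      linarith
    have h5 := xexp_le R
    calc (1 + R) ^ N * (R * Real.exp (1 - R)) ≤ (4 ^ N * N.factorial * Real.exp ((1 + R) / 4)) * (2 * Real.exp (-(R / 2))) := by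
          gcongr
      _ = (4 ^ N * N.factorial * 2) * (Real.exp ((1 + R) / 4) * Real.exp (-(R / 2))) := by ring
      _ = (4 ^ N * N.factorial * 2) * (Real.exp (1 / 4) * Real.exp (-(1 / 4) * R)) := by
          rw [← Real.exp_add, ← Real.exp_add]; congr 2; ring
      _ = _ := by ring
  · rw [w1_neg (not_lt.mp h), mul_zero]

lemma w1_int : Integrable w1 := by simpa using w1_mom 0

lemma w1_posm (δ : ℝ) (hδ : δ < 1) : volume {R | δ < w1 R} ≠ 0 := by
  apply ne_of_gt
  apply IsOpen.measure_pos
  · exact isOpen_lt continuous_const w1_cont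
  · exact ⟨1, by simpa [w1_one] using hδ⟩

/-- normalized one dimensional average -/
def Ev (t : ℕ) (Ψ : ℝ → ℝ) : ℝ := (∫ R, Ψ R * w1 R ^ t) / ∫ R, w1 R ^ t

lemma Ev_lim (Ψ : ℝ → ℝ) (hm : Measurable Ψ) (N : ℕ) (hb : ∀ R, |Ψ R| ≤ (1 + |R|) ^ N) (hc : ContinuousAt Ψ 1) :
    Tendsto (fun t => Ev t Ψ) atTop (𝓝 (Ψ 1)) := by
  refine laplace volume w1 Ψ (Ψ 1) w1_nonneg w1_le_one w1_cont.measurable w1_int hm ?_ ?_ w1_posm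
  · refine (w1_mom N).mono' (hm.mul w1_cont.measurable).aestronglyMeasurable (ae_of_all _ fun R => ?_)
    rw [norm_mul, Real.norm_of_nonneg (w1_nonneg R)]
    exact mul_le_mul_of_nonneg_right (hb R) (w1_nonneg R)
  · refine top_loc w1 w1_cont w1_le_one w1_compact Ψ _ fun R hR => ?_
    rw [w1_eq_one hR]; exact ⟨hc, rfl⟩

lemma w1_mom_pow (N t : ℕ) (ht : 1 ≤ t) : Integrable fun R => (1 + |R|) ^ N * w1 R ^ t := by
  refine (w1_mom N).mono' (Continuous.aestronglyMeasurable (by have := w1_cont; fun_prop)) (ae_of_all _ fun R => ?_)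
  rw [Real.norm_of_nonneg (mul_nonneg (by positivity) (pow_nonneg (w1_nonneg R) t))]
  gcongr
  exact pow_le_of_le_one (w1_nonneg _) (w1_le_one _) (by omega)

lemma w1_pow_pos (t : ℕ) (ht : 1 ≤ t) : 0 < ∫ R, w1 R ^ t := by
  have hi : Integrable fun R => w1 R ^ t := by simpa using w1_mom_pow 0 t ht
  rw [integral_pos_iff_support_of_nonneg (fun R => pow_nonneg (w1_nonneg R) t) hi]
  refine lt_of_lt_of_le (pos_iff_ne_zero.mpr (w1_posm 0 one_pos)) (measure_mono fun R hR => ?_)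
  exact (pow_pos hR t).ne'

lemma psi_le (k : ℕ) {a : ℝ} (ha : 0 ≤ a) (R : ℝ) (N : ℕ) : (1 + a) ^ N * psi k a R ≤ (1 + |R|) ^ (N + k) := by
  unfold psi
  split_ifs with h
  · have hR : 0 < R := by linarith
    rw [abs_of_pos hR, pow_add]
    have : 0 ≤ R - a := by linarith
    gcongr
    linarith
  · rw [mul_zero]; positivity

lemma psi_cont (k : ℕ) {a : ℝ} (ha : a ≠ 1) : ContinuousAt (psi k a) 1 := by
  rcases lt_or_gt_of_ne ha with h | h
  · have : (fun R => (R - a) ^ k) =ᶠ[𝓝 1] psi k a := by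
      filter_upwards [lt_mem_nhds h] with R hR
      rw [psi, if_pos hR]
    exact (ContinuousAt.congr (by fun_prop) this)
  · have : (fun R => (0 : ℝ)) =ᶠ[𝓝 1] psi k a := by
      filter_upwards [gt_mem_nhds h] with R hR
      rw [psi, if_neg (by linarith)]
    exact (ContinuousAt.congr (by fun_prop) this)

lemma psi_meas1 (k : ℕ) (a : ℝ) : Measurable (psi k a) :=
  (psi_meas k).comp (by fun_prop : Measurable fun R : ℝ => (a, R))

lemma psi_abs (k : ℕ) {a : ℝ} (ha : 0 ≤ a) (R : ℝ) : |psi k a R| ≤ (1 + |R|) ^ k := by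
  rw [abs_of_nonneg (psi_nonneg _ _ _)]
  simpa using psi_le k ha R 0

/-- radial average -/
def Jr (k t : ℕ) (a : ℝ) : ℝ := Ev t (psi k a)

lemma Jr_nonneg (k t : ℕ) (a : ℝ) : 0 ≤ Jr k t a :=
  div_nonneg (integral_nonneg fun R => mul_nonneg (psi_nonneg _ _ _) (pow_nonneg (w1_nonneg R) t))
    (integral_nonneg fun R => (pow_nonneg (w1_nonneg R) t))

lemma Jr_lim (k : ℕ) {a : ℝ} (ha : 0 ≤ a) (ha1 : a ≠ 1) : Tendsto (fun t => Jr k t a) atTop (𝓝 (psi k a 1)) :=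
  Ev_lim _ (psi_meas1 k a) k (psi_abs k ha) (psi_cont k ha1)

lemma psi_w1_int (k t : ℕ) (ht : 1 ≤ t) {a : ℝ} (ha : 0 ≤ a) : Integrable fun R => psi k a R * w1 R ^ t := by
  refine (w1_mom_pow k t ht).mono' ((psi_meas1 k a).mul (w1_cont.measurable.pow_const t)).aestronglyMeasurable
    (ae_of_all _ fun R => ?_)
  rw [norm_mul, Real.norm_of_nonneg (pow_nonneg (w1_nonneg R) t)]
  exact mul_le_mul_of_nonneg_right (psi_abs k ha R) (pow_nonneg (w1_nonneg R) t)

lemma Jr_dom (k N : ℕ) : ∃ B : ℝ, 0 ≤ B ∧ ∀ᶠ t in atTop, ∀ a, 0 ≤ a → (1 + a) ^ N * Jr k t a ≤ B := by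
  have h := Ev_lim (fun R => (1 + |R|) ^ (N + k)) (by fun_prop) (N + k)
    (fun R => (abs_of_nonneg (by positivity)).le) (by fun_prop)
  refine ⟨(1 + |1|) ^ (N + k) + 1, by positivity, ?_⟩
  filter_upwards [h.eventually_lt_const (lt_add_one _), eventually_ge_atTop 1] with t ht ht1 a ha
  refine le_trans ?_ ht.le
  rw [Jr, Ev, Ev, ← mul_div_assoc, ← integral_const_mul]
  refine div_le_div_of_nonneg_right ?_ (w1_pow_pos t ht1).le
  refine integral_mono ((psi_w1_int k t ht1 ha).const_mul _) (w1_mom_pow _ t ht1) fun R => ?_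
  simp only
  rw [← mul_assoc]
  exact mul_le_mul_of_nonneg_right (psi_le k ha R N) (pow_nonneg (w1_nonneg R) t)

lemma om_J (k t : ℕ) (ht : 1 ≤ t) : ∃ l : ℝ, 0 ≤ l ∧ ∀ z : ℂ, om t (k + 1) z = ENNReal.ofReal (l * Jr k t (‖z‖ ^ 2)) := by
  obtain ⟨κ, hκ, h⟩ := rad_int (Rw t) (Rw_meas t) k
  have hI := w1_pow_pos t ht
  refine ⟨κ * Real.exp (-t) * ∫ R, w1 R ^ t, by positivity, fun z => ?_⟩
  have ha : 0 ≤ ‖z‖ ^ 2 := by positivity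
  rw [om, h]
  have h1 : ∀ R, ENNReal.ofReal (psi k (‖z‖ ^ 2) R) * Rw t R =
      ENNReal.ofReal (Real.exp (-t) * (psi k (‖z‖ ^ 2) R * w1 R ^ t)) := by
    intro R
    by_cases hR : ‖z‖ ^ 2 < R
    · have hR0 : 0 < R := by linarith
      rw [Rw, ← ENNReal.ofReal_mul (psi_nonneg _ _ _), w1_pos hR0, mul_pow, ← Real.exp_nat_mul]
      congr 1
      have : Real.exp (-(t * R)) = Real.exp (-t) * Real.exp (t * (1 - R)) := by
        rw [← Real.exp_add]; congr 1; ring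
      rw [this]; ring
    · rw [psi, if_neg hR]; simp
  rw [lintegral_congr h1, ← ofReal_integral_eq_lintegral_ofReal ((psi_w1_int k t ht ha).const_mul _)
    (ae_of_all _ fun R => mul_nonneg (Real.exp_pos _).le (mul_nonneg (psi_nonneg _ _ _) (pow_nonneg (w1_nonneg R) t))),
    ← ENNReal.ofReal_mul hκ.le, integral_const_mul, Jr, Ev]
  congr 1
  field_simp


lemma Jr_meas (k t : ℕ) : Measurable (Jr k t) := by
  have h : Measurable fun p : ℝ × ℝ => psi k p.1 p.2 * w1 p.2 ^ t :=
    (psi_meas k).mul ((w1_cont.measurable.comp measurable_snd).pow_const t)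
  have := (h.stronglyMeasurable.integral_prod_right' (ν := volume)).measurable
  exact this.div_const _

lemma vdr_le {n : ℕ} (ζ : Fin n → ℂ) : vdr ζ ≤ 2 ^ (n * n) * ∏ i, (1 + ‖ζ i‖ ^ 2) ^ (2 * n) := by
  have h1 : vdr ζ ≤ ∏ p : Fin n × Fin n, 2 * ((1 + ‖ζ p.1‖ ^ 2) * (1 + ‖ζ p.2‖ ^ 2)) := by
    unfold vdr
    rw [Finset.prod_filter]
    refine Finset.prod_le_prod (fun p _ => by split_ifs <;> positivity) (fun p _ => ?_)
    split_ifs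
    · have h2 : ‖ζ p.1 - ζ p.2‖ ≤ ‖ζ p.1‖ + ‖ζ p.2‖ := norm_sub_le _ _
      have h3 : ‖ζ p.1 - ζ p.2‖ ^ 2 ≤ (‖ζ p.1‖ + ‖ζ p.2‖) ^ 2 := by gcongr
      nlinarith [sq_nonneg (‖ζ p.1‖ - ‖ζ p.2‖), sq_nonneg (‖ζ p.1‖ * ‖ζ p.2‖)]
    · nlinarith [sq_nonneg ‖ζ p.1‖, sq_nonneg ‖ζ p.2‖, sq_nonneg (‖ζ p.1‖ * ‖ζ p.2‖)]
  refine h1.trans (le_of_eq ?_)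
  rw [Finset.prod_mul_distrib, Finset.prod_mul_distrib, Fintype.prod_prod_type, Fintype.prod_prod_type,
    Fintype.prod_prod_type]
  simp only [Finset.prod_const, Finset.card_univ, Fintype.card_fin, ← pow_mul]
  congr 1
  rw [Finset.prod_pow, Finset.prod_pow, ← pow_add]
  congr 1; ring

lemma int_base : Integrable fun z : ℂ => ((1 + ‖z‖ ^ 2) ^ 2)⁻¹ := by
  have := integrable_rpow_neg_one_add_norm_sq (E := ℂ) (μ := volume) (r := 4) (by simp; norm_num)
  refine this.congr (ae_of_all _ fun z => ?_)
  simp only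
  rw [show (-(4:ℝ) / 2) = -((2 : ℕ) : ℝ) by norm_num, Real.rpow_neg (by positivity), Real.rpow_natCast]

lemma ae_ne_one (n : ℕ) : ∀ᵐ ζ : Fin n → ℂ, ∀ i, ‖ζ i‖ ^ 2 ≠ 1 := by
  rw [ae_all_iff]
  intro i
  have h : ∀ᵐ z : ℂ, ‖z‖ ^ 2 ≠ 1 := by
    have := Measure.addHaar_sphere (volume : Measure ℂ) 0 1
    refine measure_mono_null (fun z hz => ?_) this
    have hz' : ¬ ‖z‖ ^ 2 ≠ 1 := hz
    rw [not_not] at hz'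
    simpa using (pow_eq_one_iff_of_nonneg (norm_nonneg z) two_ne_zero).mp hz'
  exact (Measure.quasiMeasurePreserving_eval (fun _ : Fin n => (volume : Measure ℂ)) i).ae h

/-- the dominating function -/
def domf (n : ℕ) (D : ℝ) (ζ : Fin n → ℂ) : ℝ := D * ∏ i, ((1 + ‖ζ i‖ ^ 2) ^ 2)⁻¹

lemma domf_int (n : ℕ) (D : ℝ) : Integrable (domf n D) :=
  (Integrable.fintype_prod (f := fun (_ : Fin n) (z : ℂ) => ((1 + ‖z‖ ^ 2) ^ 2)⁻¹) (fun _ => int_base)).const_mul D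

lemma dens_le {n k t : ℕ} {B : ℝ} 
    (hB : ∀ a, 0 ≤ a → (1 + a) ^ (2 * n + 2) * Jr k t a ≤ B) (ζ : Fin n → ℂ) :
    vdr ζ * ∏ i, Jr k t (‖ζ i‖ ^ 2) ≤ domf n (2 ^ (n * n) * B ^ n) ζ := by
  have h1 := vdr_le ζ
  have h2 : ∀ i, Jr k t (‖ζ i‖ ^ 2) ≤ B * (((1 + ‖ζ i‖ ^ 2) ^ 2)⁻¹ * ((1 + ‖ζ i‖ ^ 2) ^ (2 * n))⁻¹) := by
    intro i
    have := hB (‖ζ i‖ ^ 2) (by positivity)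
    rw [← mul_inv, ← pow_add, add_comm 2, ← div_eq_mul_inv, le_div_iff₀ (by positivity)]
    linarith
  calc _ ≤ (2 ^ (n * n) * ∏ i, (1 + ‖ζ i‖ ^ 2) ^ (2 * n)) *
        ∏ i, B * (((1 + ‖ζ i‖ ^ 2) ^ 2)⁻¹ * ((1 + ‖ζ i‖ ^ 2) ^ (2 * n))⁻¹) := by
        refine mul_le_mul h1 (Finset.prod_le_prod (fun i _ => Jr_nonneg _ _ _) fun i _ => h2 i)
          (Finset.prod_nonneg fun i _ => Jr_nonneg _ _ _) (by positivity)
    _ = _ := by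
      rw [Finset.prod_mul_distrib, Finset.prod_mul_distrib, domf, Finset.prod_inv_distrib (fun i => (1 + ‖ζ i‖ ^ 2) ^ (2 * n))]
      simp only [Finset.prod_const, Finset.card_univ, Fintype.card_fin]
      have : (∏ i, (1 + ‖ζ i‖ ^ 2) ^ (2 * n)) ≠ 0 := Finset.prod_ne_zero_iff.mpr fun i _ => by positivity
      field_simp

lemma dens_meas (n k t : ℕ) : Measurable fun ζ : Fin n → ℂ => vdr ζ * ∏ i, Jr k t (‖ζ i‖ ^ 2) := by
  refine (vdr_cont n).measurable.mul (Finset.measurable_fun_prod _ fun i _ => ?_)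
  exact (Jr_meas k t).comp (by fun_prop)

lemma dens_nonneg (n k t : ℕ) (ζ : Fin n → ℂ) : 0 ≤ vdr ζ * ∏ i, Jr k t (‖ζ i‖ ^ 2) :=
  mul_nonneg (vdr_nonneg ζ) (Finset.prod_nonneg fun i _ => Jr_nonneg _ _ _)

lemma dens_bound (n k : ℕ) : ∃ D : ℝ, ∀ᶠ t in atTop, ∀ ζ : Fin n → ℂ,
    vdr ζ * ∏ i, Jr k t (‖ζ i‖ ^ 2) ≤ domf n D ζ := by
  obtain ⟨B, -, h⟩ := Jr_dom k (2 * n + 2)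
  refine ⟨2 ^ (n * n) * B ^ n, ?_⟩
  filter_upwards [h] with t ht ζ
  exact dens_le ht ζ

lemma rhs_lim (n k : ℕ) (φ : (Fin n → ℂ) → ℝ) (hφ : Measurable φ) (C : ℝ) (hC : ∀ ζ, |φ ζ| ≤ C) :
    Tendsto (fun t => ∫ ζ : Fin n → ℂ, φ ζ * (vdr ζ * ∏ i, Jr k t (‖ζ i‖ ^ 2))) atTop
      (𝓝 (∫ ζ : Fin n → ℂ, φ ζ * (vdr ζ * ∏ i, psi k (‖ζ i‖ ^ 2) 1))) := by
  obtain ⟨D, hD⟩ := dens_bound n k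
  refine tendsto_integral_filter_of_dominated_convergence (fun ζ => C * domf n D ζ) ?_ ?_ ((domf_int n D).const_mul C) ?_
  · exact Eventually.of_forall fun t => (hφ.mul (dens_meas n k t)).aestronglyMeasurable
  · filter_upwards [hD] with t ht
    refine ae_of_all _ fun ζ => ?_
    rw [norm_mul, Real.norm_of_nonneg (dens_nonneg n k t ζ)]
    exact mul_le_mul (hC ζ) (ht ζ) (dens_nonneg n k t ζ) ((abs_nonneg _).trans (hC ζ))
  · filter_upwards [ae_ne_one n] with ζ hζ
    refine Tendsto.const_mul _ (Tendsto.const_mul _ (tendsto_finsetProd _ fun i _ => ?_))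
    exact Jr_lim k (by positivity) (hζ i)


/-- limiting functional -/
def Xi (n k : ℕ) (φ : (Fin n → ℂ) → ℝ) : ℝ := ∫ ζ : Fin n → ℂ, φ ζ * (vdr ζ * ∏ i, psi k (‖ζ i‖ ^ 2) 1)

lemma ratio_id (n k t : ℕ) (ht : 1 ≤ t) (D : ℝ) (hD : ∀ ζ : Fin n → ℂ,
    vdr ζ * ∏ i, Jr k t (‖ζ i‖ ^ 2) ≤ domf n D ζ) : ∃ d : ℝ, ∀ (g : (Fin n → ℂ) → ℝ), Continuous g →
    (∀ q, 0 ≤ g q) → (∃ C, ∀ q, g q ≤ C) →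
    ∫ M : Fin (n + (k + 1)) → Fin n → ℂ, g (cf (topb M).charpoly) * WW (of M) ^ t =
      d * ∫ ζ : Fin n → ℂ, g (cf (rp ζ)) * (vdr ζ * ∏ i, Jr k t (‖ζ i‖ ^ 2)) := by
  obtain ⟨c, hc⟩ := PP (k + 1) t n
  obtain ⟨l, hl, hom⟩ := om_J k t ht
  refine ⟨Real.exp (n * t) * (c.toReal * l ^ n), fun g hg hg0 ⟨C, hgC⟩ => ?_⟩
  have h1 := hc (fun q => ENNReal.ofReal (g q)) hg.measurable.ennreal_ofReal
  rw [← law_M n (k + 1) t _ hg.measurable.ennreal_ofReal] at h1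
  have hcont : Continuous fun M : Fin (n + (k + 1)) → Fin n → ℂ => g (cf (topb M).charpoly) :=
    hg.comp (cftop_cont n (k + 1))
  have hC0 : 0 ≤ C := (hg0 0).trans (hgC 0)
  have hi1 : Integrable fun M : Fin (n + (k + 1)) → Fin n → ℂ => g (cf (topb M).charpoly) * WW (of M) ^ t := by
    refine ((WW_int (n + (k + 1)) n).const_mul C).mono' (hcont.mul ((WW_cont _ _).pow t)).aestronglyMeasurable
      (ae_of_all _ fun M => ?_)
    rw [norm_mul, Real.norm_of_nonneg (pow_nonneg (WW_nonneg _) t), Real.norm_of_nonneg (hg0 _)]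
    exact mul_le_mul (hgC _) (pow_le_of_le_one (WW_nonneg _) (WW_le_one _) (by omega))
      (pow_nonneg (WW_nonneg _) t) hC0
  have hexp : ∀ M : Fin (n + (k + 1)) → Fin n → ℂ, Wr t (of M) = Real.exp (-(n * t)) * WW (of M) ^ t := by
    intro M
    rw [WW_pow, Fintype.card_fin, ← mul_assoc, ← Real.exp_add]; simp
  have e1 : ∫⁻ M : Fin (n + (k + 1)) → Fin n → ℂ, ENNReal.ofReal (g (cf (topb M).charpoly)) * ENNReal.ofReal (Wr t (of M)) =
      ENNReal.ofReal (Real.exp (-(n * t)) * ∫ M : Fin (n + (k + 1)) → Fin n → ℂ, g (cf (topb M).charpoly) * WW (of M) ^ t) := by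
    rw [← integral_const_mul, ofReal_integral_eq_lintegral_ofReal (hi1.const_mul _)
      (ae_of_all _ fun M => mul_nonneg (Real.exp_pos _).le (mul_nonneg (hg0 _) (pow_nonneg (WW_nonneg _) t)))]
    refine lintegral_congr fun M => ?_
    rw [← ENNReal.ofReal_mul (hg0 _), hexp]
    congr 1; ring
  have hi2 : Integrable fun ζ : Fin n → ℂ => g (cf (rp ζ)) * (vdr ζ * ∏ i, Jr k t (‖ζ i‖ ^ 2)) := by
    refine ((domf_int n D).const_mul C).mono' 
      ((hg.comp (cfrp_cont n)).measurable.mul (dens_meas n k t)).aestronglyMeasurable (ae_of_all _ fun ζ => ?_)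
    rw [norm_mul, Real.norm_of_nonneg (dens_nonneg n k t ζ), Real.norm_of_nonneg (hg0 _)]
    exact mul_le_mul (hgC _) (hD ζ) (dens_nonneg n k t ζ) hC0
  have e2 : ∫⁻ ζ : Fin n → ℂ, ENNReal.ofReal (g (cf (rp ζ))) * ew t (k + 1) ζ =
      ENNReal.ofReal (l ^ n * ∫ ζ : Fin n → ℂ, g (cf (rp ζ)) * (vdr ζ * ∏ i, Jr k t (‖ζ i‖ ^ 2))) := by
    rw [← integral_const_mul, ofReal_integral_eq_lintegral_ofReal (hi2.const_mul _)
      (ae_of_all _ fun ζ => mul_nonneg (by positivity) (mul_nonneg (hg0 _) (dens_nonneg n k t ζ)))]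
    refine lintegral_congr fun ζ => ?_
    simp only [ew, hom]
    rw [← ENNReal.ofReal_prod_of_nonneg (fun i _ => mul_nonneg hl (Jr_nonneg _ _ _)),
      ← ENNReal.ofReal_mul (vdr_nonneg ζ), ← ENNReal.ofReal_mul (hg0 _), Finset.prod_mul_distrib]
    simp only [Finset.prod_const, Finset.card_univ, Fintype.card_fin]
    congr 1; ring
  rw [e1, e2] at h1
  have h2 := congrArg ENNReal.toReal h1
  rw [ENNReal.toReal_mul, ENNReal.toReal_ofReal, ENNReal.toReal_ofReal] at h2
  · have h3 : Real.exp (n * t) * Real.exp (-(n * t)) = 1 := by rw [← Real.exp_add]; simp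
    calc _ = Real.exp (n * t) * (Real.exp (-(n * t)) * ∫ M : Fin (n + (k + 1)) → Fin n → ℂ, g (cf (topb M).charpoly) * WW (of M) ^ t) := by
          rw [← mul_assoc, h3, one_mul]
      _ = _ := by rw [h2]; ring
  · exact mul_nonneg (by positivity) (integral_nonneg fun ζ => mul_nonneg (hg0 _) (dens_nonneg n k t ζ))
  · exact mul_nonneg (by positivity) (integral_nonneg fun M => (mul_nonneg (hg0 _) (pow_nonneg (WW_nonneg _) t)))

lemma WW_pow_pos (n k t : ℕ) (ht : 1 ≤ t) : 0 < ∫ M : Fin (n + k) → Fin n → ℂ, WW (of M) ^ t := by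
  have hi : Integrable fun M : Fin (n + k) → Fin n → ℂ => WW (of M) ^ t := by
    refine (WW_int (n + k) n).mono' ((WW_cont _ _).pow t).aestronglyMeasurable (ae_of_all _ fun M => ?_)
    rw [Real.norm_of_nonneg (pow_nonneg (WW_nonneg _) t)]
    exact pow_le_of_le_one (WW_nonneg _) (WW_le_one _) (by omega)
  rw [integral_pos_iff_support_of_nonneg (fun R => pow_nonneg (WW_nonneg _) t) hi]
  refine lt_of_lt_of_le (pos_iff_ne_zero.mpr (WW_pos n k 0 one_pos)) (measure_mono fun R hR => ?_)
  exact (pow_pos hR t).ne'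

lemma key (n k : ℕ) (ℙ : Measure (Matrix.unitaryGroup (Fin (n + (k + 1))) ℂ)) [IsProbabilityMeasure ℙ]
    (hinv : ∀ V : Matrix.unitaryGroup (Fin (n + (k + 1))) ℂ, Measure.map (fun U => V * U) ℙ = ℙ)
    (g : (Fin n → ℂ) → ℝ) (hg : Continuous g) (hg0 : ∀ q, 0 ≤ g q) (C : ℝ) (hC : ∀ q, g q ≤ C) :
    (∫ U, g (cf (topb (k := k + 1) (of.symm (U.val * I0 n (k + 1)))).charpoly) ∂ℙ) * Xi n k (fun _ => 1) =
      Xi n k (fun ζ => g (cf (rp ζ))) := by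
  have hA := lhs_lim n (k + 1) ℙ hinv (fun M => g (cf (topb M).charpoly)) (hg.comp (cftop_cont n (k + 1))) C
    (fun M => by rw [abs_of_nonneg (hg0 _)]; exact hC _)
  have hB := rhs_lim n k (fun ζ => g (cf (rp ζ))) (hg.comp (cfrp_cont n)).measurable C
    (fun M => by rw [abs_of_nonneg (hg0 _)]; exact hC _)
  have h1 := rhs_lim n k (fun ζ => 1) measurable_const 1 (fun M => by simp)
  refine tendsto_nhds_unique (hA.mul h1) (hB.congr' ?_)
  obtain ⟨D, hD⟩ := dens_bound n k
  filter_upwards [hD, eventually_ge_atTop 1] with t htD ht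
  obtain ⟨d, hd⟩ := ratio_id n k t ht D htD
  have e1 := hd g hg hg0 ⟨C, hC⟩
  have e2 := hd (fun _ => 1) continuous_const (fun _ => zero_le_one) ⟨1, fun _ => le_rfl⟩
  simp only [one_mul] at e2 ⊢
  have hp := WW_pow_pos n (k + 1) t ht
  rw [e1]
  rw [e2] at hp ⊢
  have hd0 : d ≠ 0 := fun h => by rw [h] at hp; simp at hp
  have hI : (∫ ζ : Fin n → ℂ, (vdr ζ * ∏ i, Jr k t (‖ζ i‖ ^ 2))) ≠ 0 := fun h => by rw [h] at hp; simp at hp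
  field_simp


/-- monomial times weight -/
def mzf (k a b : ℕ) (z : ℂ) : ℂ := z ^ a * (starRingEnd ℂ z) ^ b * (psi k (‖z‖ ^ 2) 1 : ℝ)

lemma mzf_meas (k a b : ℕ) : Measurable (mzf k a b) := by
  have h : Measurable fun z : ℂ => psi k (‖z‖ ^ 2) 1 :=
    (psi_meas k).comp (g := fun p : ℝ × ℝ => psi k p.1 p.2) (f := fun z : ℂ => (‖z‖ ^ 2, (1:ℝ))) (by fun_prop)
  have h2 : Measurable fun z : ℂ => z ^ a * (starRingEnd ℂ z) ^ b := by
    have : Continuous fun z : ℂ => z ^ a * (starRingEnd ℂ z) ^ b :=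
      (continuous_pow a).mul (Complex.continuous_conj.pow b)
    exact this.measurable
  exact h2.mul (Complex.measurable_ofReal.comp h)

lemma mzf_int (k a b : ℕ) : Integrable (mzf k a b) := by
  refine (int_base.const_mul (2 ^ (a + b + 2 + k) : ℝ)).mono' (mzf_meas k a b).aestronglyMeasurable
    (ae_of_all _ fun z => ?_)
  have h1 := psi_le k (a := ‖z‖ ^ 2) (by positivity) 1 (a + b + 2)
  have h0 := psi_nonneg k (‖z‖ ^ 2) 1
  rw [mzf, norm_mul, norm_mul, norm_pow, norm_pow, Complex.norm_conj, ← pow_add, Complex.norm_real,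
    Real.norm_of_nonneg h0, ← div_eq_mul_inv, le_div_iff₀ (by positivity)]
  have h2 : ‖z‖ ^ (a + b) ≤ (1 + ‖z‖ ^ 2) ^ (a + b) := by
    gcongr
    nlinarith [sq_nonneg (‖z‖ - 1), sq_nonneg ‖z‖]
  have h3 : (1 + |(1:ℝ)|) = 2 := by norm_num
  rw [h3] at h1
  calc ‖z‖ ^ (a + b) * psi k (‖z‖ ^ 2) 1 * (1 + ‖z‖ ^ 2) ^ 2
      ≤ (1 + ‖z‖ ^ 2) ^ (a + b) * psi k (‖z‖ ^ 2) 1 * (1 + ‖z‖ ^ 2) ^ 2 := by gcongr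
    _ = (1 + ‖z‖ ^ 2) ^ (a + b + 2) * psi k (‖z‖ ^ 2) 1 := by ring
    _ ≤ _ := h1

lemma mom_off (k : ℕ) {a b : ℕ} (hab : a ≠ b) : ∫ z, mzf k a b z = 0 := by
  have hd : (a : ℝ) - b ≠ 0 := sub_ne_zero.mpr (by exact_mod_cast hab)
  set θ : ℝ := Real.pi / (a - b) with hθ
  set u : Circle := Circle.exp θ with hu
  have hmp : MeasurePreserving (rotation u : ℂ ≃ₗᵢ[ℝ] ℂ) := (rotation u).measurePreserving
  have h1 := hmp.integral_comp (rotation u).toHomeomorph.measurableEmbedding (mzf k a b)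
  have hu1 : ‖(u : ℂ)‖ = 1 := Circle.norm_coe u
  have h2 : ∀ z, mzf k a b (rotation u z) = -1 * mzf k a b z := by
    intro z
    rw [rotation_apply, mzf, mzf, norm_mul, hu1, one_mul, map_mul, mul_pow, mul_pow]
    have h3 : (u : ℂ) ^ a * (starRingEnd ℂ (u : ℂ)) ^ b = -1 := by
      rw [hu, Circle.coe_exp, ← Complex.exp_conj, ← Complex.exp_nat_mul, ← Complex.exp_nat_mul, ← Complex.exp_add]
      rw [← Complex.exp_pi_mul_I]
      congr 1
      have : (Real.pi : ℂ) = θ * (a - b) := by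
        have : Real.pi = θ * (a - b) := by rw [hθ]; field_simp
        rw [this]; push_cast; ring
      rw [this, map_mul, Complex.conj_I, Complex.conj_ofReal]; ring
    calc _ = ((u : ℂ) ^ a * (starRingEnd ℂ (u : ℂ)) ^ b) * (z ^ a * (starRingEnd ℂ z) ^ b * (psi k (‖z‖ ^ 2) 1 : ℝ)) := by ring
      _ = _ := by rw [h3]
  simp only [h2] at h1
  rw [integral_const_mul] at h1
  have : (2 : ℂ) * ∫ z, mzf k a b z = 0 := by linear_combination -h1
  simpa using this

lemma beta_nat (a k : ℕ) : ∫ s in (0:ℝ)..1, s ^ a * (1 - s) ^ k = (a.factorial * k.factorial : ℝ) / (a + k + 1).factorial := by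
  have h := Complex.Gamma_mul_Gamma_eq_betaIntegral (s := (a : ℂ) + 1) (t := (k : ℂ) + 1)
    (by simp; positivity) (by simp; positivity)
  rw [Complex.Gamma_nat_eq_factorial, Complex.Gamma_nat_eq_factorial,
    show (a : ℂ) + 1 + (k + 1) = ((a + k + 1 : ℕ) : ℂ) + 1 by push_cast; ring, Complex.Gamma_nat_eq_factorial] at h
  have h2 : Complex.betaIntegral ((a : ℂ) + 1) ((k : ℂ) + 1) = ((∫ s in (0:ℝ)..1, s ^ a * (1 - s) ^ k : ℝ) : ℂ) := by
    rw [Complex.betaIntegral, ← intervalIntegral.integral_ofReal]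
    congr 1
    funext x
    simp [Complex.cpow_natCast]
  rw [h2] at h
  rw [eq_div_iff (by positivity), mul_comm]
  exact_mod_cast h.symm

lemma mom_diag (k a : ℕ) : ∫ z, mzf k a a z = ((Real.pi * ((a.factorial * k.factorial : ℝ) / (a + k + 1).factorial) : ℝ) : ℂ) := by
  have h1 : ∀ z, mzf k a a z = (((‖z‖ ^ 2) ^ a * psi k (‖z‖ ^ 2) 1 : ℝ) : ℂ) := by
    intro z
    rw [mzf, ← mul_pow, Complex.mul_conj, Complex.normSq_eq_norm_sq]; push_cast; ring
  have hm : Measurable fun s : ℝ => s ^ a * psi k s 1 :=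
    (measurable_id.pow_const a).mul ((psi_meas k).comp (g := fun p : ℝ × ℝ => psi k p.1 p.2) (f := fun s : ℝ => (s, (1:ℝ))) (by fun_prop))
  simp only [h1]
  rw [integral_complex_ofReal]
  congr 1
  rw [integral_eq_lintegral_of_nonneg_ae (ae_of_all _ fun z => mul_nonneg (by positivity) (psi_nonneg _ _ _))
    (hm.comp (g := fun s : ℝ => s ^ a * psi k s 1) (f := fun z : ℂ => ‖z‖ ^ 2) (by fun_prop)).aestronglyMeasurable]
  rw [polar1 (fun s => ENNReal.ofReal (s ^ a * psi k s 1)) hm.ennreal_ofReal, ENNReal.toReal_mul,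
    ENNReal.toReal_ofReal Real.pi_pos.le]
  congr 1
  rw [← beta_nat, ← integral_eq_lintegral_of_nonneg_ae ?_ hm.aestronglyMeasurable, intervalIntegral.integral_of_le zero_le_one,
    integral_Ioc_eq_integral_Ioo, ← integral_indicator measurableSet_Ioi, ← integral_indicator measurableSet_Ioo]
  · congr 1
    funext s
    classical
    simp only [Set.indicator_apply, Set.mem_Ioi, Set.mem_Ioo, psi]
    by_cases h0 : 0 < s <;> by_cases h1 : s < 1 <;> simp [h0, h1]
  · refine (ae_restrict_iff' measurableSet_Ioi).mpr (ae_of_all _ fun s hs => ?_)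
    exact mul_nonneg (pow_nonneg (le_of_lt hs) _) (psi_nonneg _ _ _)

lemma dens_expand (n k : ℕ) (ζ : Fin n → ℂ) : ((vdr ζ * ∏ i, psi k (‖ζ i‖ ^ 2) 1 : ℝ) : ℂ) =
    ∑ σ : Equiv.Perm (Fin n), ∑ τ : Equiv.Perm (Fin n), ((Equiv.Perm.sign σ : ℤ) : ℂ) * ((Equiv.Perm.sign τ : ℤ) : ℂ) *
      ∏ i, mzf k (σ i) (τ i) (ζ i) := by
  rw [vdr_det]
  have h1 : (vandermonde ζ).det = ∑ σ : Equiv.Perm (Fin n), ((Equiv.Perm.sign σ : ℤ) : ℂ) * ∏ i, ζ i ^ (σ i : ℕ) := by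
    rw [← det_transpose, det_apply']; simp [vandermonde_apply]
  push_cast
  rw [← Complex.mul_conj', h1, map_sum, Finset.sum_mul_sum, Finset.sum_mul]
  refine Finset.sum_congr rfl fun σ _ => ?_
  rw [Finset.sum_mul]
  refine Finset.sum_congr rfl fun τ _ => ?_
  simp only [mzf, Finset.prod_mul_distrib, map_mul, map_prod, map_pow, map_intCast]
  ring

lemma Xi_one (n k : ℕ) : Xi n k (fun _ => 1) = Cconst (n + (k + 1)) n := by
  have hprodInt : ∀ σ τ : Equiv.Perm (Fin n), Integrable fun ζ : Fin n → ℂ => ∏ i, mzf k (σ i) (τ i) (ζ i) := fun σ τ =>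
    Integrable.fintype_prod (f := fun (i : Fin n) (z : ℂ) => mzf k (σ i) (τ i) z) (fun i => mzf_int k _ _)
  have h1 : ((Xi n k (fun _ => 1) : ℝ) : ℂ) = ∑ σ : Equiv.Perm (Fin n), ∑ τ : Equiv.Perm (Fin n),
      ((Equiv.Perm.sign σ : ℤ) : ℂ) * ((Equiv.Perm.sign τ : ℤ) : ℂ) * ∏ i, ∫ z, mzf k (σ i) (τ i) z := by
    rw [Xi]
    simp only [one_mul]
    rw [← integral_complex_ofReal]
    have : ∀ ζ : Fin n → ℂ, ((vdr ζ * ∏ i, psi k (‖ζ i‖ ^ 2) 1 : ℝ) : ℂ) = _ := fun ζ => dens_expand n k ζ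
    rw [integral_congr_ae (ae_of_all _ this), integral_finsetSum _ fun σ _ => integrable_finsetSum _ fun τ _ => (hprodInt σ τ).const_mul _]
    refine Finset.sum_congr rfl fun σ _ => ?_
    rw [integral_finsetSum _ fun τ _ => (hprodInt σ τ).const_mul _]
    refine Finset.sum_congr rfl fun τ _ => ?_
    rw [integral_const_mul]
    congr 1
    exact integral_fintype_prod_volume_eq_prod (fun (i : Fin n) (z : ℂ) => mzf k (σ i) (τ i) z)
  have h2 : ∀ σ : Equiv.Perm (Fin n), ∑ τ : Equiv.Perm (Fin n),
      ((Equiv.Perm.sign σ : ℤ) : ℂ) * ((Equiv.Perm.sign τ : ℤ) : ℂ) * ∏ i, ∫ z, mzf k (σ i) (τ i) z =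
      ∏ i : Fin n, ((Real.pi * (((i : ℕ).factorial * k.factorial : ℝ) / ((i : ℕ) + k + 1).factorial) : ℝ) : ℂ) := by
    intro σ
    rw [Finset.sum_eq_single σ]
    · have : ((Equiv.Perm.sign σ : ℤ) : ℂ) * ((Equiv.Perm.sign σ : ℤ) : ℂ) = 1 := by
        rcases Int.units_eq_one_or (Equiv.Perm.sign σ) with h | h <;> simp [h]
      rw [this, one_mul]
      simp only [mom_diag]
      exact Equiv.prod_comp σ (fun i : Fin n => ((Real.pi * (((i : ℕ).factorial * k.factorial : ℝ) / ((i : ℕ) + k + 1).factorial) : ℝ) : ℂ))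
    · intro τ _ hτ
      have : ∃ i, σ i ≠ τ i := by
        by_contra! h
        exact hτ (Equiv.ext fun i => (h i).symm)
      obtain ⟨i, hi⟩ := this
      rw [Finset.prod_eq_zero (Finset.mem_univ i), mul_zero]
      exact mom_off k (fun h => hi (Fin.ext h))
    · simp
  simp only [h2, Finset.sum_const, Finset.card_univ, Fintype.card_perm, Fintype.card_fin, nsmul_eq_mul] at h1
  have h3 : Xi n k (fun _ => 1) = (n.factorial : ℝ) * ∏ i : Fin n, (Real.pi * (((i : ℕ).factorial * k.factorial : ℝ) / ((i : ℕ) + k + 1).factorial)) := by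
    exact_mod_cast h1
  rw [h3, Finset.prod_mul_distrib, Cconst, Finset.prod_range, Finset.prod_const, Finset.card_univ, Fintype.card_fin]
  rw [← mul_assoc, mul_comm (n.factorial : ℝ)]
  congr 1
  refine Finset.prod_congr rfl fun i _ => ?_
  rw [show n + (k + 1) - n + (i : ℕ) - 1 = k + i by omega, show n + (k + 1) - n + (i : ℕ) = k + i + 1 by omega]
  have h4 := Nat.add_choose_mul_factorial_mul_factorial k (i : ℕ)
  have h5 : (i : ℕ) + k + 1 = (k + i) + 1 := by ring
  have h6 : ((k + i).choose i : ℝ) * k.factorial * (i : ℕ).factorial = (k + i : ℕ).factorial := by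
    exact_mod_cast h4
  rw [h5, Nat.factorial_succ]
  have h7 : ((k + (i:ℕ)).choose i : ℝ) ≠ 0 := by exact_mod_cast (Nat.choose_pos (by omega)).ne'
  rw [Nat.cast_mul, ← h6]
  field_simp


lemma Cconst_pos (n k : ℕ) : 0 < Cconst (n + (k + 1)) n := by
  refine mul_pos (by positivity) (Finset.prod_pos fun j _ => ?_)
  have h1 : 0 < (n + (k + 1) - n + j - 1).choose j := Nat.choose_pos (by omega)
  have h2 : 0 < n + (k + 1) - n + j := by omega
  have h1' : (0:ℝ) < ((n + (k + 1) - n + j - 1).choose j : ℕ) := by exact_mod_cast h1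
  have h2' : (0:ℝ) < ((n + (k + 1) - n + j : ℕ) : ℝ) := by exact_mod_cast h2
  positivity

lemma rp_eigTuple {n : ℕ} (A : Matrix (Fin n) (Fin n) ℂ) : rp (eigTuple A) = A.charpoly := by
  have hs := IsAlgClosed.splits A.charpoly
  have hc : A.charpoly.roots.toList.length = n := by
    rw [Multiset.length_toList, splits_iff_card_roots.mp hs]; simp
  have hl : A.charpoly.roots.toList = List.ofFn (eigTuple A) := by
    apply List.ext_getElem
    · simp [hc]
    · intro i h1 h2
      rw [List.getElem_ofFn]; exact (List.getD_eq_getElem _ _ h1).symm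
  have h3 : A.charpoly.roots = Finset.univ.val.map (eigTuple A) := by
    rw [← Multiset.coe_toList A.charpoly.roots, hl, Fin.univ_val_map]
  have h4 := hs.eq_prod_roots_of_monic (charpoly_monic A)
  rw [h4, h3, rp, Multiset.map_map]; rfl

/-- the limiting density -/
def dns (n k : ℕ) (ζ : Fin n → ℂ) : ℝ := vdr ζ * ∏ i, psi k (‖ζ i‖ ^ 2) 1

lemma dns_nonneg (n k : ℕ) (ζ : Fin n → ℂ) : 0 ≤ dns n k ζ :=
  mul_nonneg (vdr_nonneg ζ) (Finset.prod_nonneg fun _ _ => psi_nonneg _ _ _)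

lemma dns_meas (n k : ℕ) : Measurable (dns n k) := by
  refine (vdr_cont n).measurable.mul (Finset.measurable_fun_prod _ fun i _ => ?_)
  exact (psi_meas k).comp (g := fun p : ℝ × ℝ => psi k p.1 p.2) (f := fun ζ : Fin n → ℂ => (‖ζ i‖ ^ 2, (1:ℝ))) (by fun_prop)

lemma dns_int (n k : ℕ) : Integrable (dns n k) := by
  by_contra h
  have h1 := Xi_one n k
  have h2 : Xi n k (fun _ => 1) = ∫ ζ, dns n k ζ := by simp [Xi, dns]
  rw [h2, integral_undef h] at h1
  exact (Cconst_pos n k).ne h1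

/-- coefficients of the characteristic polynomial of the truncation -/
def Phiu (n k : ℕ) (U : Matrix.unitaryGroup (Fin (n + (k + 1))) ℂ) : Fin n → ℂ :=
  cf (topb (k := k + 1) (of.symm (U.val * I0 n (k + 1)))).charpoly

lemma Phiu_meas (n k : ℕ) : Measurable (Phiu n k) := by
  refine (cftop_cont n (k + 1)).measurable.comp 
    (f := fun U : Matrix.unitaryGroup (Fin (n + (k + 1))) ℂ => of.symm (U.val * I0 n (k + 1))) ?_
  refine measurable_pi_iff.mpr fun i => measurable_pi_iff.mpr fun j => ?_
  simp only [of_symm_apply, Matrix.mul_apply]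
  exact Finset.measurable_fun_sum _ fun l _ => (um_val _ i l).mul_const _

lemma topb_trunc (n k : ℕ) (U : Matrix (Fin (n + (k + 1))) (Fin (n + (k + 1))) ℂ) :
    topb (k := k + 1) (of.symm (U * I0 n (k + 1))) = truncation (n + (k + 1)) n U := by
  ext i j
  have hi : (i : ℕ) < n + (k + 1) ∧ (j : ℕ) < n + (k + 1) := by omega
  simp only [topb, truncation, of_apply, of_symm_apply, dif_pos hi, I0, Matrix.mul_apply, submatrix_apply, id]
  simp [Matrix.one_apply]
  rfl

lemma law_eq (n k : ℕ) (ℙ : Measure (Matrix.unitaryGroup (Fin (n + (k + 1))) ℂ)) [IsProbabilityMeasure ℙ]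
    (hinv : ∀ V : Matrix.unitaryGroup (Fin (n + (k + 1))) ℂ, Measure.map (fun U => V * U) ℙ = ℙ) :
    ENNReal.ofReal (Cconst (n + (k + 1)) n) • ℙ.map (Phiu n k) =
      ((volume : Measure (Fin n → ℂ)).withDensity fun ζ => ENNReal.ofReal (dns n k ζ)).map (fun ζ => cf (rp ζ)) := by
  have hC := Cconst_pos n k
  have hΦ := Phiu_meas n k
  have hcr := (cfrp_cont n).measurable
  haveI : IsProbabilityMeasure (ℙ.map (Phiu n k)) := Measure.isProbabilityMeasure_map hΦ.aemeasurable
  haveI : IsFiniteMeasure (ENNReal.ofReal (Cconst (n + (k + 1)) n) • ℙ.map (Phiu n k)) :=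
    Measure.smul_finite _ ENNReal.ofReal_ne_top
  refine ext_of_forall_lintegral_eq_of_IsFiniteMeasure fun g => ?_
  have hgm : Measurable fun q => (g q : ℝ≥0∞) := g.continuous.measurable.coe_nnreal_ennreal
  have hgm2 : Measurable fun ζ : Fin n → ℂ => (g (cf (rp ζ)) : ℝ≥0∞) := hgm.comp hcr
  have hgc : Continuous fun q => (g q : ℝ) := NNReal.continuous_coe.comp g.continuous
  obtain ⟨B, hB⟩ : ∃ B : ℝ, ∀ q, (g q : ℝ) ≤ B := by
    refine ⟨(nndist 0 g : ℝ≥0), fun q => ?_⟩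
    exact_mod_cast BoundedContinuousFunction.apply_le_nndist_zero g q
  have hk := key n k ℙ hinv (fun q => (g q : ℝ)) hgc (fun q => (g q).2) B hB
  rw [Xi_one] at hk
  rw [lintegral_smul_measure, lintegral_map hgm hΦ, lintegral_map hgm hcr,
    lintegral_withDensity_eq_lintegral_mul _ (dns_meas n k).ennreal_ofReal hgm2]
  have hi1 : Integrable (fun U => (g (Phiu n k U) : ℝ)) ℙ := by
    refine (integrable_const B).mono' (hgc.measurable.comp hΦ).aestronglyMeasurable (ae_of_all _ fun U => ?_)
    rw [Real.norm_of_nonneg (NNReal.coe_nonneg _)]; exact hB _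
  have hi2 : Integrable (fun ζ : Fin n → ℂ => (g (cf (rp ζ)) : ℝ) * dns n k ζ) := by
    refine ((dns_int n k).const_mul B).mono' ((hgc.measurable.comp hcr).mul (dns_meas n k)).aestronglyMeasurable
      (ae_of_all _ fun ζ => ?_)
    rw [norm_mul, Real.norm_of_nonneg (NNReal.coe_nonneg _), Real.norm_of_nonneg (dns_nonneg n k ζ)]
    exact mul_le_mul_of_nonneg_right (hB _) (dns_nonneg n k ζ)
  have e1 : ∫⁻ U, (g (Phiu n k U) : ℝ≥0∞) ∂ℙ = ENNReal.ofReal (∫ U, (g (Phiu n k U) : ℝ) ∂ℙ) := by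
    rw [ofReal_integral_eq_lintegral_ofReal hi1 (ae_of_all _ fun U => (NNReal.coe_nonneg _))]
    simp
  have e2 : ∫⁻ ζ : Fin n → ℂ, ((fun ζ => ENNReal.ofReal (dns n k ζ)) * (fun ζ : Fin n → ℂ => (g (cf (rp ζ)) : ℝ≥0∞))) ζ =
      ENNReal.ofReal (∫ ζ : Fin n → ℂ, (g (cf (rp ζ)) : ℝ) * dns n k ζ) := by
    rw [ofReal_integral_eq_lintegral_ofReal hi2 (ae_of_all _ fun U => mul_nonneg (NNReal.coe_nonneg _) (dns_nonneg _ _ _))]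
    refine lintegral_congr fun ζ => ?_
    rw [ENNReal.ofReal_mul (NNReal.coe_nonneg _), mul_comm]
    simp
  rw [e1, e2, smul_eq_mul, ← ENNReal.ofReal_mul hC.le, mul_comm]
  exact congrArg ENNReal.ofReal hk

lemma prod_psi (n k : ℕ) (ζ : Fin n → ℂ) (h : ∀ i, ‖ζ i‖ ^ 2 ≠ 1) : (∏ i, psi k (‖ζ i‖ ^ 2) 1) =
    Set.indicator {ζ : Fin n → ℂ | ∀ i, ‖ζ i‖ ≤ 1} (fun ζ => ∏ i, (1 - ‖ζ i‖ ^ 2) ^ k) ζ := by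
  by_cases hm : ∀ i, ‖ζ i‖ ≤ 1
  · rw [Set.indicator_of_mem (by exact hm)]
    refine Finset.prod_congr rfl fun i _ => ?_
    rw [psi, if_pos]
    exact lt_of_le_of_ne (pow_le_one₀ (norm_nonneg _) (hm i)) (h i)
  · rw [Set.indicator_of_notMem (by exact hm)]
    push Not at hm
    obtain ⟨i, hi⟩ := hm
    refine Finset.prod_eq_zero (Finset.mem_univ i) ?_
    rw [psi, if_neg]
    have := one_le_pow₀ hi.le (n := 2)
    linarith

lemma main_aux (n k : ℕ) (ℙ : Measure (Matrix.unitaryGroup (Fin (n + (k + 1))) ℂ)) [IsProbabilityMeasure ℙ]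
    (hinv : ∀ V : Matrix.unitaryGroup (Fin (n + (k + 1))) ℂ, Measure.map (fun U => V * U) ℙ = ℙ)
    (f : (Fin n → ℂ) → ℝ) (hmeas : Measurable f)
    (hsym : ∀ (σ : Equiv.Perm (Fin n)) (ζ : Fin n → ℂ), f (ζ ∘ σ) = f ζ) :
    ∫ U, f (eigTuple (truncation (n + (k + 1)) n U.val)) ∂ℙ =
      (Cconst (n + (k + 1)) n)⁻¹ *
        ∫ ζ in {ζ : Fin n → ℂ | ∀ i, ‖ζ i‖ ≤ 1}, f ζ * vdr ζ * ∏ i, (1 - ‖ζ i‖ ^ 2) ^ k := by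
  classical
  have hC := Cconst_pos n k
  have hΦ := Phiu_meas n k
  have hcr := (cfrp_cont n).measurable
  set G : (Fin n → ℂ) → ℝ := fun q => f (Function.surjInv (cfrp_surj n) q) with hG
  have hGf : ∀ ζ, G (cf (rp ζ)) = f ζ := by
    intro ζ
    have h1 := Function.surjInv_eq (cfrp_surj n) (cf (rp ζ))
    have h2 := cf_inj (rp_monic _) (rp_monic _) (rp_natDegree _) (rp_natDegree _) h1
    obtain ⟨σ, hσ⟩ := cfrp_perm h2
    rw [hG]
    simp only
    rw [← hσ, hsym]
  have hGm : Measurable G := by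
    refine (hcr.measurable_comp_iff_of_surjective (cfrp_surj n)).1 ?_
    have : (G ∘ fun ζ : Fin n → ℂ => (cf (rp ζ) : Fin n → ℂ)) = f := funext hGf
    rw [this]; exact hmeas
  have h1 := congrArg (fun μ => ∫ q, G q ∂μ) (law_eq n k ℙ hinv)
  rw [integral_smul_measure, integral_map hΦ.aemeasurable hGm.aestronglyMeasurable,
    integral_map hcr.aemeasurable hGm.aestronglyMeasurable,
    integral_withDensity_eq_integral_toReal_smul (dns_meas n k).ennreal_ofReal (ae_of_all _ fun _ => ENNReal.ofReal_lt_top),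
    ENNReal.toReal_ofReal hC.le, smul_eq_mul] at h1
  have h2 : ∀ U : Matrix.unitaryGroup (Fin (n + (k + 1))) ℂ, G (Phiu n k U) = f (eigTuple (truncation (n + (k + 1)) n U.val)) := by
    intro U
    rw [Phiu, topb_trunc, ← rp_eigTuple, hGf]
  simp only [h2] at h1
  have hD : MeasurableSet {ζ : Fin n → ℂ | ∀ i, ‖ζ i‖ ≤ 1} := by
    have : IsClosed {ζ : Fin n → ℂ | ∀ i, ‖ζ i‖ ≤ 1} := by
      rw [Set.setOf_forall]
      exact isClosed_iInter fun i => isClosed_le (by fun_prop) continuous_const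
    exact this.measurableSet
  rw [eq_inv_mul_iff_mul_eq₀ hC.ne', h1, ← integral_indicator hD]
  refine integral_congr_ae ?_
  filter_upwards [ae_ne_one n] with ζ hζ
  rw [hGf, ENNReal.toReal_ofReal (dns_nonneg _ _ _), dns, prod_psi n k ζ hζ, smul_eq_mul]
  simp only [Set.indicator_apply]
  split_ifs
  · ring
  · ring


/-- **The joint eigenvalue density of a truncated Haar unitary matrix**
(Życzkowski–Sommers).  Here `ℙ` is the Haar probability measure on the `m × m` unitary
group (the unique left-invariant Borel probability measure), and for every bounded
measurable symmetric function `f` of the `n` eigenvalues of the `n × n` truncation,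
`E[f(ζ₁,…,ζₙ)] = C_{[m,n]}⁻¹ ∫_{𝔻ⁿ} f(ζ) ∏_{i<j} |ζ_i-ζ_j|² ∏_i (1-|ζ_i|²)^{m-n-1} dζ`. -/
theorem truncated_haar_unitary_joint_eigenvalue_density
    (m n : ℕ) (hn : 0 < n) (hmn : n < m)
    (ℙ : Measure (Matrix.unitaryGroup (Fin m) ℂ))
    (hprob : IsProbabilityMeasure ℙ)
    (hinv : ∀ V : Matrix.unitaryGroup (Fin m) ℂ,
      Measure.map (fun U => V * U) ℙ = ℙ)
    (f : (Fin n → ℂ) → ℝ) (hmeas : Measurable f)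
    (hbdd : ∃ C : ℝ, ∀ ζ, |f ζ| ≤ C)
    (hsym : ∀ (σ : Equiv.Perm (Fin n)) (ζ : Fin n → ℂ), f (ζ ∘ σ) = f ζ) :
    ∫ U, f (eigTuple (truncation m n U.val)) ∂ℙ =
      (Cconst m n)⁻¹ *
        ∫ ζ in {ζ : Fin n → ℂ | ∀ i, ‖ζ i‖ ≤ 1},
          f ζ * (∏ p ∈ Finset.univ.filter (fun p : Fin n × Fin n => p.1 < p.2),
              ‖ζ p.1 - ζ p.2‖ ^ 2) *
            ∏ i, (1 - ‖ζ i‖ ^ 2) ^ (m - n - 1) := by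
  obtain ⟨k, rfl⟩ : ∃ k, m = n + (k + 1) := ⟨m - n - 1, by omega⟩
  have h := main_aux n k ℙ hinv f hmeas hsym
  rw [h, show n + (k + 1) - n - 1 = k by omega]
  rfl
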